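/- arXiv:1410.7910 — 2 statements merged into one kernel-verified Lean document; each statement's English description precedes it below -/
import Mathlib

section
/- Let I*_N denote the number of isomorphism classes of simple cubic graphs on N vertices, i.e., the number of isomorphism classes of simple graphs on the vertex set Fin N in which every vertex has degree exactly 3. Then I*_N ∼ (1/(e²·√(πN)))·(3N/(4e))^{N/2} as N → ∞ along even N; that is, I*_N·e²·√(πN)·(4e/(3N))^{N/2} → 1 as N → ∞ through even values of N. -/
open Filter Real Topology

/-- A simple cubic graph on `Fin N`: every vertex has exactly 3 neighbours. -/
def IsCubicSimple {N : ℕ} (G : SimpleGraph (Fin N)) : Prop :=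
  ∀ v, Nat.card (G.neighborSet v) = 3

/-- Isomorphism of simple cubic graphs on `Fin N`. -/
def SimpleCubicIsoRel (N : ℕ) (G G' : {G : SimpleGraph (Fin N) // IsCubicSimple G}) : Prop :=
  Nonempty (G.val ≃g G'.val)

/-- `Istar N`: the number of isomorphism classes of simple cubic graphs on `N` vertices. -/
noncomputable def Istar (N : ℕ) : ℕ := Nat.card (Quot (SimpleCubicIsoRel N))

/-!
The number of cubic graphs on `V`, with `#V = 2n`, is the coefficient of `∏ xᵥ³` in
`∏ (1 + xᵤxᵥ)` over the pairs `u ≠ v`. The logarithm of this product is a combination of power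
sums, and modulo the ideal generated by the `xᵥ⁴` only `p₁²/2 - p₂/2 - p₂²/4 + p₃²/6` survives.
Expanding the exponential in `p₂`, `p₂²` and `p₃²` turns the coefficient into a finite triple sum,
which is dominated after division by `(6n)! / ((3n)! 288ⁿ)` and tends termwise to the expansion of
`exp (-1) * exp (-1)`.

Multiplying the number of isomorphism classes by `(2n)!` gives, by Burnside's lemma, the sum over
all permutations `σ` of the number of cubic graphs invariant under `σ`. If `σ` moves `m` points,
then such a graph consists of an invariant set of edges touching these points and of a graph on
the rest; counting the former by an exponential weight per orbit of edges bounds the contribution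
of all such `σ` by `(C / n^{1/4})ᵐ` times the number of cubic graphs, so that only `σ = 1` matters
in the limit. Stirling's formula finishes the proof.
-/

section Pairs

open Finset

variable {V : Type*} [Fintype V] [DecidableEq V]

variable (V) in
/-- The possible edges of a simple graph on `V`: unordered pairs of distinct vertices. -/
def nonloops : Finset (Sym2 V) := {e | ¬ e.IsDiag}

@[simp] lemma mem_nonloops {e : Sym2 V} : e ∈ nonloops V ↔ ¬ e.IsDiag := by simp [nonloops]

lemma card_filter_mk_eq {e : Sym2 V} (he : e ∈ nonloops V) :
    #{p : V × V | s(p.1, p.2) = e} = 2 := by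
  induction e with | _ i j
  have hij : i ≠ j := by simpa using he
  have : ({p : V × V | s(p.1, p.2) = s(i, j)} : Finset (V × V)) = {(i, j), (j, i)} := by
    ext ⟨a, b⟩; simp
  rw [this, card_pair (by simp [hij])]

lemma sum_sum_mk {M : Type*} [AddCommMonoid M] (f : Sym2 V → M) :
    ∑ i, ∑ j, f s(i, j) = ∑ i, f s(i, i) + 2 • ∑ e ∈ nonloops V, f e := by
  rw [← Fintype.sum_prod_type', ← sum_filter_add_sum_filter_not univ fun p : V × V ↦ p.1 = p.2]
  congr 1
  · simp [← univ_product_univ, sum_filter, sum_product]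
  · rw [← sum_fiberwise_of_maps_to (t := nonloops V) (g := fun p ↦ s(p.1, p.2)) (by simp),
      smul_sum]
    refine sum_congr rfl fun e he ↦ ?_
    rw [← card_filter_mk_eq he, filter_filter, ← sum_const]
    refine sum_congr (filter_congr fun p _ ↦ ⟨And.right, fun h ↦ ⟨?_, h⟩⟩)
      fun p hp ↦ congrArg f (mem_filter.mp hp).2
    simpa [← h] using he

/-- The product of the values of `x` at the two ends of an edge. -/
def pairProd {V R : Type*} [CommMonoid R] (x : V → R) (e : Sym2 V) : R := (e.map x).mul

@[simp] lemma pairProd_mk {V R : Type*} [CommMonoid R] (x : V → R) (i j : V) :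
    pairProd x s(i, j) = x i * x j := rfl

lemma pairProd_pow {V R : Type*} [CommMonoid R] (x : V → R) (k : ℕ) (e : Sym2 V) :
    pairProd (fun i ↦ x i ^ k) e = pairProd x e ^ k := by
  induction e with | _ i j => simp [mul_pow]

lemma sq_sum_eq_add_two_mul_sum_pairProd {R : Type*} [CommSemiring R] (x : V → R) :
    (∑ i, x i) ^ 2 = ∑ i, x i ^ 2 + 2 * ∑ e ∈ nonloops V, pairProd x e := by
  simpa [sq, sum_mul_sum] using sum_sum_mk (pairProd x)

end Pairs

section NilpotentExp

open Finset

lemma exp_sum_of_isNilpotent {R ι : Type*} [CommRing R] [Module ℚ R] (s : Finset ι) (f : ι → R)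
    (h : ∀ i ∈ s, IsNilpotent (f i)) :
    IsNilpotent.exp (∑ i ∈ s, f i) = ∏ i ∈ s, IsNilpotent.exp (f i) := by
  classical
  induction s using Finset.induction_on with
  | empty => simp
  | insert a s ha ih =>
    rw [sum_insert ha, prod_insert ha, IsNilpotent.exp_add_of_commute (Commute.all _ _)
      (h a (mem_insert_self _ _)), ih (fun i hi => h i (mem_insert_of_mem hi))]
    exact isNilpotent_sum (fun i hi => h i (mem_insert_of_mem hi))

/-- The truncated logarithm `log (1 + y) = y - y² / 2 + y³ / 3` of an element with `y⁴ = 0`. -/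
def cubicLog {R : Type*} [CommRing R] [Algebra ℚ R] (y : R) : R :=
  y + (-1 / 2 : ℚ) • y ^ 2 + (1 / 3 : ℚ) • y ^ 3

lemma cubicLog_pow_four {R : Type*} [CommRing R] [Algebra ℚ R] {y : R} (hy : y ^ 4 = 0) :
    cubicLog y ^ 4 = 0 := by
  have : cubicLog y = y * (1 + (-1 / 2 : ℚ) • y + (1 / 3 : ℚ) • y ^ 2) := by
    rw [cubicLog]; algebra with ℚ
  rw [this, mul_pow, hy, zero_mul]

lemma exp_cubicLog {R : Type*} [CommRing R] [Algebra ℚ R] {y : R} (hy : y ^ 4 = 0) :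
    IsNilpotent.exp (cubicLog y) = 1 + y := by
  rw [IsNilpotent.exp_eq_sum (cubicLog_pow_four hy)]
  have expansion : ∑ k ∈ range 4, (k.factorial : ℚ)⁻¹ • cubicLog y ^ k =
      1 + y + y ^ 4 * ((5 / 24 : ℚ) • 1 + (1 / 8 : ℚ) • y - (19 / 144 : ℚ) • y ^ 2 +
        (7 / 72 : ℚ) • y ^ 3 - (1 / 36 : ℚ) • y ^ 4 + (1 / 162 : ℚ) • y ^ 5) := by
    simp only [sum_range_succ, sum_range_zero, Nat.factorial, cubicLog]
    algebra with ℚ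
  rw [expansion, hy, zero_mul, add_zero]

lemma sum_cubicLog_pairProd {V R : Type*} [Fintype V] [DecidableEq V] [CommRing R] [Algebra ℚ R]
    {x : V → R} (hx : ∀ i, x i ^ 4 = 0) :
    ∑ e ∈ nonloops V, cubicLog (pairProd x e) =
      (1 / 2 : ℚ) • (∑ i, x i) ^ 2 + (-1 / 2 : ℚ) • ∑ i, x i ^ 2 +
        (-1 / 4 : ℚ) • (∑ i, x i ^ 2) ^ 2 + (1 / 6 : ℚ) • (∑ i, x i ^ 3) ^ 2 := by
  have pairs₁ := sq_sum_eq_add_two_mul_sum_pairProd x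
  have pairs₂ := sq_sum_eq_add_two_mul_sum_pairProd fun i ↦ x i ^ 2
  have pairs₃ := sq_sum_eq_add_two_mul_sum_pairProd fun i ↦ x i ^ 3
  have fourth : ∑ i, (x i ^ 2) ^ 2 = 0 := sum_eq_zero fun i _ ↦ by rw [← pow_mul, hx]
  have sixth : ∑ i, (x i ^ 3) ^ 2 = 0 := sum_eq_zero fun i _ ↦ by
    rw [← pow_mul, pow_eq_zero_of_le (by norm_num) (hx i)]
  rw [fourth, zero_add] at pairs₂
  rw [sixth, zero_add] at pairs₃
  rw [pairs₁, pairs₂, pairs₃]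
  simp only [cubicLog, sum_add_distrib, pairProd_pow, ← smul_sum]
  algebra with ℚ

lemma prod_one_add_pairProd {V R : Type*} [Fintype V] [DecidableEq V] [CommRing R] [Algebra ℚ R]
    {x : V → R} (hx : ∀ i, x i ^ 4 = 0) :
    ∏ e ∈ nonloops V, (1 + pairProd x e) =
      IsNilpotent.exp ((1 / 2 : ℚ) • (∑ i, x i) ^ 2) *
      IsNilpotent.exp ((-1 / 2 : ℚ) • ∑ i, x i ^ 2) *
      IsNilpotent.exp ((-1 / 4 : ℚ) • (∑ i, x i ^ 2) ^ 2) *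
      IsNilpotent.exp ((1 / 6 : ℚ) • (∑ i, x i ^ 3) ^ 2) := by
  have nil (k : ℕ) (hk : 0 < k) : IsNilpotent (∑ i, x i ^ k) :=
    isNilpotent_sum fun i _ ↦ IsNilpotent.pow_of_pos ⟨4, hx i⟩ hk.ne'
  have nil₁ : IsNilpotent ((1 / 2 : ℚ) • (∑ i, x i) ^ 2) :=
    ((by simpa using nil 1 one_pos : IsNilpotent (∑ i, x i)).pow_of_pos two_ne_zero).smul _
  have nil₂ : IsNilpotent ((-1 / 2 : ℚ) • ∑ i, x i ^ 2) := (nil 2 two_pos).smul _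
  have nil₂₂ : IsNilpotent ((-1 / 4 : ℚ) • (∑ i, x i ^ 2) ^ 2) :=
    ((nil 2 two_pos).pow_of_pos two_ne_zero).smul _
  have nil₃₃ : IsNilpotent ((1 / 6 : ℚ) • (∑ i, x i ^ 3) ^ 2) :=
    ((nil 3 three_pos).pow_of_pos two_ne_zero).smul _
  have nil₁₂ := (Commute.all _ _).isNilpotent_add nil₁ nil₂
  have nil₁₂₂ := (Commute.all _ _).isNilpotent_add nil₁₂ nil₂₂
  rw [← IsNilpotent.exp_add_of_commute (Commute.all _ _) nil₁ nil₂,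
    ← IsNilpotent.exp_add_of_commute (Commute.all _ _) nil₁₂ nil₂₂,
    ← IsNilpotent.exp_add_of_commute (Commute.all _ _) nil₁₂₂ nil₃₃, ← sum_cubicLog_pairProd hx]
  have hpair (e : Sym2 V) : pairProd x e ^ 4 = 0 := by
    induction e with | _ i j => simp [mul_pow, hx]
  rw [exp_sum_of_isNilpotent _ _ fun e _ ↦ ⟨4, cubicLog_pow_four (hpair e)⟩]
  exact prod_congr rfl fun e _ ↦ (exp_cubicLog (hpair e)).symm

end NilpotentExp

section DegreeSequences

open Finset MvPolynomial

variable {V : Type*} [Fintype V] [DecidableEq V]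

/-- The degree sequence of the graph with edge set `E`. -/
noncomputable def edgeDegrees (E : Finset (Sym2 V)) : V →₀ ℕ :=
  Finsupp.equivFunOnFinite.symm fun v ↦ #{e ∈ E | v ∈ e}

lemma edgeDegrees_apply (E : Finset (Sym2 V)) (v : V) : edgeDegrees E v = #{e ∈ E | v ∈ e} := rfl

/-- The edge sets of the simple graphs with degree sequence `d`. -/
noncomputable def edgeSetsWithDegrees (d : V →₀ ℕ) : Finset (Finset (Sym2 V)) :=
  {E ∈ (nonloops V).powerset | edgeDegrees E = d}

lemma mem_edgeSetsWithDegrees {d : V →₀ ℕ} {E : Finset (Sym2 V)} :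
    E ∈ edgeSetsWithDegrees d ↔ E ⊆ nonloops V ∧ edgeDegrees E = d := by
  simp [edgeSetsWithDegrees]

lemma sum_edgeDegrees_singleton (E : Finset (Sym2 V)) :
    ∑ e ∈ E, edgeDegrees {e} = edgeDegrees E := by
  ext v
  simp [Finsupp.finsetSum_apply, edgeDegrees_apply, filter_singleton, apply_ite]

lemma edgeDegrees_singleton_mk {i j : V} (hij : i ≠ j) :
    edgeDegrees {s(i, j)} = Finsupp.single i 1 + Finsupp.single j 1 := by
  ext v
  simp only [edgeDegrees_apply, filter_singleton, Sym2.mem_iff, Finsupp.add_apply,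
    Finsupp.single_apply]
  grind

variable {R : Type*} [CommSemiring R]

lemma pairProd_X {e : Sym2 V} (he : e ∈ nonloops V) :
    pairProd (X : V → MvPolynomial V R) e = monomial (edgeDegrees {e}) 1 := by
  induction e with | _ i j =>
  rw [edgeDegrees_singleton_mk (by simpa using he), pairProd_mk, X, X, monomial_mul, one_mul]

lemma prod_pairProd_X {E : Finset (Sym2 V)} (hE : E ⊆ nonloops V) :
    ∏ e ∈ E, pairProd (X : V → MvPolynomial V R) e = monomial (edgeDegrees E) 1 := by
  rw [prod_congr rfl fun e he ↦ pairProd_X (hE he), ← monomial_sum_one, sum_edgeDegrees_singleton]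

lemma coeff_prod_one_add_pairProd_X (d : V →₀ ℕ) :
    coeff d (∏ e ∈ nonloops V, (1 + pairProd (X : V → MvPolynomial V R) e)) =
      (#(edgeSetsWithDegrees d) : R) := by
  rw [prod_one_add, coeff_sum, edgeSetsWithDegrees, card_filter, Nat.cast_sum]
  refine sum_congr rfl fun E hE ↦ ?_
  rw [prod_pairProd_X (mem_powerset.1 hE), coeff_monomial, Nat.cast_ite, Nat.cast_one,
    Nat.cast_zero]

end DegreeSequences

section PowerSumCoefficients

open Finset MvPolynomial

variable {V : Type*}

/-- Exponent vectors with all entries in `{0, 1, 3}`. Removing a square or a cube of a variable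
from such a monomial leaves a monomial of the same kind. -/
def HasEntriesZeroOneThree (d : V →₀ ℕ) : Prop := ∀ i, d i = 0 ∨ d i = 1 ∨ d i = 3

lemma hasEntriesZeroOneThree_tsub_single {d : V →₀ ℕ} (hd : HasEntriesZeroOneThree d) {i : V}
    (hi : d i = 3) {j : ℕ} (hj : j = 2 ∨ j = 3) :
    HasEntriesZeroOneThree (d - Finsupp.single i j) := by
  classical
  intro k
  have := hd k
  simp only [Finsupp.coe_tsub, Pi.sub_apply, Finsupp.single_apply]
  grind

lemma degree_tsub_single_add {d : V →₀ ℕ} {i : V} {j : ℕ} (hj : j ≤ d i) :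
    (d - Finsupp.single i j).degree + j = d.degree := by
  nth_rw 2 [← Finsupp.degree_single i j]
  rw [← map_add, tsub_add_cancel_of_le (by simpa using hj)]

variable [Fintype V]

/-- The number of entries of `d` that are equal to `3`. -/
def numThrees (d : V →₀ ℕ) : ℕ := #{i | d i = 3}

lemma coeff_psum_mul {R : Type*} [CommSemiring R] (j : ℕ) (d : V →₀ ℕ) (F : MvPolynomial V R) :
    coeff d (psum V R j * F) =
      ∑ i, if j ≤ d i then coeff (d - Finsupp.single i j) F else 0 := by
  simp [psum, sum_mul, coeff_sum, X_pow_eq_monomial, coeff_monomial_mul']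

lemma numThrees_tsub_single_add_one {d : V →₀ ℕ} {i : V} (hi : d i = 3) {j : ℕ} (hj : 0 < j) :
    numThrees (d - Finsupp.single i j) + 1 = numThrees d := by
  classical
  rw [numThrees, numThrees,
    ← card_erase_add_one (s := ({k | d k = 3} : Finset V)) (a := i) (by simp [hi])]
  congr 2
  ext k
  simp only [mem_erase, mem_filter, mem_univ, true_and, Finsupp.coe_tsub, Pi.sub_apply,
    Finsupp.single_apply]
  grind

lemma coeff_psum_mul_of_coeff_eq {j : ℕ} (hj : j = 2 ∨ j = 3) {F : MvPolynomial V ℚ} {D w : ℕ}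
    {c : ℚ} (hF : ∀ d, HasEntriesZeroOneThree d → coeff d F =
      if d.degree = D then (numThrees d).descFactorial w * c / 6 ^ numThrees d else 0)
    {d : V →₀ ℕ} (hd : HasEntriesZeroOneThree d) :
    coeff d (psum V ℚ j * F) = if d.degree = D + j then
      (numThrees d).descFactorial (w + 1) * (6 * c) / 6 ^ numThrees d else 0 := by
  have summand (i : V) (hi : d i = 3) : coeff (d - Finsupp.single i j) F =
      if d.degree = D + j then (numThrees d - 1).descFactorial w * (6 * c) / 6 ^ numThrees d
      else 0 := by
    have hji : j ≤ d i := by omega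
    rw [hF _ (hasEntriesZeroOneThree_tsub_single hd hi hj), ← degree_tsub_single_add hji,
      ← numThrees_tsub_single_add_one hi (by omega : 0 < j)]
    simp only [Nat.add_right_cancel_iff, Nat.add_sub_cancel]
    congr 1
    field_simp
    ring
  have large_iff (i : V) : j ≤ d i ↔ d i = 3 := by have := hd i; omega
  rw [coeff_psum_mul, ← sum_filter, filter_congr fun i _ ↦ large_iff i,
    sum_congr rfl fun i hi ↦ summand i (mem_filter.1 hi).2, sum_const, ← numThrees, nsmul_eq_mul]
  split_ifs
  · have : (numThrees d).descFactorial (w + 1) =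
        numThrees d * (numThrees d - 1).descFactorial w := by
      cases numThrees d
      · simp
      · rw [Nat.succ_descFactorial_succ, Nat.add_sub_cancel]
    rw [this]
    push_cast
    ring
  · simp

lemma prod_factorial_mul_coeff_psum_one_pow {R : Type*} [CommSemiring R] (d : V →₀ ℕ) (u : ℕ) :
    (∏ i, (d i).factorial : ℕ) * coeff d (psum V R 1 ^ u) =
      if d.degree = u then (u.factorial : R) else 0 := by
  have multinomial : (∏ i, (d i).factorial) * d.multinomial = d.degree.factorial := by
    rw [Finsupp.degree_eq_sum, ← Finsupp.multinomial_of_support_subset (subset_univ _),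
      Nat.multinomial_spec]
  have degree_eq : d.sum (fun _ m ↦ m) = d.degree := rfl
  simp only [psum, pow_one, coeff_sum_X_pow_of_fintype, degree_eq, ← Nat.cast_mul, mul_ite,
    multinomial, mul_zero, Nat.cast_ite, Nat.cast_zero]
  split_ifs with h <;> simp [h]

lemma coeff_psum_one_pow (u : ℕ) {d : V →₀ ℕ} (hd : HasEntriesZeroOneThree d) :
    coeff d (psum V ℚ 1 ^ u) =
      if d.degree = u then (u.factorial : ℚ) / 6 ^ numThrees d else 0 := by
  have factorials : ∏ i, (d i).factorial = 6 ^ numThrees d := by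
    rw [numThrees, ← prod_const, prod_filter]
    refine prod_congr rfl fun i _ ↦ ?_
    rcases hd i with h | h | h <;> simp [h, Nat.factorial]
  have key := prod_factorial_mul_coeff_psum_one_pow (R := ℚ) d u
  rw [factorials, Nat.cast_pow, Nat.cast_ofNat] at key
  rw [← mul_right_inj' (by positivity : (6 : ℚ) ^ numThrees d ≠ 0), key, mul_ite, mul_zero]
  congr 1
  field_simp

lemma coeff_psum_prod (s t u : ℕ) {d : V →₀ ℕ} (hd : HasEntriesZeroOneThree d) :
    coeff d (psum V ℚ 2 ^ s * (psum V ℚ 3 ^ t * psum V ℚ 1 ^ u)) =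
      if d.degree = u + 3 * t + 2 * s then
        (numThrees d).descFactorial (t + s) * (6 ^ (t + s) * u.factorial : ℚ) / 6 ^ numThrees d
      else 0 := by
  induction s generalizing d with
  | zero =>
    rw [pow_zero, one_mul]
    induction t generalizing d with
    | zero => simpa using coeff_psum_one_pow u hd
    | succ t ih =>
      rw [pow_succ', mul_assoc, coeff_psum_mul_of_coeff_eq (Or.inr rfl) (fun d ↦ ih) hd]
      grind
  | succ s ih =>
    rw [pow_succ', mul_assoc, coeff_psum_mul_of_coeff_eq (Or.inl rfl) (fun d ↦ ih) hd]
    grind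

end PowerSumCoefficients

section ExactFormula

open Finset MvPolynomial

open scoped Nat

/-- The number of perfect matchings of `2 * q` points. Truncated subtraction makes the empty
product at `q = 0` equal to `0‼ = 1`, as it should be. -/
def numPairings (q : ℕ) : ℕ := (2 * q - 1)‼

lemma numPairings_succ (q : ℕ) : numPairings (q + 1) = (2 * q + 1) * numPairings q := by
  cases q with
  | zero => rfl
  | succ q =>
    rw [numPairings, numPairings, show 2 * (q + 1 + 1) - 1 = 2 * q + 1 + 2 by omega,
      Nat.doubleFactorial_add_two]
    rfl

lemma numPairings_pos (q : ℕ) : 0 < numPairings q := Nat.doubleFactorial_pos _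

lemma factorial_two_mul_eq (q : ℕ) : (2 * q)! = 2 ^ q * q ! * numPairings q := by
  induction q with
  | zero => rfl
  | succ q ih =>
    rw [show 2 * (q + 1) = 2 * q + 1 + 1 by ring, Nat.factorial_succ, Nat.factorial_succ, ih,
      Nat.factorial_succ, numPairings_succ]
    ring

/-- The coefficient of `p₂ ^ a * (p₂ ^ 2) ^ b * (p₃ ^ 2) ^ c` in
`exp (-p₂ / 2) * exp (-p₂ ^ 2 / 4) * exp (p₃ ^ 2 / 6)`. -/
def expCoeff : ℕ × ℕ × ℕ → ℚ
  | (a, b, c) => (-1 / 2) ^ a / a ! * ((-1 / 4) ^ b / b !) * ((1 / 6) ^ c / c !)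

/-- The contribution of `p₂ ^ (a + 2 * b) * p₃ ^ (2 * c)` to the number of cubic edge sets on
`2 * n` vertices. The subtraction is truncated only where the descending factorial vanishes. -/
def exactTerm (n : ℕ) : ℕ × ℕ × ℕ → ℚ
  | (a, b, c) => expCoeff (a, b, c) * ((2 * n).descFactorial (a + 2 * b + 2 * c) *
      6 ^ (a + 2 * b + 2 * c) * numPairings (3 * n - (a + 2 * b + 3 * c)) / 6 ^ (2 * n))

lemma exactTerm_eq_zero {n a b c : ℕ} (h : 2 * n < a + 2 * b + 2 * c) :
    exactTerm n (a, b, c) = 0 := by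
  simp [exactTerm, Nat.descFactorial_eq_zero_iff_lt.2 h]

/-- The first `K` terms of the exponential series. -/
def expSum {A : Type*} [Ring A] [Module ℚ A] (K : ℕ) (y : A) : A :=
  ∑ k ∈ range K, (k ! : ℚ)⁻¹ • y ^ k

lemma map_expSum {A B : Type*} [Ring A] [Algebra ℚ A] [Ring B] [Algebra ℚ B] (f : A →ₐ[ℚ] B)
    (K : ℕ) (y : A) : f (expSum K y) = expSum K (f y) := by
  simp [expSum]

lemma eventually_exp_eq_expSum {A : Type*} [Ring A] [Module ℚ A] {y : A} (hy : IsNilpotent y) :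
    ∀ᶠ K in atTop, IsNilpotent.exp y = expSum K y := by
  obtain ⟨k, hk⟩ := hy
  filter_upwards [eventually_ge_atTop k] with K hK
  exact IsNilpotent.exp_eq_sum (pow_eq_zero_of_le hK hk)

variable {V : Type*}

lemma coeff_eq_zero_of_mem_span_X_pow {R : Type*} [CommSemiring R] {k : ℕ} {f : MvPolynomial V R}
    (hf : f ∈ Ideal.span (Set.range fun i : V ↦ (X i : MvPolynomial V R) ^ k)) {d : V →₀ ℕ}
    (hd : ∀ i, d i < k) : coeff d f = 0 := by
  have range_eq : (Set.range fun i : V ↦ (X i : MvPolynomial V R) ^ k) =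
      (fun m ↦ monomial m 1) '' Set.range fun i : V ↦ Finsupp.single i k := by
    rw [← Set.range_comp]
    simp [Function.comp_def, X_pow_eq_monomial]
  rw [range_eq, mem_ideal_span_monomial_image] at hf
  by_contra h
  obtain ⟨_, ⟨i, rfl⟩, hle⟩ := hf d (mem_support_iff.2 h)
  exact (hd i).not_ge (by simpa using hle i)

variable [Fintype V]

variable (V) in
/-- The truncation of `exp (p₁ ^ 2 / 2) * exp (-p₂ / 2) * exp (-p₂ ^ 2 / 4) * exp (p₃ ^ 2 / 6)`
in which every exponential is replaced by its first `K` terms. -/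
noncomputable def psumExpSum (K : ℕ) : MvPolynomial V ℚ :=
  expSum K ((1 / 2 : ℚ) • psum V ℚ 1 ^ 2) * expSum K ((-1 / 2 : ℚ) • psum V ℚ 2) *
    expSum K ((-1 / 4 : ℚ) • psum V ℚ 2 ^ 2) * expSum K ((1 / 6 : ℚ) • psum V ℚ 3 ^ 2)

lemma psumExpSum_eq_sum (K : ℕ) : psumExpSum V K =
    ∑ p ∈ range K ×ˢ range K ×ˢ range K, ∑ q ∈ range K, (expCoeff p * ((1 / 2) ^ q / q !)) •
      (psum V ℚ 2 ^ (p.1 + 2 * p.2.1) * (psum V ℚ 3 ^ (2 * p.2.2) * psum V ℚ 1 ^ (2 * q))) := by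
  have expand (f g h k : ℕ → MvPolynomial V ℚ) :
      (∑ i ∈ range K, f i) * (∑ i ∈ range K, g i) * (∑ i ∈ range K, h i) * (∑ i ∈ range K, k i) =
      ∑ p ∈ range K ×ˢ range K ×ˢ range K, ∑ q ∈ range K, g p.1 * h p.2.1 * k p.2.2 * f q := by
    simp only [sum_product, ← mul_sum, ← sum_mul]
    ring
  simp only [psumExpSum, expSum, expand]
  refine sum_congr rfl fun ⟨a, b, c⟩ _ ↦ sum_congr rfl fun q _ ↦ ?_
  simp only [expCoeff, smul_pow, smul_smul, smul_mul_smul_comm, ← pow_mul, pow_add, mul_comm 2 q]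
  congr 1 <;> ring

variable (V) in
/-- The constant degree sequence `k`. -/
noncomputable def regularDegrees (k : ℕ) : V →₀ ℕ := Finsupp.equivFunOnFinite.symm fun _ ↦ k

lemma degree_regularDegrees (k : ℕ) :
    (regularDegrees V k).degree = Fintype.card V * k := by
  simp [Finsupp.degree_eq_sum, regularDegrees]

lemma sum_expCoeff_mul_coeff {n : ℕ} (hV : Fintype.card V = 2 * n) {K : ℕ} (hK : 3 * n < K)
    (a b c : ℕ) :
    ∑ q ∈ range K, expCoeff (a, b, c) * ((1 / 2) ^ q / q !) * coeff (regularDegrees V 3)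
      (psum V ℚ 2 ^ (a + 2 * b) * (psum V ℚ 3 ^ (2 * c) * psum V ℚ 1 ^ (2 * q))) =
    exactTerm n (a, b, c) := by
  have entries : HasEntriesZeroOneThree (regularDegrees V 3) := fun _ ↦ by simp [regularDegrees]
  have threes : numThrees (regularDegrees V 3) = 2 * n := by
    simp [numThrees, regularDegrees, hV]
  simp only [coeff_psum_prod _ _ _ entries, threes, degree_regularDegrees, hV]
  by_cases h : a + 2 * b + 3 * c ≤ 3 * n
  · rw [sum_eq_single_of_mem (3 * n - (a + 2 * b + 3 * c)) (mem_range.2 (by omega))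
      fun q _ hq ↦ by rw [if_neg (by omega), mul_zero]]
    rw [if_pos (by omega), exactTerm, factorial_two_mul_eq,
      show 2 * c + (a + 2 * b) = a + 2 * b + 2 * c by ring]
    push_cast
    rw [one_div_pow]
    field_simp
  · rw [exactTerm_eq_zero (by omega)]
    exact sum_eq_zero fun q _ ↦ by rw [if_neg (by omega), mul_zero]

variable [DecidableEq V]

lemma eventually_prod_sub_psumExpSum_mem : ∀ᶠ K in atTop,
    ∏ e ∈ nonloops V, (1 + pairProd (X : V → MvPolynomial V ℚ) e) - psumExpSum V K ∈
      Ideal.span (Set.range fun i : V ↦ (X i : MvPolynomial V ℚ) ^ 4) := by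
  set I := Ideal.span (Set.range fun i : V ↦ (X i : MvPolynomial V ℚ) ^ 4)
  set x : V → MvPolynomial V ℚ ⧸ I := fun i ↦ Ideal.Quotient.mkₐ ℚ I (X i) with hx
  have x_pow (i : V) : x i ^ 4 = 0 := by
    rw [hx, ← map_pow, Ideal.Quotient.mkₐ_eq_mk, Ideal.Quotient.eq_zero_iff_mem]
    exact Ideal.subset_span ⟨i, rfl⟩
  have nil (k m : ℕ) (hk : 0 < k) (hm : 0 < m) (c : ℚ) : IsNilpotent (c • (∑ i, x i ^ k) ^ m) :=
    ((isNilpotent_sum fun i _ ↦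
      IsNilpotent.pow_of_pos ⟨4, x_pow i⟩ hk.ne').pow_of_pos hm.ne').smul c
  have pairProd_x (e : Sym2 V) : Ideal.Quotient.mkₐ ℚ I (pairProd X e) = pairProd x e := by
    induction e with | _ i j => simp [hx]
  filter_upwards [eventually_exp_eq_expSum (nil 1 2 one_pos two_pos (1 / 2)),
    eventually_exp_eq_expSum (nil 2 1 two_pos one_pos (-1 / 2)),
    eventually_exp_eq_expSum (nil 2 2 two_pos two_pos (-1 / 4)),
    eventually_exp_eq_expSum (nil 3 2 three_pos two_pos (1 / 6))] with K exp₁ exp₂ exp₂₂ exp₃₃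
  simp only [pow_one] at exp₁ exp₂
  rw [← Ideal.Quotient.eq, ← Ideal.Quotient.mkₐ_eq_mk ℚ, psumExpSum]
  simp only [map_prod, map_mul, map_expSum, map_add, map_one, map_smul, map_pow, psum, map_sum,
    pairProd_x, pow_one, ← hx]
  rw [prod_one_add_pairProd x_pow, exp₁, exp₂, exp₂₂, exp₃₃]

variable (V) in
/-- The edge sets of the simple cubic graphs on `V`. -/
noncomputable def cubicEdgeSets : Finset (Finset (Sym2 V)) :=
  edgeSetsWithDegrees (regularDegrees V 3)

theorem card_cubicEdgeSets {n : ℕ} (hV : Fintype.card V = 2 * n) :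
    (#(cubicEdgeSets V) : ℝ) = ∑' p, (exactTerm n p : ℝ) := by
  obtain ⟨K, hK, hmem⟩ := ((eventually_gt_atTop (3 * n)).and
    (eventually_prod_sub_psumExpSum_mem (V := V))).exists
  have coeff_sub := coeff_eq_zero_of_mem_span_X_pow hmem (d := regularDegrees V 3)
    fun _ ↦ by simp [regularDegrees]
  rw [MvPolynomial.coeff_sub, coeff_prod_one_add_pairProd_X, sub_eq_zero, psumExpSum_eq_sum]
    at coeff_sub
  simp only [coeff_sum, coeff_smul, smul_eq_mul, sum_expCoeff_mul_coeff hV hK] at coeff_sub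
  rw [tsum_eq_sum (s := range K ×ˢ range K ×ˢ range K)]
  · exact_mod_cast coeff_sub
  · rintro ⟨a, b, c⟩ hp
    rw [exactTerm_eq_zero, Rat.cast_zero]
    simp only [mem_product, mem_range] at hp
    omega

end ExactFormula

section LabelledCount

open Finset

open scoped Nat

lemma numPairings_mono : Monotone numPairings :=
  monotone_nat_of_le_succ fun q ↦ by
    rw [numPairings_succ]
    exact Nat.le_mul_of_pos_left _ (by omega)

/-- The ratio of the falling factorial `(2 * n) (2 * n - 1) ⋯` to the product
`(6 * n - 1) (6 * n - 3) ⋯`, each with `w` factors and the former scaled by `3 ^ w`. -/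
noncomputable def fallingRatio (n w : ℕ) : ℝ :=
  3 ^ w * (2 * n).descFactorial w * numPairings (3 * n - w) / numPairings (3 * n)

lemma fallingRatio_zero (n : ℕ) : fallingRatio n 0 = 1 := by
  have := numPairings_pos (3 * n)
  simp [fallingRatio, this.ne']

lemma fallingRatio_nonneg (n w : ℕ) : 0 ≤ fallingRatio n w := by
  unfold fallingRatio
  positivity

lemma fallingRatio_succ {n w : ℕ} (hn : 0 < n) (hw : w ≤ 2 * n) :
    fallingRatio n (w + 1) =
      fallingRatio n w * (3 * (2 * n - w) / (6 * n - 2 * w - 1)) := by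
  obtain ⟨k, hk⟩ : ∃ k, 3 * n = w + (k + 1) := ⟨3 * n - w - 1, by omega⟩
  have hkR : (6 * n - 2 * w - 1 : ℝ) = 2 * k + 1 := by
    have : (3 * n : ℝ) = w + (k + 1) := mod_cast hk
    linarith
  have := (numPairings_pos (w + (k + 1))).ne'
  rw [fallingRatio, fallingRatio, hkR, hk, show w + (k + 1) - (w + 1) = k by omega,
    Nat.add_sub_cancel_left, numPairings_succ, Nat.descFactorial_succ]
  push_cast [hw]
  field_simp
  ring

lemma fallingRatio_le {n : ℕ} (hn : 0 < n) (w : ℕ) : fallingRatio n w ≤ 3 / 2 := by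
  have hnR : (1 : ℝ) ≤ n := mod_cast hn
  rcases lt_or_ge (2 * n) w with hw | hw
  · rw [fallingRatio, Nat.descFactorial_eq_zero_iff_lt.2 hw]
    norm_num
  induction w with
  | zero => rw [fallingRatio_zero]; norm_num
  | succ w ih =>
    have hwR : (w + 1 : ℝ) ≤ 2 * n := mod_cast hw
    have denom_pos : (0 : ℝ) < 6 * n - 2 * w - 1 := by linarith
    rw [fallingRatio_succ hn (by omega)]
    rcases Nat.eq_zero_or_pos w with rfl | h
    · rw [fallingRatio_zero, one_mul, div_le_iff₀ denom_pos]
      push_cast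
      linarith
    · have : (1 : ℝ) ≤ w := mod_cast h
      refine (mul_le_of_le_one_right (fallingRatio_nonneg n w) ?_).trans (ih (by omega))
      rw [div_le_one denom_pos]
      linarith

lemma tendsto_fallingRatio (w : ℕ) : Tendsto (fun n ↦ fallingRatio n w) atTop (𝓝 1) := by
  induction w with
  | zero => simp [fallingRatio_zero]
  | succ w ih =>
    have factor : Tendsto (fun n : ℕ ↦ (3 * (2 * n - w) / (6 * n - 2 * w - 1) : ℝ)) atTop
        (𝓝 1) := by
      have scaled : Tendsto (fun n : ℕ ↦ ((6 - 3 * w * (1 / n)) / (6 - (2 * w + 1) * (1 / n)) : ℝ))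
          atTop (𝓝 ((6 - 3 * w * 0) / (6 - (2 * w + 1) * 0))) :=
        (tendsto_const_nhds.sub (tendsto_one_div_atTop_nhds_zero_nat.const_mul _)).div
          (tendsto_const_nhds.sub (tendsto_one_div_atTop_nhds_zero_nat.const_mul _)) (by norm_num)
      rw [show ((6 - 3 * w * 0) / (6 - (2 * w + 1) * 0) : ℝ) = 1 by norm_num] at scaled
      refine scaled.congr' ?_
      filter_upwards [eventually_gt_atTop 0] with n hn
      rw [← mul_div_mul_right _ _ (by positivity : (n : ℝ) ≠ 0)]
      congr 1 <;> field_simp <;> ring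
    have step := ih.mul factor
    rw [mul_one] at step
    refine step.congr' ?_
    filter_upwards [eventually_gt_atTop w] with n hn
    exact (fallingRatio_succ (by omega) (by omega)).symm

/-- What is lost by pairing `c` fewer pairs of half-edges than `3 * n - w`. -/
noncomputable def pairingRatio (n w c : ℕ) : ℝ :=
  numPairings (3 * n - (w + c)) / numPairings (3 * n - w)

lemma pairingRatio_nonneg (n w c : ℕ) : 0 ≤ pairingRatio n w c := by
  unfold pairingRatio
  positivity

lemma pairingRatio_le_one (n w c : ℕ) : pairingRatio n w c ≤ 1 :=
  div_le_one_of_le₀ (mod_cast numPairings_mono (by omega)) (by positivity)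

lemma tendsto_pairingRatio (w c : ℕ) :
    Tendsto (fun n ↦ pairingRatio n w c) atTop (𝓝 (if c = 0 then 1 else 0)) := by
  split_ifs with hc
  · refine tendsto_const_nhds.congr fun n ↦ ?_
    rw [pairingRatio, hc, add_zero, div_self (mod_cast (numPairings_pos _).ne')]
  · refine squeeze_zero' (.of_forall fun n ↦ pairingRatio_nonneg n w c) ?_
      tendsto_one_div_atTop_nhds_zero_nat
    filter_upwards [eventually_gt_atTop w] with n hn
    obtain ⟨k, hk⟩ : ∃ k, 3 * n - w = k + 1 := ⟨3 * n - w - 1, by omega⟩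
    have key : numPairings (3 * n - (w + c)) * n ≤ 1 * numPairings (3 * n - w) := by
      rw [hk, numPairings_succ, one_mul, mul_comm]
      exact Nat.mul_le_mul (by omega) (numPairings_mono (by omega))
    rw [pairingRatio, div_le_div_iff₀ (mod_cast numPairings_pos _) (by norm_cast; omega)]
    exact_mod_cast key

/-- The number of pairings of the `6 * n` half-edges at `2 * n` cubic vertices, divided by the
number of ways of ordering the half-edges at each vertex. -/
noncomputable def pairingEstimate (n : ℕ) : ℝ := numPairings (3 * n) / 6 ^ (2 * n)

lemma pairingEstimate_pos (n : ℕ) : 0 < pairingEstimate n :=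
  div_pos (mod_cast numPairings_pos _) (by positivity)

lemma exactTerm_div_pairingEstimate (n a b c : ℕ) :
    (exactTerm n (a, b, c) : ℝ) / pairingEstimate n =
      (-1) ^ a / a ! * ((-1) ^ b / b !) * ((2 / 3) ^ c / c !) *
        (fallingRatio n (a + 2 * b + 2 * c) * pairingRatio n (a + 2 * b + 2 * c) c) := by
  have pos₁ := (numPairings_pos (3 * n)).ne'
  have pos₂ := (numPairings_pos (3 * n - (a + 2 * b + 2 * c))).ne'
  have scale : (-1 / 2 : ℝ) ^ a * (-1 / 4) ^ b * (1 / 6) ^ c * 6 ^ (a + 2 * b + 2 * c) =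
      (-1) ^ a * (-1) ^ b * (2 / 3) ^ c * 3 ^ (a + 2 * b + 2 * c) := by
    simp only [pow_add, pow_mul]
    calc _ = (-1 / 2 * 6 : ℝ) ^ a * (-1 / 4 * 6 ^ 2) ^ b * (1 / 6 * 6 ^ 2) ^ c := by
          simp only [mul_pow]; ring
      _ = (-1 * 3 : ℝ) ^ a * (-1 * 3 ^ 2) ^ b * (2 / 3 * 3 ^ 2) ^ c := by norm_num
      _ = _ := by simp only [mul_pow]; ring
  rw [exactTerm, expCoeff, pairingEstimate, fallingRatio, pairingRatio,
    show a + 2 * b + 2 * c + c = a + 2 * b + 3 * c by ring]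
  push_cast
  field_simp
  linear_combination ((2 * n).descFactorial (a + 2 * b + 2 * c) *
    numPairings (3 * n - (a + 2 * b + 3 * c)) : ℝ) * scale

/-- The limit of `exactTerm n (a, b, c) / pairingEstimate n`. -/
noncomputable def limitTerm : ℕ × ℕ × ℕ → ℝ
  | (a, b, c) => (-1) ^ a / a ! * ((-1) ^ b / b ! * if c = 0 then 1 else 0)

/-- A summable bound for `exactTerm n (a, b, c) / pairingEstimate n`. -/
noncomputable def dominatingTerm : ℕ × ℕ × ℕ → ℝ
  | (a, b, c) => 3 / 2 * (1 / a ! * (1 / b ! * ((2 / 3) ^ c / c !)))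

lemma tendsto_exactTerm_div_pairingEstimate (p : ℕ × ℕ × ℕ) :
    Tendsto (fun n ↦ (exactTerm n p : ℝ) / pairingEstimate n) atTop (𝓝 (limitTerm p)) := by
  obtain ⟨a, b, c⟩ := p
  simp only [exactTerm_div_pairingEstimate]
  have limit_eq : limitTerm (a, b, c) =
      (-1) ^ a / a ! * ((-1) ^ b / b !) * ((2 / 3) ^ c / c !) * (1 * if c = 0 then 1 else 0) := by
    by_cases hc : c = 0 <;> simp [limitTerm, hc]
  rw [limit_eq]
  exact ((tendsto_fallingRatio _).mul (tendsto_pairingRatio _ c)).const_mul _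

lemma norm_exactTerm_div_pairingEstimate_le {n : ℕ} (hn : 0 < n) (p : ℕ × ℕ × ℕ) :
    ‖(exactTerm n p : ℝ) / pairingEstimate n‖ ≤ dominatingTerm p := by
  obtain ⟨a, b, c⟩ := p
  set w := a + 2 * b + 2 * c with hw
  have ratio_nonneg := mul_nonneg (fallingRatio_nonneg n w) (pairingRatio_nonneg n w c)
  have ratio_le : fallingRatio n w * pairingRatio n w c ≤ 3 / 2 :=
    (mul_le_of_le_one_right (fallingRatio_nonneg n w) (pairingRatio_le_one n w c)).trans
      (fallingRatio_le hn w)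
  rw [exactTerm_div_pairingEstimate, norm_mul, ← hw, Real.norm_of_nonneg ratio_nonneg]
  refine (mul_le_mul_of_nonneg_left ratio_le (norm_nonneg _)).trans_eq ?_
  simp only [dominatingTerm, norm_mul, norm_div, norm_pow, norm_neg, norm_one, one_pow,
    RCLike.norm_natCast, Real.norm_ofNat]
  ring

lemma summable_dominatingTerm : Summable dominatingTerm := by
  have exp_one : Summable fun k : ℕ ↦ (1 / k ! : ℝ) := by
    simpa using Real.summable_pow_div_factorial 1
  have exp_two_thirds := Real.summable_pow_div_factorial (2 / 3)
  exact (exp_one.mul_of_nonneg (exp_one.mul_of_nonneg exp_two_thirds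
    (fun _ ↦ by positivity) fun _ ↦ by positivity)
    (fun _ ↦ by positivity) fun _ ↦ by positivity).mul_left _

lemma tsum_limitTerm : ∑' p, limitTerm p = Real.exp (-2) := by
  have exp_neg_one : ∑' k : ℕ, ((-1) ^ k / k ! : ℝ) = Real.exp (-1) := by
    rw [Real.exp_eq_exp_ℝ, NormedSpace.exp_eq_tsum_div]
  have summable_exp : Summable fun k : ℕ ↦ ‖((-1) ^ k / k ! : ℝ)‖ :=
    (Real.summable_pow_div_factorial (-1)).norm
  have summable_ite : Summable fun c : ℕ ↦ ‖(if c = 0 then 1 else 0 : ℝ)‖ :=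
    (hasSum_ite_eq 0 (1 : ℝ)).summable.norm
  calc ∑' p, limitTerm p = (∑' a : ℕ, ((-1) ^ a / a ! : ℝ)) *
        ((∑' b : ℕ, ((-1) ^ b / b ! : ℝ)) * ∑' c : ℕ, (if c = 0 then 1 else 0 : ℝ)) := by
        rw [tsum_mul_tsum_of_summable_norm summable_exp summable_ite,
          tsum_mul_tsum_of_summable_norm summable_exp (summable_exp.mul_norm summable_ite)]
        rfl
    _ = Real.exp (-2) := by
        rw [exp_neg_one, tsum_ite_eq, mul_one, ← Real.exp_add]
        norm_num

theorem tendsto_card_cubicEdgeSets_div_pairingEstimate :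
    Tendsto (fun n ↦ (#(cubicEdgeSets (Fin (2 * n))) : ℝ) / pairingEstimate n) atTop
      (𝓝 (Real.exp (-2))) := by
  have terms := tendsto_tsum_of_dominated_convergence summable_dominatingTerm
    tendsto_exactTerm_div_pairingEstimate
    ((eventually_gt_atTop 0).mono fun _ ↦ norm_exactTerm_div_pairingEstimate_le)
  rw [tsum_limitTerm] at terms
  refine terms.congr fun n ↦ ?_
  rw [card_cubicEdgeSets (Fintype.card_fin _), tsum_div_const]

end LabelledCount

section ContainingBound

open Finset MvPolynomial

open scoped Nat

variable {V : Type*} [Fintype V] [DecidableEq V]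

lemma degree_edgeDegrees {E : Finset (Sym2 V)} (hE : E ⊆ nonloops V) :
    (edgeDegrees E).degree = 2 * #E := by
  rw [← sum_edgeDegrees_singleton, map_sum, mul_comm, ← smul_eq_mul]
  refine sum_eq_card_nsmul fun e he ↦ ?_
  induction e with | _ i j =>
  rw [edgeDegrees_singleton_mk (by simpa using hE he), map_add, Finsupp.degree_single,
    Finsupp.degree_single]

lemma edgeDegrees_sdiff {H E : Finset (Sym2 V)} (h : H ⊆ E) :
    edgeDegrees (E \ H) = edgeDegrees E - edgeDegrees H := by
  rw [← sum_edgeDegrees_singleton E, ← sum_sdiff h, sum_edgeDegrees_singleton,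
    sum_edgeDegrees_singleton, add_tsub_cancel_right]

lemma card_filter_subset_edgeSetsWithDegrees_le (d : V →₀ ℕ) (H : Finset (Sym2 V)) :
    #{E ∈ edgeSetsWithDegrees d | H ⊆ E} ≤ #(edgeSetsWithDegrees (d - edgeDegrees H)) := by
  refine card_le_card_of_injOn (· \ H) (fun E hE ↦ ?_) fun E hE E' hE' h ↦ ?_
  · simp only [coe_filter, mem_edgeSetsWithDegrees, Set.mem_ofPred_eq] at hE
    rw [mem_coe, mem_edgeSetsWithDegrees, edgeDegrees_sdiff hE.2, hE.1.2]
    exact ⟨sdiff_subset.trans hE.1.1, rfl⟩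
  · rw [← sdiff_union_of_subset (mem_filter.1 hE).2, ← sdiff_union_of_subset (mem_filter.1 hE').2]
    exact congrArg (· ∪ H) h

lemma coeff_pow_le_coeff_add_pow {σ : Type*} (f g : MvPolynomial σ ℕ) (d : σ →₀ ℕ) (q : ℕ) :
    coeff d (g ^ q) ≤ coeff d ((f + g) ^ q) := by
  rw [add_pow, sum_range_succ', coeff_add]
  simp

lemma factorial_mul_card_edgeSetsWithDegrees_le (q : ℕ) {d : V →₀ ℕ} (hd : d.degree = 2 * q) :
    q ! * #(edgeSetsWithDegrees d) ≤
      coeff d ((∑ e ∈ nonloops V, pairProd (X : V → MvPolynomial V ℕ) e) ^ q) := by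
  let indicator (E : Finset (Sym2 V)) (e : Sym2 V) : ℕ := if e ∈ E then 1 else 0
  have injective : Function.Injective indicator := fun E E' h ↦ by
    ext e
    have := congrFun h e
    grind
  rw [sum_pow_eq_sum_piAntidiag, coeff_sum, mul_comm, ← smul_eq_mul, ← sum_const,
    ← sum_map (edgeSetsWithDegrees d) ⟨indicator, injective⟩ fun _ ↦ q !]
  refine (sum_le_sum fun k hk ↦ ?_).trans (sum_le_sum_of_subset fun k hk ↦ ?_)
  all_goals
    obtain ⟨E, hE, rfl⟩ := mem_map.1 hk
    obtain ⟨subset, rfl⟩ := mem_edgeSetsWithDegrees.1 hE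
    rw [degree_edgeDegrees subset] at hd
    have card_eq : ∑ e ∈ nonloops V, indicator E e = q := by
      rw [sum_ite_mem, inter_eq_right.2 subset, sum_const, smul_eq_mul]
      omega
  · have prod_eq : ∏ e ∈ nonloops V, pairProd (X : V → MvPolynomial V ℕ) e ^ indicator E e =
        monomial (edgeDegrees E) 1 := by
      simp only [indicator, pow_ite, pow_one, pow_zero, prod_ite_mem, inter_eq_right.2 subset,
        prod_pairProd_X subset]
    have multinomial_eq : Nat.multinomial (nonloops V) (indicator E) = q ! := by
      rw [← card_eq, ← Nat.multinomial_spec, prod_eq_one, one_mul]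
      intro e _
      by_cases h : e ∈ E <;> simp [indicator, h]
    simp only [Function.Embedding.coeFn_mk]
    rw [prod_eq, multinomial_eq, ← C_eq_coe_nat, coeff_C_mul, coeff_monomial, if_pos rfl]
    simp
  · rw [mem_piAntidiag]
    refine ⟨card_eq, fun e he ↦ subset ?_⟩
    by_contra h
    exact he (if_neg h)

lemma card_edgeSetsWithDegrees_mul_prod_factorial_le (q : ℕ) {d : V →₀ ℕ}
    (hd : d.degree = 2 * q) :
    #(edgeSetsWithDegrees d) * ∏ v, (d v)! ≤ numPairings q := by
  set S : MvPolynomial V ℕ := ∑ e ∈ nonloops V, pairProd X e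
  have psum_sq : psum V ℕ 1 ^ 2 = psum V ℕ 2 + C 2 * S := by
    simpa [psum] using sq_sum_eq_add_two_mul_sum_pairProd (X : V → MvPolynomial V ℕ)
  have coeff_le : 2 ^ q * (q ! * #(edgeSetsWithDegrees d)) ≤ coeff d (psum V ℕ 1 ^ (2 * q)) := by
    rw [pow_mul, psum_sq]
    refine le_trans ?_ (coeff_pow_le_coeff_add_pow _ _ d q)
    rw [mul_pow, ← C_pow, coeff_C_mul]
    gcongr
    exact factorial_mul_card_edgeSetsWithDegrees_le q hd
  have key := prod_factorial_mul_coeff_psum_one_pow (R := ℕ) d (2 * q)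
  rw [if_pos hd, Nat.cast_id, Nat.cast_id, factorial_two_mul_eq] at key
  refine Nat.le_of_mul_le_mul_left (c := 2 ^ q * q !) ?_ (by positivity)
  calc 2 ^ q * q ! * (#(edgeSetsWithDegrees d) * ∏ v, (d v)!)
      = (∏ v, (d v)!) * (2 ^ q * (q ! * #(edgeSetsWithDegrees d))) := by ring
    _ ≤ 2 ^ q * q ! * numPairings q := by rw [← key]; gcongr

lemma add_one_pow_le_three_mul_pow {q k : ℕ} (hk : k ≤ q) :
    (q + 1 : ℝ) ^ k ≤ 3 * (q : ℝ) ^ k := by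
  rcases Nat.eq_zero_or_pos q with rfl | hq
  · simp [Nat.le_zero.1 hk]
  have ratio_le : (1 + 1 / q : ℝ) ^ k ≤ 3 := by
    calc (1 + 1 / q : ℝ) ^ k ≤ Real.exp (1 / q) ^ k := by
          gcongr
          linarith [Real.add_one_le_exp (1 / q : ℝ)]
      _ = Real.exp (k / q) := by rw [← Real.exp_nat_mul, mul_one_div]
      _ ≤ Real.exp 1 := by
          gcongr
          exact div_le_one_of_le₀ (mod_cast hk) (by positivity)
      _ ≤ 3 := Real.exp_one_lt_three.le
  calc (q + 1 : ℝ) ^ k = (1 + 1 / q) ^ k * q ^ k := by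
        rw [← mul_pow]
        congr 1
        field_simp
    _ ≤ 3 * q ^ k := by gcongr

lemma pow_mul_numPairings_sub_le {q k : ℕ} (hk : k ≤ q) :
    (q : ℝ) ^ k * numPairings (q - k) ≤ 3 ^ k * numPairings q := by
  induction q generalizing k with
  | zero => simp [Nat.le_zero.1 hk]
  | succ q ih =>
    rcases k with _ | k
    · simp
    rw [Nat.add_sub_add_right, numPairings_succ]
    push_cast
    calc (q + 1 : ℝ) ^ (k + 1) * numPairings (q - k)
        = (q + 1) * ((q + 1) ^ k * numPairings (q - k)) := by ring
      _ ≤ (q + 1) * (3 * q ^ k * numPairings (q - k)) := by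
          gcongr
          exact add_one_pow_le_three_mul_pow (by omega)
      _ = 3 * (q + 1) * (q ^ k * numPairings (q - k)) := by ring
      _ ≤ 3 * (2 * q + 1) * (3 ^ k * numPairings q) := by
          gcongr ?_ * ?_
          · linarith [(Nat.cast_nonneg q : (0 : ℝ) ≤ q)]
          · exact ih (by omega)
      _ = 3 ^ (k + 1) * ((2 * q + 1) * numPairings q) := by ring

lemma six_pow_card_le_prod_factorial {H : Finset (Sym2 V)} (hH : H ⊆ nonloops V) :
    6 ^ Fintype.card V ≤ 36 ^ #H * ∏ v, ((regularDegrees V 3 - edgeDegrees H) v)! := by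
  have pow_eq : 36 ^ #H = ∏ v, 6 ^ edgeDegrees H v := by
    rw [prod_pow_eq_pow_sum, ← Finsupp.degree_eq_sum, degree_edgeDegrees hH, pow_mul]
    norm_num
  rw [pow_eq, ← prod_mul_distrib, ← card_univ, ← prod_const]
  refine prod_le_prod' fun v _ ↦ ?_
  change 6 ≤ 6 ^ edgeDegrees H v * (3 - edgeDegrees H v)!
  rcases Nat.eq_zero_or_pos (edgeDegrees H v) with h | h
  · rw [h]
    decide
  · exact le_mul_of_le_of_one_le (Nat.le_self_pow h.ne' 6) (Nat.factorial_pos _)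

lemma card_of_mem_cubicEdgeSets {n : ℕ} (hV : Fintype.card V = 2 * n) {E : Finset (Sym2 V)}
    (hE : E ∈ cubicEdgeSets V) : #E = 3 * n := by
  obtain ⟨hE, hE3⟩ := mem_edgeSetsWithDegrees.1 hE
  have := degree_edgeDegrees hE
  rw [hE3, degree_regularDegrees, hV] at this
  omega

lemma card_filter_subset_cubicEdgeSets_mul_six_pow_le {n : ℕ} (hV : Fintype.card V = 2 * n)
    {E H : Finset (Sym2 V)} (hE : E ∈ cubicEdgeSets V) (hHE : H ⊆ E) :
    #{E ∈ cubicEdgeSets V | H ⊆ E} * 6 ^ (2 * n) ≤ 36 ^ #H * numPairings (3 * n - #H) := by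
  obtain ⟨hEloops, hE3⟩ := mem_edgeSetsWithDegrees.1 hE
  have degree_eq : (regularDegrees V 3 - edgeDegrees H).degree = 2 * (3 * n - #H) := by
    rw [← hE3, ← edgeDegrees_sdiff hHE, degree_edgeDegrees (sdiff_subset.trans hEloops),
      card_sdiff_of_subset hHE, card_of_mem_cubicEdgeSets hV hE]
  set F := ∏ v, ((regularDegrees V 3 - edgeDegrees H) v)!
  calc #{E ∈ cubicEdgeSets V | H ⊆ E} * 6 ^ (2 * n)
      ≤ #(edgeSetsWithDegrees (regularDegrees V 3 - edgeDegrees H)) * (36 ^ #H * F) := by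
        refine Nat.mul_le_mul (card_filter_subset_edgeSetsWithDegrees_le _ H) ?_
        rw [← hV]
        exact six_pow_card_le_prod_factorial (hHE.trans hEloops)
    _ = 36 ^ #H * (#(edgeSetsWithDegrees (regularDegrees V 3 - edgeDegrees H)) * F) := by ring
    _ ≤ 36 ^ #H * numPairings (3 * n - #H) := by
        gcongr
        exact card_edgeSetsWithDegrees_mul_prod_factorial_le _ degree_eq

lemma card_filter_subset_cubicEdgeSets_le {n : ℕ} (hV : Fintype.card V = 2 * n) (hn : 0 < n)
    (H : Finset (Sym2 V)) :
    (#{E ∈ cubicEdgeSets V | H ⊆ E} : ℝ) ≤ (36 / n) ^ #H * pairingEstimate n := by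
  rcases ({E ∈ cubicEdgeSets V | H ⊆ E} : Finset _).eq_empty_or_nonempty with h | ⟨E, hE⟩
  · have := pairingEstimate_pos n
    rw [h, card_empty, Nat.cast_zero]
    positivity
  obtain ⟨hE, hHE⟩ := mem_filter.1 hE
  have card_H_le : #H ≤ 3 * n := card_of_mem_cubicEdgeSets hV hE ▸ card_le_card hHE
  have card_mul_le := card_filter_subset_cubicEdgeSets_mul_six_pow_le hV hE hHE
  have ratio_le := pow_mul_numPairings_sub_le card_H_le
  rw [Nat.cast_mul, Nat.cast_ofNat, mul_pow, mul_assoc,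
    mul_le_mul_iff_right₀ (by positivity)] at ratio_le
  rw [pairingEstimate, div_pow, div_mul_div_comm, le_div_iff₀ (by positivity)]
  calc (#{E ∈ cubicEdgeSets V | H ⊆ E} : ℝ) * (n ^ #H * 6 ^ (2 * n))
      = n ^ #H * (#{E ∈ cubicEdgeSets V | H ⊆ E} * 6 ^ (2 * n) : ℕ) := by push_cast; ring
    _ ≤ n ^ #H * (36 ^ #H * numPairings (3 * n - #H) : ℕ) := by gcongr
    _ = 36 ^ #H * (n ^ #H * numPairings (3 * n - #H)) := by push_cast; ring
    _ ≤ 36 ^ #H * numPairings (3 * n) := by gcongr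

end ContainingBound

section Cycles

open Finset Function

variable {α β : Type*} {f : Equiv.Perm α}

lemma eq_of_sameCycle [Finite α] {g : α → β} (hg : ∀ x, g (f x) = g x) {x y : α}
    (h : f.SameCycle x y) : g x = g y := by
  obtain ⟨i, rfl⟩ := h.exists_nat_pow_eq
  induction i with
  | zero => rfl
  | succ i ih => rw [pow_succ', Equiv.Perm.mul_apply, hg, ih ⟨i, by simp⟩]

variable (f) in
lemma card_filter_sameCycle [Fintype α] [DecidableEq α] (x : α) :
    #{y | f.SameCycle x y} = minimalPeriod f x := by
  classical
  have orbit_eq : {y | f.SameCycle x y} = MulAction.orbit (Subgroup.zpowers f) x := by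
    ext y
    simp [MulAction.mem_orbit_iff, Equiv.Perm.SameCycle, Subgroup.smul_def]
  rw [← Fintype.card_subtype]
  exact (Fintype.card_congr (Equiv.setCongr orbit_eq)).trans
    (MulAction.minimalPeriod_eq_card f x).symm

lemma sum_powerset_prod_le_exp_sum (s : Finset α) {y : α → ℝ} (hy : ∀ a, 0 ≤ y a) :
    ∑ t ∈ s.powerset, ∏ a ∈ t, y a ≤ Real.exp (∑ a ∈ s, y a) := by
  rw [← prod_one_add, Real.exp_sum]
  exact prod_le_prod (fun a _ ↦ by linarith [hy a])
    fun a _ ↦ by linarith [Real.add_one_le_exp (y a)]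

lemma sum_prod_le_exp_sum_pow_minimalPeriod [Finite α] {X : Finset α} {F : Finset (Finset α)}
    (subset : ∀ H ∈ F, H ⊆ X) (invariant : ∀ H ∈ F, ∀ e, f e ∈ H ↔ e ∈ H) {y : α → ℝ}
    (y_nonneg : ∀ e, 0 ≤ y e) (y_apply : ∀ e, y (f e) = y e) :
    ∑ H ∈ F, ∏ e ∈ H, y e ≤ Real.exp (∑ e ∈ X, y e ^ minimalPeriod f e) := by
  classical
  have := Fintype.ofFinite α
  let s := Equiv.Perm.SameCycle.setoid f
  let cyc : α → Quotient s := Quotient.mk s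
  have cyc_eq {x e : α} : cyc e = cyc x ↔ f.SameCycle x e :=
    Quotient.eq.trans Equiv.Perm.sameCycle_comm
  let Y (q : Quotient s) : ℝ := ∏ e with cyc e = q, y e
  have Y_nonneg (q : Quotient s) : 0 ≤ Y q := prod_nonneg fun e _ ↦ y_nonneg e
  have Y_mk (x : α) : Y (cyc x) = y x ^ minimalPeriod f x := by
    simp only [Y, cyc_eq, ← card_filter_sameCycle f x]
    exact prod_eq_pow_card fun e he ↦ (eq_of_sameCycle y_apply (mem_filter.1 he).2).symm
  have mem_iff {H : Finset α} (hH : H ∈ F) {e : α} : e ∈ H ↔ cyc e ∈ H.image cyc := by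
    refine ⟨mem_image_of_mem cyc, fun h ↦ ?_⟩
    obtain ⟨x, hx, hxe⟩ := mem_image.1 h
    have := eq_of_sameCycle (g := (· ∈ H)) (fun e ↦ propext (invariant H hH e)) (cyc_eq.1 hxe)
    exact this.mpr hx
  have prod_eq (H : Finset α) (hH : H ∈ F) : ∏ e ∈ H, y e = ∏ q ∈ H.image cyc, Y q := by
    rw [← prod_fiberwise_of_maps_to fun e ↦ mem_image_of_mem cyc]
    refine prod_congr rfl fun q hq ↦ prod_congr (ext fun e ↦ ?_) fun _ _ ↦ rfl
    simp only [mem_filter, mem_univ, true_and, and_iff_right_iff_imp]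
    rintro rfl
    exact (mem_iff hH).2 hq
  have injOn : Set.InjOn (image cyc) F := fun H hH H' hH' h ↦
    ext fun e ↦ by rw [mem_iff hH, mem_iff hH', h]
  calc ∑ H ∈ F, ∏ e ∈ H, y e = ∑ K ∈ F.image (image cyc), ∏ q ∈ K, Y q := by
        rw [sum_image injOn, sum_congr rfl prod_eq]
    _ ≤ ∑ K ∈ (X.image cyc).powerset, ∏ q ∈ K, Y q :=
        sum_le_sum_of_subset_of_nonneg
          (image_subset_iff.2 fun H hH ↦ mem_powerset.2 (image_subset_image (subset H hH)))
          fun K _ _ ↦ prod_nonneg fun q _ ↦ Y_nonneg q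
    _ ≤ Real.exp (∑ q ∈ X.image cyc, Y q) := sum_powerset_prod_le_exp_sum _ Y_nonneg
    _ ≤ Real.exp (∑ e ∈ X, Y (cyc e)) :=
        Real.exp_le_exp.2 (sum_image_le_of_nonneg fun q _ ↦ Y_nonneg q)
    _ = _ := by simp only [Y_mk]

end Cycles

section EdgeCycles

open Finset Function

variable {V : Type*}

/-- The action of permutations of `V` on unordered pairs of elements of `V`. -/
def pairAction : Equiv.Perm V →* Equiv.Perm (Sym2 V) where
  toFun σ := ⟨Sym2.map σ, Sym2.map σ.symm, fun e ↦ by simp [Sym2.map_map],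
    fun e ↦ by simp [Sym2.map_map]⟩
  map_one' := by ext e; simp
  map_mul' σ τ := by ext e; simp [Sym2.map_map]

@[simp] lemma pairAction_mk (σ : Equiv.Perm V) (u v : V) :
    pairAction σ s(u, v) = s(σ u, σ v) := rfl

lemma minimalPeriod_dvd_iff {α : Type*} {f : Equiv.Perm α} {x : α} {k : ℕ} :
    minimalPeriod f x ∣ k ↔ (f ^ k) x = x := by
  rw [← isPeriodicPt_iff_minimalPeriod_dvd, IsPeriodicPt, IsFixedPt, Equiv.Perm.iterate_eq_pow]

lemma minimalPeriod_pos [Finite V] (σ : Equiv.Perm V) (u : V) : 0 < minimalPeriod σ u :=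
  minimalPeriod_pos_of_mem_periodicPts (σ.injective.mem_periodicPts u)

lemma max_minimalPeriod_le_minimalPeriod_pairAction [Finite V] {σ : Equiv.Perm V} {u v : V}
    (h : v ≠ (σ ^ (minimalPeriod σ u / 2)) u) :
    max (minimalPeriod σ u) (minimalPeriod σ v) ≤ minimalPeriod (pairAction σ) s(u, v) := by
  set p := minimalPeriod (pairAction σ) s(u, v)
  have p_pos : 0 < p := minimalPeriod_pos _ _
  have dvd : minimalPeriod σ u ∣ p ∧ minimalPeriod σ v ∣ p := by
    have fixed := minimalPeriod_dvd_iff.1 (dvd_refl p)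
    rw [← map_pow, pairAction_mk, Sym2.eq_iff] at fixed
    rcases fixed with ⟨hu, hv⟩ | ⟨huv, hvu⟩
    · exact ⟨minimalPeriod_dvd_iff.2 hu, minimalPeriod_dvd_iff.2 hv⟩
    obtain ⟨c, hc⟩ : minimalPeriod σ u ∣ 2 * p := by
      rw [minimalPeriod_dvd_iff, two_mul, pow_add, Equiv.Perm.mul_apply, huv, hvu]
    rcases Nat.even_or_odd' c with ⟨k, rfl | rfl⟩
    · have dvd_u : minimalPeriod σ u ∣ p := ⟨k, by linarith⟩
      have : v = u := huv.symm.trans (minimalPeriod_dvd_iff.1 dvd_u)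
      exact ⟨dvd_u, this ▸ dvd_u⟩
    · have p_eq : p = minimalPeriod σ u / 2 + minimalPeriod σ u * k := by
        rw [mul_add, mul_one, mul_left_comm] at hc
        omega
      refine absurd ?_ h
      rw [← huv, p_eq, pow_add, Equiv.Perm.mul_apply,
        minimalPeriod_dvd_iff.1 (dvd_mul_right (minimalPeriod σ u) k)]
  exact max_le (Nat.le_of_dvd p_pos dvd.1) (Nat.le_of_dvd p_pos dvd.2)

end EdgeCycles

section SupportPatterns

open Finset Function

variable {V : Type*} [Fintype V] [DecidableEq V] (σ : Equiv.Perm V)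

/-- Weights under which an edge meeting the support of `σ` has a small product of end weights over
its `σ`-orbit, so that summing the product weight over `supportPatterns σ` stays cheap. -/
noncomputable def vertexWeight (u : V) : ℝ :=
  if u ∈ σ.support then (#σ.support : ℝ) ^ (-(1 / (2 * minimalPeriod σ u : ℝ)))
  else (√(Fintype.card V))⁻¹

lemma vertexWeight_apply (u : V) : vertexWeight σ (σ u) = vertexWeight σ u := by
  simp only [vertexWeight, Equiv.Perm.apply_mem_support,
    minimalPeriod_apply (σ.injective.mem_periodicPts u)]

lemma vertexWeight_nonneg (u : V) : 0 ≤ vertexWeight σ u := by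
  unfold vertexWeight
  positivity

lemma vertexWeight_le_one (u : V) : vertexWeight σ u ≤ 1 := by
  unfold vertexWeight
  split_ifs with hu
  · refine Real.rpow_le_one_of_one_le_of_nonpos ?_ (neg_nonpos.2 (by positivity))
    exact_mod_cast card_pos.2 ⟨u, hu⟩
  · refine inv_le_one_of_one_le₀ (Real.one_le_sqrt.2 ?_)
    exact_mod_cast Fintype.card_pos_iff.2 ⟨u⟩

variable {σ}

lemma vertexWeight_pow_minimalPeriod {u : V} (hu : u ∈ σ.support) :
    vertexWeight σ u ^ minimalPeriod σ u = (√(#σ.support))⁻¹ := by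
  have period_pos : (0 : ℝ) < minimalPeriod σ u := mod_cast minimalPeriod_pos σ u
  rw [vertexWeight, if_pos hu, ← Real.rpow_mul_natCast (by positivity), Real.sqrt_eq_rpow,
    ← Real.rpow_neg (by positivity)]
  congr 1
  field_simp

lemma two_le_minimalPeriod {u : V} (hu : u ∈ σ.support) : 2 ≤ minimalPeriod σ u := by
  have pos := minimalPeriod_pos σ u
  have ne_one : minimalPeriod σ u ≠ 1 := fun h ↦
    Equiv.Perm.mem_support.1 hu (minimalPeriod_eq_one_iff_isFixedPt.1 h)
  omega

lemma pairProd_vertexWeight_pow_le {u : V} (hu : u ∈ σ.support) (v : V) :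
    pairProd (vertexWeight σ) s(u, v) ^ minimalPeriod (pairAction σ) s(u, v) ≤
      (if v ∈ σ.support then (#σ.support : ℝ)⁻¹ else 0) +
        (if v = (σ ^ (minimalPeriod σ u / 2)) u then 1 else 0) + (Fintype.card V : ℝ)⁻¹ := by
  have wu := vertexWeight_nonneg σ u
  have wv := vertexWeight_nonneg σ v
  have wu_le := vertexWeight_le_one σ u
  have wv_le := vertexWeight_le_one σ v
  have inv_nonneg : (0 : ℝ) ≤ (Fintype.card V : ℝ)⁻¹ := by positivity
  rw [pairProd_mk]
  by_cases h : v = (σ ^ (minimalPeriod σ u / 2)) u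
  · have term_nonneg : (0 : ℝ) ≤ if v ∈ σ.support then (#σ.support : ℝ)⁻¹ else 0 := by positivity
    rw [if_pos h]
    linarith [pow_le_one₀ (n := minimalPeriod (pairAction σ) s(u, v)) (mul_nonneg wu wv)
      (mul_le_one₀ wu_le wv wv_le)]
  have le_period := max_minimalPeriod_le_minimalPeriod_pairAction h
  rw [if_neg h, add_zero, mul_pow]
  split_ifs with hv
  · calc _ ≤ vertexWeight σ u ^ minimalPeriod σ u * vertexWeight σ v ^ minimalPeriod σ v := by
          gcongr ?_ * ?_
          · exact pow_le_pow_of_le_one wu wu_le (le_trans (le_max_left _ _) le_period)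
          · exact pow_le_pow_of_le_one wv wv_le (le_trans (le_max_right _ _) le_period)
      _ = (#σ.support : ℝ)⁻¹ := by
          rw [vertexWeight_pow_minimalPeriod hu, vertexWeight_pow_minimalPeriod hv, ← mul_inv,
            Real.mul_self_sqrt (Nat.cast_nonneg _)]
      _ ≤ _ := le_add_of_nonneg_right inv_nonneg
  · calc _ ≤ 1 * vertexWeight σ v ^ 2 := by
          gcongr ?_ * ?_
          · exact pow_le_one₀ wu wu_le
          · exact pow_le_pow_of_le_one wv wv_le
              ((two_le_minimalPeriod hu).trans (le_trans (le_max_left _ _) le_period))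
      _ = 0 + (Fintype.card V : ℝ)⁻¹ := by
          rw [vertexWeight, if_neg hv, inv_pow, Real.sq_sqrt (Nat.cast_nonneg _), one_mul, zero_add]

lemma sum_pairProd_vertexWeight_pow_le {u : V} (hu : u ∈ σ.support) :
    ∑ v, pairProd (vertexWeight σ) s(u, v) ^ minimalPeriod (pairAction σ) s(u, v) ≤ 3 := by
  refine (sum_le_sum fun v _ ↦ pairProd_vertexWeight_pow_le hu v).trans ?_
  have mul_inv_le (k : ℕ) : (k : ℝ) * (k : ℝ)⁻¹ ≤ 1 := mul_inv_le_one
  rw [sum_add_distrib, sum_add_distrib, sum_ite_eq' univ, if_pos (mem_univ _), sum_ite_mem,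
    univ_inter, sum_const, sum_const, nsmul_eq_mul, nsmul_eq_mul, card_univ]
  linarith [mul_inv_le #σ.support, mul_inv_le (Fintype.card V)]

variable (σ) in
/-- The possible edges with at least one end moved by `σ`. -/
def edgesTouchingSupport : Finset (Sym2 V) := {e ∈ nonloops V | ∃ u ∈ e, u ∈ σ.support}

variable (σ) in
/-- The possible sets of edges meeting the support of `σ` in a cubic graph fixed by `σ`. -/
noncomputable def supportPatterns : Finset (Finset (Sym2 V)) :=
  {H ∈ (edgesTouchingSupport σ).powerset |
    (∀ e, pairAction σ e ∈ H ↔ e ∈ H) ∧ ∀ u ∈ σ.support, edgeDegrees H u = 3}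

lemma mem_supportPatterns {H : Finset (Sym2 V)} :
    H ∈ supportPatterns σ ↔ H ⊆ edgesTouchingSupport σ ∧
      (∀ e, pairAction σ e ∈ H ↔ e ∈ H) ∧ ∀ u ∈ σ.support, edgeDegrees H u = 3 := by
  rw [supportPatterns, mem_filter, mem_powerset]

variable (σ) in
lemma sum_prod_supportPatterns_le :
    ∑ H ∈ supportPatterns σ, ∏ e ∈ H, pairProd (vertexWeight σ) e ≤
      Real.exp (3 * #σ.support) := by
  have weight_nonneg (e : Sym2 V) : 0 ≤ pairProd (vertexWeight σ) e := by
    induction e with | _ u v => exact mul_nonneg (vertexWeight_nonneg σ u) (vertexWeight_nonneg σ v)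
  have weight_apply (e : Sym2 V) :
      pairProd (vertexWeight σ) (pairAction σ e) = pairProd (vertexWeight σ) e := by
    induction e with | _ u v => simp only [pairAction_mk, pairProd_mk, vertexWeight_apply]
  have subset_image : edgesTouchingSupport σ ⊆
      (σ.support ×ˢ univ).image fun p ↦ s(p.1, p.2) := fun e he ↦ by
    obtain ⟨u, hue, hu⟩ := (mem_filter.1 he).2
    obtain ⟨v, rfl⟩ := hue
    exact mem_image_of_mem (fun p : V × V ↦ s(p.1, p.2)) (a := (u, v)) (by simpa using hu)
  refine (sum_prod_le_exp_sum_pow_minimalPeriod (fun H hH ↦ (mem_supportPatterns.1 hH).1)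
    (fun H hH ↦ (mem_supportPatterns.1 hH).2.1) weight_nonneg weight_apply).trans
    (Real.exp_le_exp.2 ?_)
  set b := fun e ↦ pairProd (vertexWeight σ) e ^ minimalPeriod (pairAction σ) e
  have b_nonneg (e : Sym2 V) : 0 ≤ b e := pow_nonneg (weight_nonneg e) _
  calc ∑ e ∈ edgesTouchingSupport σ, b e
      ≤ ∑ e ∈ (σ.support ×ˢ univ).image fun p ↦ s(p.1, p.2), b e :=
        sum_le_sum_of_subset_of_nonneg subset_image fun e _ _ ↦ b_nonneg e
    _ ≤ ∑ p ∈ σ.support ×ˢ univ, b s(p.1, p.2) := sum_image_le_of_nonneg fun e _ ↦ b_nonneg e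
    _ = ∑ u ∈ σ.support, ∑ v, b s(u, v) := sum_product _ _ _
    _ ≤ ∑ u ∈ σ.support, 3 := sum_le_sum fun u hu ↦ sum_pairProd_vertexWeight_pow_le hu
    _ = 3 * #σ.support := by rw [sum_const, nsmul_eq_mul, mul_comm]

end SupportPatterns

section FixedEdgeSets

open Finset Function

variable {V : Type*} [Fintype V] [DecidableEq V]

lemma prod_pairProd_eq_prod_pow_edgeDegrees {R : Type*} [CommMonoid R] (x : V → R)
    {H : Finset (Sym2 V)} (hH : H ⊆ nonloops V) :
    ∏ e ∈ H, pairProd x e = ∏ v, x v ^ edgeDegrees H v := by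
  simp only [← sum_edgeDegrees_singleton H, Finsupp.finsetSum_apply, ← prod_pow_eq_pow_sum]
  rw [prod_comm (t := H)]
  refine prod_congr rfl fun e he ↦ ?_
  induction e with | _ i j =>
  rw [edgeDegrees_singleton_mk (by simpa using hH he), pairProd_mk]
  simp only [Finsupp.add_apply, pow_add, prod_mul_distrib]
  simp [Finsupp.single_apply, pow_ite]

/-- The sum of the inverse cycle lengths over the points moved by `σ`, that is, the number of
nontrivial cycles of `σ`. -/
noncomputable def inversePeriodSum (σ : Equiv.Perm V) : ℝ :=
  ∑ u ∈ σ.support, (minimalPeriod σ u : ℝ)⁻¹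

variable {σ : Equiv.Perm V}

variable (σ) in
lemma inversePeriodSum_le : inversePeriodSum σ ≤ #σ.support / 2 := by
  rw [div_eq_mul_inv, ← nsmul_eq_mul]
  refine sum_le_card_nsmul _ _ _ fun u hu ↦ ?_
  gcongr
  exact_mod_cast two_le_minimalPeriod hu

lemma prod_vertexWeight_support (hσ : σ ≠ 1) :
    ∏ u ∈ σ.support, vertexWeight σ u =
      (#σ.support : ℝ) ^ (-(1 / 2 * inversePeriodSum σ)) := by
  have support_pos : (0 : ℝ) < #σ.support := by
    simpa [card_pos, nonempty_iff_ne_empty] using hσ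
  calc ∏ u ∈ σ.support, vertexWeight σ u
      = ∏ u ∈ σ.support, (#σ.support : ℝ) ^ (-(1 / (2 * minimalPeriod σ u : ℝ))) :=
        prod_congr rfl fun u hu ↦ if_pos hu
    _ = _ := by
        rw [← Real.rpow_sum_of_pos support_pos, inversePeriodSum, mul_sum, sum_neg_distrib]
        simp only [one_div, mul_inv]

lemma subset_nonloops_of_mem_supportPatterns {H : Finset (Sym2 V)} (hH : H ∈ supportPatterns σ) :
    H ⊆ nonloops V :=
  (mem_supportPatterns.1 hH).1.trans (filter_subset _ _)

lemma sum_edgeDegrees_support {H : Finset (Sym2 V)} (hH : H ∈ supportPatterns σ) :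
    ∑ u ∈ σ.support, edgeDegrees H u = 3 * #σ.support := by
  rw [sum_congr rfl (mem_supportPatterns.1 hH).2.2, sum_const, smul_eq_mul, mul_comm]

lemma sum_edgeDegrees_compl_support {H : Finset (Sym2 V)} (hH : H ∈ supportPatterns σ) :
    3 * #σ.support + ∑ u ∈ σ.supportᶜ, edgeDegrees H u = 2 * #H := by
  rw [← sum_edgeDegrees_support hH, sum_add_sum_compl, ← Finsupp.degree_eq_sum,
    degree_edgeDegrees (subset_nonloops_of_mem_supportPatterns hH)]

lemma prod_pairProd_vertexWeight (hσ : σ ≠ 1) {H : Finset (Sym2 V)} (hH : H ∈ supportPatterns σ) :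
    ∏ e ∈ H, pairProd (vertexWeight σ) e =
      (Fintype.card V : ℝ)⁻¹ ^ #H * (√(Fintype.card V) ^ (3 * #σ.support) *
        (#σ.support : ℝ) ^ (-(3 / 2 * inversePeriodSum σ))) := by
  have sqrt_ne_zero : √(Fintype.card V) ≠ 0 := by
    obtain ⟨v, -⟩ := not_forall.1 fun h ↦ hσ (Equiv.ext h)
    have : 0 < Fintype.card V := Fintype.card_pos_iff.2 ⟨v⟩
    positivity
  have prod_support : ∏ u ∈ σ.support, vertexWeight σ u ^ edgeDegrees H u =
      (#σ.support : ℝ) ^ (-(3 / 2 * inversePeriodSum σ)) := by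
    rw [prod_congr rfl fun u hu ↦ by rw [(mem_supportPatterns.1 hH).2.2 u hu], prod_pow,
      prod_vertexWeight_support hσ, ← Real.rpow_mul_natCast (Nat.cast_nonneg _)]
    congr 1
    ring
  have prod_compl : ∏ u ∈ σ.supportᶜ, vertexWeight σ u ^ edgeDegrees H u =
      (√(Fintype.card V))⁻¹ ^ ∑ u ∈ σ.supportᶜ, edgeDegrees H u := by
    rw [← prod_pow_eq_pow_sum]
    exact prod_congr rfl fun u hu ↦ by rw [vertexWeight, if_neg (mem_compl.1 hu)]
  have pow_card : (Fintype.card V : ℝ)⁻¹ ^ #H = (√(Fintype.card V))⁻¹ ^ (2 * #H) := by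
    rw [pow_mul, inv_pow _ 2, Real.sq_sqrt (Nat.cast_nonneg _)]
  rw [prod_pairProd_eq_prod_pow_edgeDegrees _ (subset_nonloops_of_mem_supportPatterns hH),
    ← prod_mul_prod_compl σ.support, prod_support, prod_compl, pow_card,
    ← sum_edgeDegrees_compl_support hH, pow_add, inv_pow _ (3 * #σ.support)]
  field_simp

lemma card_le_of_mem_supportPatterns {H : Finset (Sym2 V)} (hH : H ∈ supportPatterns σ) :
    #H ≤ 3 * #σ.support := by
  have subset_biUnion : H ⊆ σ.support.biUnion fun u ↦ {e ∈ H | u ∈ e} := fun e he ↦ by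
    obtain ⟨u, hue, hu⟩ := (mem_filter.1 ((mem_supportPatterns.1 hH).1 he)).2
    exact mem_biUnion.2 ⟨u, hu, mem_filter.2 ⟨he, hue⟩⟩
  rw [← sum_edgeDegrees_support hH]
  exact (card_le_card subset_biUnion).trans card_biUnion_le

variable (σ) in
/-- The edge sets of the cubic graphs on `V` that have `σ` as an automorphism. -/
noncomputable def fixedCubicEdgeSets : Finset (Finset (Sym2 V)) :=
  {E ∈ cubicEdgeSets V | ∀ e, pairAction σ e ∈ E ↔ e ∈ E}

lemma pairAction_mem_edgesTouchingSupport (e : Sym2 V) :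
    pairAction σ e ∈ edgesTouchingSupport σ ↔ e ∈ edgesTouchingSupport σ := by
  induction e with | _ u v => simp [edgesTouchingSupport]

lemma inter_edgesTouchingSupport_mem_supportPatterns {E : Finset (Sym2 V)}
    (hE : E ∈ fixedCubicEdgeSets σ) : E ∩ edgesTouchingSupport σ ∈ supportPatterns σ := by
  obtain ⟨hcubic, hfixed⟩ := mem_filter.1 hE
  obtain ⟨hnonloops, hdegrees⟩ := mem_edgeSetsWithDegrees.1 hcubic
  refine mem_supportPatterns.2 ⟨inter_subset_right, fun e ↦ ?_, fun u hu ↦ ?_⟩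
  · rw [mem_inter, mem_inter, hfixed, pairAction_mem_edgesTouchingSupport]
  · have same_incident : ({e ∈ E ∩ edgesTouchingSupport σ | u ∈ e} : Finset _) =
        {e ∈ E | u ∈ e} := by
      ext e
      simp only [edgesTouchingSupport, mem_filter, mem_inter]
      exact ⟨fun h ↦ ⟨h.1.1, h.2⟩, fun h ↦ ⟨⟨h.1, hnonloops h.1, u, h.2, hu⟩, h.2⟩⟩
    rw [edgeDegrees_apply, same_incident, ← edgeDegrees_apply, hdegrees]
    rfl

variable (σ) in
lemma card_fixedCubicEdgeSets_le_sum :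
    #(fixedCubicEdgeSets σ) ≤ ∑ H ∈ supportPatterns σ, #{E ∈ cubicEdgeSets V | H ⊆ E} := by
  refine (card_le_card fun E hE ↦ ?_).trans card_biUnion_le
  exact mem_biUnion.2 ⟨_, inter_edgesTouchingSupport_mem_supportPatterns hE,
    mem_filter.2 ⟨(mem_filter.1 hE).1, inter_subset_left⟩⟩

lemma card_fixedCubicEdgeSets_le {n : ℕ} (hV : Fintype.card V = 2 * n) (hσ : σ ≠ 1) :
    (#(fixedCubicEdgeSets σ) : ℝ) ≤ pairingEstimate n * (72 ^ (3 * #σ.support) *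
      Real.exp (3 * #σ.support) * (√(2 * n) ^ (3 * #σ.support))⁻¹ *
        (#σ.support : ℝ) ^ (3 / 2 * inversePeriodSum σ)) := by
  set m := #σ.support
  have n_pos : 0 < n := by
    obtain ⟨v, -⟩ := not_forall.1 fun h ↦ hσ (Equiv.ext h)
    have : 0 < Fintype.card V := Fintype.card_pos_iff.2 ⟨v⟩
    omega
  have m_pos : (0 : ℝ) < m := by simpa [m, card_pos, nonempty_iff_ne_empty] using hσ
  have estimate_pos := pairingEstimate_pos n
  set scale : ℝ := √(2 * n) ^ (3 * m) * (m : ℝ) ^ (-(3 / 2 * inversePeriodSum σ))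
  have scale_pos : 0 < scale := by positivity
  have term_le (H) (hH : H ∈ supportPatterns σ) : (#{E ∈ cubicEdgeSets V | H ⊆ E} : ℝ) ≤
      pairingEstimate n * 72 ^ (3 * m) * scale⁻¹ * ∏ e ∈ H, pairProd (vertexWeight σ) e := by
    calc _ ≤ (36 / n : ℝ) ^ #H * pairingEstimate n := card_filter_subset_cubicEdgeSets_le hV n_pos H
      _ = 72 ^ #H * (2 * n : ℝ)⁻¹ ^ #H * pairingEstimate n := by
        rw [← mul_pow]
        congr 2
        field_simp
        norm_num
      _ ≤ 72 ^ (3 * m) * (2 * n : ℝ)⁻¹ ^ #H * pairingEstimate n := by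
        gcongr
        · norm_num
        · exact card_le_of_mem_supportPatterns hH
      _ = _ := by
        have prod_eq : ∏ e ∈ H, pairProd (vertexWeight σ) e = (2 * n : ℝ)⁻¹ ^ #H * scale := by
          simp only [prod_pairProd_vertexWeight hσ hH, hV, Nat.cast_mul, Nat.cast_ofNat, scale, m]
        rw [prod_eq]
        field_simp
  calc (#(fixedCubicEdgeSets σ) : ℝ)
      ≤ ∑ H ∈ supportPatterns σ, (#{E ∈ cubicEdgeSets V | H ⊆ E} : ℝ) := by
        exact_mod_cast card_fixedCubicEdgeSets_le_sum σ
    _ ≤ pairingEstimate n * 72 ^ (3 * m) * scale⁻¹ * Real.exp (3 * m) := by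
        refine (sum_le_sum term_le).trans ?_
        rw [← mul_sum]
        gcongr
        exact sum_prod_supportPatterns_le σ
    _ = _ := by
        simp only [scale, Real.rpow_neg m_pos.le, mul_inv, inv_inv]
        ring

end FixedEdgeSets

section CycleCounts

open Finset Function

variable {α β : Type*}

/-- The number of cycles of `f`, fixed points included. -/
noncomputable def cycleCount (f : Equiv.Perm α) : ℕ :=
  Nat.card (Quotient (Equiv.Perm.SameCycle.setoid f))

lemma sum_inv_minimalPeriod [Fintype α] (f : Equiv.Perm α) :
    ∑ x, (minimalPeriod f x : ℝ)⁻¹ = cycleCount f := by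
  classical
  let s := Equiv.Perm.SameCycle.setoid f
  have sum_cycle (q : Quotient s) :
      ∑ x with Quotient.mk s x = q, (minimalPeriod f x : ℝ)⁻¹ = 1 := by
    induction q using Quotient.inductionOn with | _ x =>
    have mk_eq_iff {y : α} : Quotient.mk s y = Quotient.mk s x ↔ f.SameCycle x y :=
      Quotient.eq.trans Equiv.Perm.sameCycle_comm
    have period_eq {y : α} (h : f.SameCycle x y) :
        (minimalPeriod f y : ℝ)⁻¹ = (minimalPeriod f x : ℝ)⁻¹ :=
      (eq_of_sameCycle (g := fun y ↦ (minimalPeriod f y : ℝ)⁻¹)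
        (fun z ↦ by rw [minimalPeriod_apply (f.injective.mem_periodicPts z)]) h).symm
    have period_ne_zero : (minimalPeriod f x : ℝ) ≠ 0 :=
      Nat.cast_ne_zero.2 (minimalPeriod_pos f x).ne'
    simp only [mk_eq_iff]
    rw [sum_congr rfl fun y hy ↦ period_eq (mem_filter.1 hy).2, sum_const, card_filter_sameCycle,
      nsmul_eq_mul, mul_inv_cancel₀ period_ne_zero]
  rw [← sum_fiberwise univ (Quotient.mk s), sum_congr rfl fun q _ ↦ sum_cycle q, sum_const,
    nsmul_one, card_univ, cycleCount, Nat.card_eq_fintype_card]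

lemma card_pow_cycleCount_eq [Finite α] (f : Equiv.Perm α) :
    Nat.card β ^ cycleCount f = Nat.card {g : α → β // g ∘ f = g} := by
  have := Fintype.ofFinite α
  rw [cycleCount, ← Nat.card_fun]
  refine Nat.card_congr ⟨fun g ↦ ⟨g ∘ Quotient.mk _, ?_⟩, fun g ↦ Quotient.lift g.1 fun x y h ↦ ?_,
    fun g ↦ ?_, fun g ↦ ?_⟩
  · exact funext fun x ↦ congrArg g (Quotient.sound ⟨-1, by simp⟩)
  · exact eq_of_sameCycle (congrFun g.2) h
  · exact funext fun q ↦ q.inductionOn fun _ ↦ rfl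
  · rfl

lemma exists_perm_comp_eq_of_map_univ_eq [Fintype α] {g h : α → β}
    (hgh : univ.val.map g = univ.val.map h) : ∃ f : Equiv.Perm α, g ∘ f = h := by
  classical
  have card_fiber (b : β) : Fintype.card {x // h x = b} = Fintype.card {x // g x = b} := by
    have := congrArg (Multiset.count b) hgh
    simp only [Multiset.count_map, eq_comm (a := b)] at this
    rw [Fintype.card_subtype, Fintype.card_subtype]
    exact this.symm
  let f := Equiv.ofFiberEquiv fun b ↦ Fintype.equivOfCardEq (card_fiber b)
  exact ⟨f, funext fun x ↦ Equiv.ofFiberEquiv_map _ x⟩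

lemma sum_card_pow_cycleCount_le [Fintype α] [DecidableEq α] [Fintype β] :
    ∑ f : Equiv.Perm α, Fintype.card β ^ cycleCount f ≤
      (Fintype.card β).ascFactorial (Fintype.card α) := by
  classical
  let _ : MulAction (Equiv.Perm α) (α → β) := arrowAction
  let Orbits := MulAction.orbitRel.Quotient (Equiv.Perm α) (α → β)
  have smul_eq (f : Equiv.Perm α) (g : α → β) : f • g = g ∘ f.symm := rfl
  have card_fixedBy (f : Equiv.Perm α) :
      Fintype.card (MulAction.fixedBy (α → β) f) = Fintype.card β ^ cycleCount f := by
    rw [← Nat.card_eq_fintype_card, ← Nat.card_eq_fintype_card, card_pow_cycleCount_eq]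
    refine Nat.card_congr (Equiv.subtypeEquivRight fun g ↦ ?_)
    rw [MulAction.mem_fixedBy, smul_eq, Equiv.comp_symm_eq, eq_comm]
  have card_orbits_le : Fintype.card Orbits ≤ Fintype.card (Sym β (Fintype.card α)) := by
    refine Fintype.card_le_of_injective
      (Quotient.lift (fun g ↦ ⟨univ.val.map g, by simp⟩) fun g h ↦ ?_) fun p q ↦ ?_
    · rintro ⟨f, rfl⟩
      exact Subtype.ext ((Multiset.map_map h f.symm univ.val).symm.trans
        (congrArg (Multiset.map h) (Multiset.map_univ_val_equiv f.symm)))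
    · refine Quotient.inductionOn₂ p q fun g h hgh ↦ Quotient.sound ?_
      obtain ⟨f, rfl⟩ := exists_perm_comp_eq_of_map_univ_eq (congrArg Subtype.val hgh)
      exact ⟨f, by ext; simp [smul_eq]⟩
  simp only [← card_fixedBy]
  rw [MulAction.sum_card_fixedBy_eq_card_orbits_mul_card_group, Fintype.card_perm,
    Nat.ascFactorial_eq_factorial_mul_choose', mul_comm, ← Nat.multichoose_eq,
    ← Sym.card_sym_eq_multichoose]
  gcongr

end CycleCounts

section SupportSums

open Finset Function

lemma minimalPeriod_ofSubtype {α : Type*} {p : α → Prop} [DecidablePred p]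
    (f : Equiv.Perm (Subtype p)) (x : Subtype p) :
    minimalPeriod (Equiv.Perm.ofSubtype f) (x : α) = minimalPeriod f x :=
  Nat.dvd_right_iff_eq.1 fun k ↦ by
    rw [minimalPeriod_dvd_iff, minimalPeriod_dvd_iff, ← map_pow, Equiv.Perm.ofSubtype_apply_coe,
      Subtype.coe_inj]

variable {V : Type*} [Fintype V] [DecidableEq V]

lemma inversePeriodSum_ofSubtype_le (S : Finset V) (τ : Equiv.Perm S) :
    inversePeriodSum (Equiv.Perm.ofSubtype τ) ≤ cycleCount τ := by
  have support_subset : (Equiv.Perm.ofSubtype τ).support ⊆ S := fun x hx ↦ by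
    by_contra hxS
    exact Equiv.Perm.mem_support.1 hx (Equiv.Perm.ofSubtype_apply_of_not_mem τ hxS)
  calc inversePeriodSum (Equiv.Perm.ofSubtype τ)
      ≤ ∑ u ∈ S, (minimalPeriod (Equiv.Perm.ofSubtype τ) u : ℝ)⁻¹ :=
        sum_le_sum_of_subset_of_nonneg support_subset fun _ _ _ ↦ by positivity
    _ = ∑ u : S, (minimalPeriod τ u : ℝ)⁻¹ := by
        simp only [← sum_coe_sort S, minimalPeriod_ofSubtype]
    _ = cycleCount τ := sum_inv_minimalPeriod τ

lemma sum_card_pow_inversePeriodSum_le {S : Finset V} (hS : S.Nonempty) :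
    ∑ σ : Equiv.Perm V with σ.support = S, (#S : ℝ) ^ inversePeriodSum σ ≤ (2 * #S) ^ #S := by
  have one_le_card : (1 : ℝ) ≤ #S := mod_cast hS.card_pos
  have subset_image : ({σ | σ.support = S} : Finset (Equiv.Perm V)) ⊆
      univ.image (Equiv.Perm.ofSubtype (p := (· ∈ S))) := fun σ hσ ↦ by
    obtain ⟨τ, rfl⟩ := (Equiv.Perm.mem_range_ofSubtype_iff (p := (· ∈ S)) (g := σ)).2
      fun x hx ↦ (mem_filter.1 hσ).2 ▸ hx
    exact mem_image_of_mem _ (mem_univ τ)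
  calc ∑ σ : Equiv.Perm V with σ.support = S, (#S : ℝ) ^ inversePeriodSum σ
      ≤ ∑ τ : Equiv.Perm S, (#S : ℝ) ^ inversePeriodSum (Equiv.Perm.ofSubtype τ) := by
        rw [← sum_image Equiv.Perm.ofSubtype_injective.injOn
          (f := fun σ : Equiv.Perm V ↦ (#S : ℝ) ^ inversePeriodSum σ)]
        exact sum_le_sum_of_subset_of_nonneg subset_image fun _ _ _ ↦ by positivity
    _ ≤ ∑ τ : Equiv.Perm S, (#S : ℝ) ^ cycleCount τ := by
        simp only [← Real.rpow_natCast]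
        gcongr with τ
        exact inversePeriodSum_ofSubtype_le S τ
    _ ≤ (#S).ascFactorial #S := by
        exact_mod_cast Fintype.card_coe S ▸ sum_card_pow_cycleCount_le (α := S) (β := S)
    _ ≤ (2 * #S) ^ #S := by
        obtain ⟨k, hk⟩ := Nat.exists_eq_add_one.2 hS.card_pos
        rw [hk]
        exact_mod_cast (Nat.ascFactorial_le_pow_add k (k + 1)).trans
          (Nat.pow_le_pow_left (by omega) _)

lemma sum_card_support_pow_inversePeriodSum_le {m : ℕ} (hm : 0 < m) :
    ∑ σ : Equiv.Perm V with #σ.support = m, (m : ℝ) ^ inversePeriodSum σ ≤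
      (2 * Real.exp 1 * Fintype.card V) ^ m := by
  have sum_support_le (S) (hS : S ∈ powersetCard m (univ : Finset V)) :
      ∑ σ : Equiv.Perm V with #σ.support = m ∧ σ.support = S, (m : ℝ) ^ inversePeriodSum σ ≤
        (2 * m) ^ m := by
    obtain rfl := (mem_powersetCard.1 hS).2
    simp only [and_iff_right_of_imp (congrArg card)]
    exact sum_card_pow_inversePeriodSum_le (card_pos.1 hm)
  rw [← sum_fiberwise_of_maps_to (g := Equiv.Perm.support) (t := powersetCard m univ)
    fun σ hσ ↦ mem_powersetCard.2 ⟨subset_univ _, (mem_filter.1 hσ).2⟩]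
  simp only [filter_filter]
  calc _ ≤ ((Fintype.card V).choose m : ℝ) * (2 * m) ^ m := by
        refine (sum_le_sum sum_support_le).trans_eq ?_
        rw [sum_const, card_powersetCard, card_univ, nsmul_eq_mul]
    _ ≤ Fintype.card V ^ m / m.factorial * (2 * m) ^ m := by
        gcongr
        exact Nat.choose_le_pow_div m _
    _ = (2 * Fintype.card V) ^ m * (m ^ m / m.factorial) := by ring
    _ ≤ (2 * Fintype.card V) ^ m * Real.exp m := by
        gcongr
        exact Real.pow_div_factorial_le_exp _ (Nat.cast_nonneg m) m
    _ = _ := by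
        rw [← Real.exp_one_pow]
        ring

end SupportSums

section NonidentityPermutations

open Finset

variable {V : Type*} [Fintype V] [DecidableEq V] {n : ℕ}

lemma card_support_rpow_le (hV : Fintype.card V = 2 * n) {σ : Equiv.Perm V} (hσ : σ ≠ 1) :
    (#σ.support : ℝ) ^ (3 / 2 * inversePeriodSum σ) ≤
      ((2 * n : ℝ) ^ (1 / 4 : ℝ)) ^ #σ.support * (#σ.support : ℝ) ^ inversePeriodSum σ := by
  have one_le_card : (1 : ℝ) ≤ #σ.support :=
    mod_cast (Equiv.Perm.two_le_card_support_of_ne_one hσ).trans' one_le_two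
  have card_le : (#σ.support : ℝ) ≤ 2 * n := mod_cast hV ▸ card_le_univ σ.support
  calc (#σ.support : ℝ) ^ (3 / 2 * inversePeriodSum σ)
      ≤ (#σ.support : ℝ) ^ ((1 / 4 : ℝ) * #σ.support + inversePeriodSum σ) := by
        gcongr
        linarith [inversePeriodSum_le σ]
    _ = ((#σ.support : ℝ) ^ (1 / 4 : ℝ)) ^ #σ.support *
          (#σ.support : ℝ) ^ inversePeriodSum σ := by
        rw [Real.rpow_add (by linarith), Real.rpow_mul (by linarith), Real.rpow_natCast]
    _ ≤ _ := by gcongr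

lemma card_fixedCubicEdgeSets_le_pow_mul (hV : Fintype.card V = 2 * n) {σ : Equiv.Perm V}
    (hσ : σ ≠ 1) :
    (#(fixedCubicEdgeSets σ) : ℝ) ≤
      pairingEstimate n * (72 ^ 3 * Real.exp 3 * (2 * n : ℝ) ^ (-(5 / 4) : ℝ)) ^ #σ.support *
        (#σ.support : ℝ) ^ inversePeriodSum σ := by
  have estimate_pos := pairingEstimate_pos n
  have two_n_pos : (0 : ℝ) < 2 * n := by
    have := (Equiv.Perm.two_le_card_support_of_ne_one hσ).trans (card_le_univ σ.support)
    exact_mod_cast (hV ▸ this).trans_lt' two_pos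
  have sqrt_pow_three : (√(2 * n : ℝ) ^ 3)⁻¹ * (2 * n : ℝ) ^ (1 / 4 : ℝ) =
      (2 * n : ℝ) ^ (-(5 / 4) : ℝ) := by
    rw [Real.sqrt_eq_rpow, ← Real.rpow_mul_natCast two_n_pos.le, ← Real.rpow_neg two_n_pos.le,
      ← Real.rpow_add two_n_pos]
    norm_num
  have exp_eq : Real.exp (3 * #σ.support) = Real.exp 3 ^ #σ.support := by
    rw [← Real.exp_nat_mul, mul_comm]
  calc (#(fixedCubicEdgeSets σ) : ℝ)
      ≤ pairingEstimate n * (72 ^ (3 * #σ.support) * Real.exp (3 * #σ.support) *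
          (√(2 * n) ^ (3 * #σ.support))⁻¹ * (#σ.support : ℝ) ^ (3 / 2 * inversePeriodSum σ)) :=
        card_fixedCubicEdgeSets_le hV hσ
    _ ≤ pairingEstimate n * (72 ^ (3 * #σ.support) * Real.exp (3 * #σ.support) *
          (√(2 * n) ^ (3 * #σ.support))⁻¹ * (((2 * n : ℝ) ^ (1 / 4 : ℝ)) ^ #σ.support *
            (#σ.support : ℝ) ^ inversePeriodSum σ)) := by
        gcongr
        exact card_support_rpow_le hV hσ
    _ = _ := by
        rw [← sqrt_pow_three, exp_eq, pow_mul, pow_mul, ← inv_pow, mul_pow, mul_pow, mul_pow]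
        ring

/-- The permutations moving `m` of the `2 * n` vertices contribute to the Burnside sum at most
`pairingEstimate n` times the `m`-th power of this ratio. -/
noncomputable def supportRatio (n : ℕ) : ℝ :=
  2 * 72 ^ 3 * Real.exp 4 * (2 * n : ℝ) ^ (-(1 / 4) : ℝ)

lemma tendsto_supportRatio : Tendsto supportRatio atTop (𝓝 0) := by
  have two_mul_tendsto : Tendsto (fun n : ℕ ↦ (2 * n : ℝ)) atTop atTop :=
    tendsto_natCast_atTop_atTop.const_mul_atTop two_pos
  rw [← mul_zero (2 * 72 ^ 3 * Real.exp 4)]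
  exact ((tendsto_rpow_neg_atTop (by norm_num)).comp two_mul_tendsto).const_mul _

lemma sum_card_fixedCubicEdgeSets_card_support_le (hV : Fintype.card V = 2 * n) {m : ℕ}
    (hm : 2 ≤ m) :
    ∑ σ : Equiv.Perm V with #σ.support = m, (#(fixedCubicEdgeSets σ) : ℝ) ≤
      pairingEstimate n * supportRatio n ^ m := by
  have estimate_pos := pairingEstimate_pos n
  have card_le (σ : Equiv.Perm V) (hσ : #σ.support = m) :
      (#(fixedCubicEdgeSets σ) : ℝ) ≤
        pairingEstimate n * (72 ^ 3 * Real.exp 3 * (2 * n : ℝ) ^ (-(5 / 4) : ℝ)) ^ m *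
          (m : ℝ) ^ inversePeriodSum σ := by
    subst hσ
    exact card_fixedCubicEdgeSets_le_pow_mul hV (by rintro rfl; simp at hm)
  have ratio_eq :
      72 ^ 3 * Real.exp 3 * (2 * n : ℝ) ^ (-(5 / 4) : ℝ) * (2 * Real.exp 1 * (2 * n)) =
        supportRatio n := by
    have rpow_mul_self : (2 * n : ℝ) ^ (-(5 / 4) : ℝ) * (2 * n) = (2 * n : ℝ) ^ (-(1 / 4) : ℝ) := by
      rw [← Real.rpow_add_one' (by positivity) (by norm_num)]
      norm_num
    rw [supportRatio, ← rpow_mul_self, show (4 : ℝ) = 3 + 1 by norm_num, Real.exp_add]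
    ring
  refine (sum_le_sum fun σ hσ ↦ card_le σ (mem_filter.1 hσ).2).trans ?_
  rw [← mul_sum, mul_assoc, ← ratio_eq, mul_pow _ (2 * Real.exp 1 * (2 * n : ℝ))]
  gcongr
  simpa [hV] using sum_card_support_pow_inversePeriodSum_le (V := V) (two_pos.trans_le hm)

lemma sum_card_fixedCubicEdgeSets_ne_one_le (hV : Fintype.card V = 2 * n)
    (h_ratio : supportRatio n < 1) :
    ∑ σ : Equiv.Perm V with σ ≠ 1, (#(fixedCubicEdgeSets σ) : ℝ) ≤
      pairingEstimate n * (supportRatio n ^ 2 / (1 - supportRatio n)) := by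
  have ratio_nonneg : 0 ≤ supportRatio n := by unfold supportRatio; positivity
  have support_mem (σ : Equiv.Perm V) (hσ : σ ∈ ({σ | σ ≠ 1} : Finset (Equiv.Perm V))) :
      #σ.support ∈ Ico 2 (2 * n + 1) :=
    mem_Ico.2 ⟨Equiv.Perm.two_le_card_support_of_ne_one (mem_filter.1 hσ).2,
      Nat.lt_succ_iff.2 (hV ▸ card_le_univ σ.support)⟩
  calc ∑ σ : Equiv.Perm V with σ ≠ 1, (#(fixedCubicEdgeSets σ) : ℝ)
      = ∑ m ∈ Ico 2 (2 * n + 1), ∑ σ : Equiv.Perm V with σ ≠ 1 ∧ #σ.support = m,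
          (#(fixedCubicEdgeSets σ) : ℝ) := by
        simp only [← sum_fiberwise_of_maps_to support_mem, filter_filter]
    _ ≤ ∑ m ∈ Ico 2 (2 * n + 1), pairingEstimate n * supportRatio n ^ m := by
        refine sum_le_sum fun m hm ↦
          (sum_card_fixedCubicEdgeSets_card_support_le hV (mem_Ico.1 hm).1).trans' ?_
        gcongr
        exact fun h ↦ h.2
    _ ≤ _ := by
        rw [← mul_sum]
        exact mul_le_mul_of_nonneg_left (geom_sum_Ico_le_of_lt_one ratio_nonneg h_ratio)
          (pairingEstimate_pos n).le

end NonidentityPermutations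

section BurnsideSum

open Finset

lemma fixedCubicEdgeSets_one {V : Type*} [Fintype V] [DecidableEq V] :
    fixedCubicEdgeSets (1 : Equiv.Perm V) = cubicEdgeSets V := by
  simp [fixedCubicEdgeSets]

lemma tendsto_sum_card_fixedCubicEdgeSets_ne_one :
    Tendsto (fun n ↦ (∑ σ : Equiv.Perm (Fin (2 * n)) with σ ≠ 1, (#(fixedCubicEdgeSets σ) : ℝ)) /
      pairingEstimate n) atTop (𝓝 0) := by
  have bound_tendsto :
      Tendsto (fun n ↦ supportRatio n ^ 2 / (1 - supportRatio n)) atTop (𝓝 0) := by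
    simpa [Pi.div_def] using
      (tendsto_supportRatio.pow 2).div (tendsto_supportRatio.const_sub 1) (by norm_num)
  refine squeeze_zero' (Eventually.of_forall fun n ↦ ?_) ?_ bound_tendsto
  · exact div_nonneg (by positivity) (pairingEstimate_pos n).le
  · filter_upwards [tendsto_supportRatio.eventually_lt_const one_pos] with n hn
    rw [div_le_iff₀' (pairingEstimate_pos n)]
    exact sum_card_fixedCubicEdgeSets_ne_one_le (Fintype.card_fin _) hn

lemma tendsto_sum_card_fixedCubicEdgeSets :
    Tendsto (fun n ↦ (∑ σ : Equiv.Perm (Fin (2 * n)), (#(fixedCubicEdgeSets σ) : ℝ)) /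
      pairingEstimate n) atTop (𝓝 (Real.exp (-2))) := by
  have h := tendsto_card_cubicEdgeSets_div_pairingEstimate.add
    tendsto_sum_card_fixedCubicEdgeSets_ne_one
  rw [add_zero] at h
  refine h.congr fun n ↦ ?_
  rw [← add_div, ← fixedCubicEdgeSets_one, filter_ne',
    add_sum_erase univ (fun σ ↦ (#(fixedCubicEdgeSets σ) : ℝ)) (mem_univ 1)]

end BurnsideSum

section CubicGraphs

open Finset

variable {V : Type*} [Fintype V] [DecidableEq V]

lemma edgeFinset_mem_cubicEdgeSets (G : SimpleGraph V) [DecidableRel G.Adj] :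
    G.edgeFinset ∈ cubicEdgeSets V ↔ ∀ v, Nat.card (G.neighborSet v) = 3 := by
  have edgeDegrees_eq (v : V) : edgeDegrees G.edgeFinset v = Nat.card (G.neighborSet v) := by
    rw [edgeDegrees_apply, ← G.incidenceFinset_eq_filter, G.card_incidenceFinset_eq_degree,
      ← G.card_neighborSet_eq_degree, Nat.card_eq_fintype_card]
  have subset_nonloops : G.edgeFinset ⊆ nonloops V := fun e he ↦
    mem_nonloops.2 (G.not_isDiag_of_mem_edgeFinset he)
  simp only [cubicEdgeSets, mem_edgeSetsWithDegrees, subset_nonloops, true_and, Finsupp.ext_iff,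
    edgeDegrees_eq]
  rfl

lemma edgeFinset_mem_fixedCubicEdgeSets (G : SimpleGraph V) [DecidableRel G.Adj]
    {σ : Equiv.Perm V} :
    G.edgeFinset ∈ fixedCubicEdgeSets σ ↔
      (∀ v, Nat.card (G.neighborSet v) = 3) ∧ G.comap σ = G := by
  rw [fixedCubicEdgeSets, mem_filter, edgeFinset_mem_cubicEdgeSets, SimpleGraph.ext_iff]
  simp [Sym2.forall, funext_iff]

lemma exists_edgeFinset_eq {E : Finset (Sym2 V)} (hE : E ⊆ nonloops V) :
    ∃ (G : SimpleGraph V) (_ : DecidableRel G.Adj), G.edgeFinset = E := by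
  classical
  refine ⟨SimpleGraph.fromEdgeSet E, inferInstance, coe_injective ?_⟩
  rw [SimpleGraph.coe_edgeFinset, SimpleGraph.edgeSet_fromEdgeSet, sdiff_eq_left]
  exact Set.disjoint_left.2 fun e he ↦ mem_nonloops.1 (hE he)

lemma card_cubic_comap_eq (σ : Equiv.Perm V) :
    Nat.card {G : SimpleGraph V // (∀ v, Nat.card (G.neighborSet v) = 3) ∧ G.comap σ = G} =
      #(fixedCubicEdgeSets σ) := by
  classical
  rw [← Fintype.card_coe, ← Nat.card_eq_fintype_card]
  refine Nat.card_eq_of_bijective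
    (fun G ↦ ⟨G.1.edgeFinset, (edgeFinset_mem_fixedCubicEdgeSets G.1).2 G.2⟩) ⟨?_, ?_⟩
  · exact fun G H h ↦ Subtype.ext (SimpleGraph.edgeFinset_inj.1 (congrArg Subtype.val h))
  · rintro ⟨E, hE⟩
    obtain ⟨G, _, rfl⟩ :=
      exists_edgeFinset_eq (mem_edgeSetsWithDegrees.1 (mem_filter.1 hE).1).1
    exact ⟨⟨G, (edgeFinset_mem_fixedCubicEdgeSets G).1 hE⟩, Subtype.ext (by congr!)⟩

end CubicGraphs

section Burnside

open Finset

variable {N : ℕ}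

/-- Relabelling the vertices of cubic graphs; its orbits are the isomorphism classes. -/
instance cubicGraphAction :
    MulAction (Equiv.Perm (Fin N)) {G : SimpleGraph (Fin N) // IsCubicSimple G} where
  smul σ G := ⟨G.1.comap σ.symm, fun v ↦
    (Nat.card_congr ((SimpleGraph.Iso.comap σ.symm G.1).mapNeighborSet v)).trans (G.2 _)⟩
  one_smul _ := rfl
  mul_smul _ _ _ := rfl

lemma orbitRel_iff_simpleCubicIsoRel (G H : {G : SimpleGraph (Fin N) // IsCubicSimple G}) :
    SimpleCubicIsoRel N G H ↔ MulAction.orbitRel (Equiv.Perm (Fin N)) _ G H := by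
  rw [MulAction.orbitRel_apply, MulAction.mem_orbit_iff]
  constructor
  · rintro ⟨φ⟩
    refine ⟨φ.toEquiv.symm, Subtype.ext ?_⟩
    ext u v
    exact φ.map_adj_iff
  · rintro ⟨σ, rfl⟩
    exact ⟨SimpleGraph.Iso.comap σ.symm H.1⟩

lemma card_fixedBy_eq_card_fixedCubicEdgeSets (σ : Equiv.Perm (Fin N)) :
    Nat.card (MulAction.fixedBy {G : SimpleGraph (Fin N) // IsCubicSimple G} σ) =
      #(fixedCubicEdgeSets σ) := by
  rw [← card_cubic_comap_eq]
  refine Nat.card_congr ((Equiv.subtypeEquivRight fun G ↦ ?_).trans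
    (Equiv.subtypeSubtypeEquivSubtypeInter IsCubicSimple fun G ↦ G.comap σ = G))
  rw [MulAction.mem_fixedBy, smul_eq_iff_eq_inv_smul, eq_comm, Subtype.ext_iff]
  rfl

theorem Istar_mul_factorial (N : ℕ) :
    Istar N * N.factorial = ∑ σ : Equiv.Perm (Fin N), #(fixedCubicEdgeSets σ) := by
  classical
  let Cubic := {G : SimpleGraph (Fin N) // IsCubicSimple G}
  have := Fintype.ofFinite Cubic
  have := Fintype.ofFinite (MulAction.orbitRel.Quotient (Equiv.Perm (Fin N)) Cubic)
  have burnside :=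
    MulAction.sum_card_fixedBy_eq_card_orbits_mul_card_group (Equiv.Perm (Fin N)) Cubic
  have Istar_eq :
      Istar N = Fintype.card (MulAction.orbitRel.Quotient (Equiv.Perm (Fin N)) Cubic) := by
    rw [← Nat.card_eq_fintype_card]
    exact Nat.card_congr (Quot.congrRight orbitRel_iff_simpleCubicIsoRel)
  rw [Fintype.card_perm, Fintype.card_fin, ← Istar_eq] at burnside
  rw [← burnside]
  exact sum_congr rfl fun σ _ ↦ by
    rw [← card_fixedBy_eq_card_fixedCubicEdgeSets, Nat.card_eq_fintype_card]

end Burnside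

section Asymptotics

open Asymptotics Finset

lemma pairingEstimate_eq (n : ℕ) :
    pairingEstimate n = (6 * n).factorial / ((3 * n).factorial * 288 ^ n) := by
  rw [pairingEstimate, show 6 * n = 2 * (3 * n) by ring, factorial_two_mul_eq]
  push_cast
  rw [pow_mul, pow_mul, show (288 : ℝ) = 2 ^ 3 * 6 ^ 2 by norm_num, mul_pow]
  field_simp

lemma stirling_quotient_eq {x : ℝ} (hx : 0 < x) (n : ℕ) :
    √(2 * (6 * x) * π) * (6 * x / Real.exp 1) ^ (6 * n) /
        (√(2 * (3 * x) * π) * (3 * x / Real.exp 1) ^ (3 * n) * 288 ^ n *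
          (√(2 * (2 * x) * π) * (2 * x / Real.exp 1) ^ (2 * n))) =
      (√(π * (2 * x)))⁻¹ * (3 * (2 * x) / (4 * Real.exp 1)) ^ n := by
  have sqrt_eq : √(2 * (6 * x) * π) =
      (√(π * (2 * x)))⁻¹ * (√(2 * (3 * x) * π) * √(2 * (2 * x) * π)) := by
    rw [eq_inv_mul_iff_mul_eq₀ (by positivity), ← Real.sqrt_mul (by positivity),
      ← Real.sqrt_mul (by positivity)]
    ring_nf
  have pow_eq : (6 * x / Real.exp 1) ^ (6 * n) =
      (3 * x / Real.exp 1) ^ (3 * n) * 288 ^ n * (2 * x / Real.exp 1) ^ (2 * n) *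
        (3 * (2 * x) / (4 * Real.exp 1)) ^ n := by
    simp only [pow_mul, ← mul_pow]
    congr 1
    field_simp
    norm_num
  rw [div_eq_iff (by positivity), sqrt_eq, pow_eq]
  ring

lemma pairingEstimate_div_factorial_isEquivalent :
    (fun n : ℕ ↦ pairingEstimate n / (2 * n).factorial) ~[atTop]
      fun n ↦ (√(π * (2 * n)))⁻¹ * (3 * (2 * n) / (4 * Real.exp 1)) ^ n := by
  have stirling {c : ℕ} (hc : 0 < c) :
      (fun n : ℕ ↦ ((c * n).factorial : ℝ)) ~[atTop]
        fun n ↦ √(2 * (c * n : ℕ) * π) * ((c * n : ℕ) / Real.exp 1) ^ (c * n) :=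
    Stirling.factorial_isEquivalent_stirling.comp_tendsto (tendsto_id.const_mul_atTop' hc)
  have quotient := (stirling (c := 6) (by norm_num)).div
    (((stirling three_pos).mul (IsEquivalent.refl (u := fun n : ℕ ↦ (288 : ℝ) ^ n))).mul
      (stirling two_pos))
  refine (quotient.congr_left (Eventually.of_forall fun n ↦ ?_)).congr_right ?_
  · simp only [Pi.div_apply, Pi.mul_apply, pairingEstimate_eq, div_div]
  · filter_upwards [eventually_gt_atTop 0] with n hn
    rw [← stirling_quotient_eq (Nat.cast_pos.2 hn)]
    simp only [Pi.div_apply, Pi.mul_apply]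
    push_cast
    rfl

theorem Istar_two_mul_isEquivalent :
    (fun n : ℕ ↦ (Istar (2 * n) : ℝ)) ~[atTop]
      fun n ↦ (Real.exp 2 * √(π * (2 * n)))⁻¹ * (3 * (2 * n) / (4 * Real.exp 1)) ^ n := by
  have sum_isEquivalent := (isEquivalent_const_iff_tendsto (Real.exp_ne_zero (-2))).2
    tendsto_sum_card_fixedCubicEdgeSets
  have product := sum_isEquivalent.mul pairingEstimate_div_factorial_isEquivalent
  refine (product.congr_left (Eventually.of_forall fun n ↦ ?_)).congr_right
    (Eventually.of_forall fun n ↦ ?_)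
  · have estimate_ne_zero := (pairingEstimate_pos n).ne'
    have burnside : (Istar (2 * n) : ℝ) * (2 * n).factorial =
        ∑ σ : Equiv.Perm (Fin (2 * n)), (#(fixedCubicEdgeSets σ) : ℝ) :=
      mod_cast Istar_mul_factorial (2 * n)
    simp only [Pi.mul_apply, ← burnside]
    field_simp
  · simp only [Pi.mul_apply, Function.const_apply]
    rw [Real.exp_neg, mul_inv]
    ring

end Asymptotics

lemma map_two_mul_atTop : map (2 * ·) (atTop : Filter ℕ) = atTop ⊓ 𝓟 {N | Even N} := by
  rw [← range_two_mul ℕ, ← map_comap, comap_embedding_atTop (by simp) fun N ↦ ⟨N, by omega⟩]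

/-- Theorem (Bender–Canfield, Bollobás, McKay–Wormald):
`I*_N ∼ (1/(e²√(πN))) (3N/(4e))^{N/2}` as `N → ∞` through even `N`. -/
theorem simple_cubic_graph_count_asymptotics :
    Tendsto
      (fun N : ℕ => (Istar N : ℝ) * Real.exp 2 * Real.sqrt (π * N) *
        ((4 * Real.exp 1) / (3 * (N : ℝ))) ^ ((N : ℝ) / 2))
      (atTop ⊓ 𝓟 {N : ℕ | Even N}) (𝓝 1) := by
  rw [← map_two_mul_atTop, tendsto_map'_iff]
  have bound_ne_zero : ∀ᶠ n : ℕ in atTop,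
      (Real.exp 2 * √(π * (2 * n)))⁻¹ * (3 * (2 * n) / (4 * Real.exp 1)) ^ n ≠ 0 := by
    filter_upwards [eventually_gt_atTop 0] with n hn
    positivity
  refine ((Asymptotics.isEquivalent_iff_tendsto_one bound_ne_zero).1
    Istar_two_mul_isEquivalent).congr fun n ↦ ?_
  have half_eq : ((2 * n : ℕ) : ℝ) / 2 = n := by push_cast; ring
  simp only [Function.comp_apply, Pi.div_apply, half_eq, Real.rpow_natCast]
  rw [← inv_div (3 * _), inv_pow]
  push_cast
  rw [div_eq_mul_inv, mul_inv, inv_inv]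
  ring
end

section
/- The probability that the random cubic multigraph produced by the configuration model admits a nontrivial automorphism tends to 0: as N → ∞ through even values of N, the proportion of ω ∈ Ω_N for which there exists a permutation σ ≠ id of Fin N satisfying mult_ω(σu, σv) = mult_ω(u,v) for all u, v ∈ Fin N tends to 0. -/
open Filter Real Topology

/-- `Omega N`: the perfect matchings of the `3N` half-edges, i.e. fixed-point-free
involutions of `Fin (3N)`. -/
def Omega (N : ℕ) : Type := {ω : Equiv.Perm (Fin (3 * N)) // ∀ a, ω (ω a) = a ∧ ω a ≠ a}

instance (N : ℕ) : Fintype (Omega N) := by unfold Omega; exact Subtype.fintype _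

/-- The block (vertex) containing a half-edge: `B_v = {3v, 3v+1, 3v+2}`. -/
def blk {N : ℕ} (a : Fin (3 * N)) : Fin N := ⟨a.val / 3, by have := a.isLt; omega⟩

/-- The multiplicity of the pair of blocks `{u, v}` in the multigraph `Γ(ω)`:
for `u ≠ v` the number of half-edges in `B_u` matched into `B_v`; for `u = v`
the number of matched pairs contained in `B_u` (loops at `u`). -/
noncomputable def mult {N : ℕ} (ω : Omega N) (u v : Fin N) : ℕ :=
  if u = v then Nat.card {a : Fin (3 * N) // blk a = u ∧ blk (ω.val a) = u} / 2
  else Nat.card {a : Fin (3 * N) // blk a = u ∧ blk (ω.val a) = v}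

/-!
An automorphism of the multigraph lifts to a permutation `ρ` of the half-edges commuting with the
matching `ω`, and some power of it has prime order `p`, with `c` nontrivial cycles on the vertices.
For a fixed lift `ρ`, expose `ω` one cycle of `ρ` at a time: as soon as the partner of one half-edge
of a cycle is known, `ω` is essentially determined on the whole cycle, while prescribing `k` pairs
has probability `O(1 / N) ^ k`. So a permutation moving `s = p * c` vertices of degree `d` is an
automorphism with probability about `(√s / √N ^ p) ^ (d * c)`, up to a factor exponential in `s`.
There are at most `(3 * N ^ p / s) ^ c` permutations of this type, and for `d ≥ 3` the union bound
over them leaves `O(1 / √√N) ^ s`, which is summable over all `p` and `c`.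
-/

open Finset Equiv

theorem pow_mul_factorial_le_descFactorial_mul_pow {n k : ℕ} (h : k ≤ n) :
    n ^ k * k.factorial ≤ n.descFactorial k * k ^ k := by
  calc n ^ k * k.factorial = ∏ i ∈ range k, n * (k - i) := by
        rw [← Nat.descFactorial_self, Nat.descFactorial_eq_prod_range, prod_mul_distrib,
          prod_const, card_range]
    _ ≤ ∏ i ∈ range k, (n - i) * k := prod_le_prod' fun i _ => by
        rw [Nat.mul_sub, Nat.sub_mul, mul_comm i k]
        exact Nat.sub_le_sub_left (by gcongr) _
    _ = n.descFactorial k * k ^ k := by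
        rw [Nat.descFactorial_eq_prod_range, prod_mul_distrib, prod_const, card_range]

theorem pow_self_le_three_pow_mul_factorial (k : ℕ) : (k : ℝ) ^ k ≤ 3 ^ k * k.factorial := by
  rw [← div_le_iff₀ (by positivity)]
  calc (k : ℝ) ^ k / k.factorial ≤ Real.exp k :=
        Real.pow_div_factorial_le_exp k (Nat.cast_nonneg k) k
    _ = Real.exp 1 ^ k := by rw [← Real.exp_nat_mul, mul_one]
    _ ≤ 3 ^ k := by gcongr; exact Real.exp_one_lt_three.le

theorem pow_le_three_pow_mul_descFactorial {n k : ℕ} (h : k ≤ n) :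
    (n : ℝ) ^ k ≤ 3 ^ k * n.descFactorial k := by
  have hfac : (0 : ℝ) < k.factorial := by positivity
  refine le_of_mul_le_mul_right ?_ hfac
  calc (n : ℝ) ^ k * k.factorial ≤ n.descFactorial k * k ^ k := by
        exact_mod_cast pow_mul_factorial_le_descFactorial_mul_pow h
    _ ≤ n.descFactorial k * (3 ^ k * k.factorial) := by
        gcongr
        exact pow_self_le_three_pow_mul_factorial k
    _ = 3 ^ k * n.descFactorial k * k.factorial := by ring

/-- Perfect matchings of a type `α` of half-edges, encoded as fixed-point-free involutions. -/
def PerfectMatching (α : Type*) : Type _ :=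
  {ω : Perm α // ∀ a, ω (ω a) = a ∧ ω a ≠ a}

namespace PerfectMatching

section Basic

variable {α : Type*}

instance : FunLike (PerfectMatching α) α α where
  coe ω := ω.1
  coe_injective := fun _ _ h => Subtype.ext (Equiv.coe_fn_injective h)

noncomputable instance [Finite α] : Fintype (PerfectMatching α) :=
  @Fintype.ofFinite _ Subtype.finite

noncomputable instance : DecidableEq (PerfectMatching α) := Classical.decEq _

@[simp]
theorem apply_apply (ω : PerfectMatching α) (a : α) : ω (ω a) = a := (ω.2 a).1

@[simp]
theorem apply_ne (ω : PerfectMatching α) (a : α) : ω a ≠ a := (ω.2 a).2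

theorem injective (ω : PerfectMatching α) : Function.Injective ω := ω.1.injective

/-- The matching obtained from `ω` by relabelling the half-edges along `e`. -/
def congr {γ : Type*} (e : α ≃ γ) (ω : PerfectMatching α) : PerfectMatching γ :=
  ⟨e.permCongr ω.1, fun a => by
    have h := ω.2 (e.symm a)
    simp only [permCongr_apply, symm_apply_apply, h.1, apply_symm_apply, true_and]
    exact fun h' => h.2 (e.injective (by rw [h', apply_symm_apply]))⟩

@[simp]
theorem congr_apply {γ : Type*} (e : α ≃ γ) (ω : PerfectMatching α) (a : γ) :
    ω.congr e a = e (ω (e.symm a)) := rfl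

theorem congr_injective {γ : Type*} (e : α ≃ γ) :
    Function.Injective (congr e : PerfectMatching α → PerfectMatching γ) := fun ω ω' h =>
  DFunLike.ext _ _ fun a => by simpa using DFunLike.congr_fun h (e a)

/-- The matching induced on a set of half-edges closed under `ω`. -/
def restrict (ω : PerfectMatching α) (p : α → Prop) (hp : ∀ a, p (ω a) ↔ p a) :
    PerfectMatching {a // p a} :=
  ⟨Perm.subtypePerm ω.1 hp, fun a =>
    ⟨Subtype.ext (ω.apply_apply a), fun h => ω.apply_ne a (congrArg Subtype.val h)⟩⟩

end Basic

section Switching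

variable {α : Type*}

theorem card_insert_pair [DecidableEq α] (ω : PerfectMatching α) {D : Finset α}
    (hD : ∀ x ∈ D, ω x ∈ D) {a : α} (ha : a ∉ D) : #(insert a (insert (ω a) D)) = #D + 2 := by
  have hωa : ω a ∉ D := fun h => ha (by simpa using hD _ h)
  rw [card_insert_of_notMem (by simp [ha, (ω.apply_ne a).symm]), card_insert_of_notMem hωa]

@[elab_as_elim]
theorem induction_on_closed [DecidableEq α] (ω : PerfectMatching α) {P : Finset α → Prop}
    (empty : P ∅)
    (insert_pair : ∀ (D : Finset α) (a : α), (∀ x ∈ D, ω x ∈ D) → a ∉ D → P D →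
      P (insert a (insert (ω a) D)))
    (D : Finset α) (hD : ∀ x ∈ D, ω x ∈ D) : P D := by
  induction D using Finset.strongInduction with
  | H D ih =>
    obtain rfl | ⟨a, ha⟩ := D.eq_empty_or_nonempty
    · exact empty
    have hclosed : ∀ x ∈ (D.erase a).erase (ω a), ω x ∈ (D.erase a).erase (ω a) := by
      simp only [mem_erase]
      rintro x ⟨hxω, hxa, hx⟩
      exact ⟨fun h => hxa (ω.injective h), fun h => hxω (by rw [← h, apply_apply]), hD x hx⟩
    have hωa : ω a ∈ D.erase a := mem_erase.2 ⟨ω.apply_ne a, hD a ha⟩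
    have key := insert_pair _ a hclosed (by simp)
      (ih _ ((erase_ssubset hωa).trans (erase_ssubset ha)) hclosed)
    rwa [insert_erase hωa, insert_erase ha] at key

theorem even_card_of_closed (ω : PerfectMatching α) (D : Finset α) (hD : ∀ x ∈ D, ω x ∈ D) :
    Even #D := by
  classical
  refine ω.induction_on_closed (by simp) (fun D a hD ha ih => ?_) D hD
  rw [card_insert_pair ω hD ha]
  exact ih.add even_two

theorem even_card [Fintype α] (ω : PerfectMatching α) : Even (Fintype.card α) :=
  ω.even_card_of_closed univ (by simp)

variable [Fintype α] [DecidableEq α]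

/-- The event that the random matching agrees with `ω₀` on the half-edges in `D`. -/
noncomputable def agree (ω₀ : PerfectMatching α) (D : Finset α) : Finset (PerfectMatching α) :=
  {ω | ∀ a ∈ D, ω a = ω₀ a}

@[simp]
theorem mem_agree {ω₀ ω : PerfectMatching α} {D : Finset α} :
    ω ∈ agree ω₀ D ↔ ∀ a ∈ D, ω a = ω₀ a := by simp [agree]

/-- Relabelling a matching that pairs `a` with `ω₀ a` by the transposition `(ω₀ a, b)` re-pairs `a`
with `b`, and `b` may be any half-edge outside `D ∪ {a}`. -/
theorem mul_card_agree_insert_pair_le (ω₀ : PerfectMatching α) {D : Finset α}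
    (hD : ∀ x ∈ D, ω₀ x ∈ D) {a : α} (ha : a ∉ D) :
    (Fintype.card α - (#D + 1)) * #(agree ω₀ (insert a (insert (ω₀ a) D))) ≤ #(agree ω₀ D) := by
  have hωa : ω₀ a ∉ D := fun h => ha (by simpa using hD _ h)
  rw [← card_insert_of_notMem ha, ← card_compl, ← card_product]
  refine card_le_card_of_injOn (fun x => x.2.congr (swap (ω₀ a) x.1)) ?_ ?_
  · rintro ⟨b, ω⟩ h
    simp only [coe_product, Set.mem_prod, mem_coe, mem_compl, mem_insert, not_or, mem_agree,
      forall_eq_or_imp] at h ⊢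
    obtain ⟨⟨-, hb⟩, -, -, hω⟩ := h
    have hfix : ∀ x ∈ D, swap (ω₀ a) b x = x := fun x hx =>
      swap_apply_of_ne_of_ne (ne_of_mem_of_not_mem hx hωa) (ne_of_mem_of_not_mem hx hb)
    intro x hx
    rw [congr_apply, symm_swap, hfix x hx, hω x hx, hfix _ (hD x hx)]
  · have hval : ∀ x : α × PerfectMatching α,
        x ∈ (insert a D)ᶜ ×ˢ agree ω₀ (insert a (insert (ω₀ a) D)) →
        x.2.congr (swap (ω₀ a) x.1) a = x.1 := by
      rintro ⟨b, ω⟩ h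
      simp only [mem_product, mem_compl, mem_insert, not_or, mem_agree, forall_eq_or_imp] at h
      rw [congr_apply, symm_swap, swap_apply_of_ne_of_ne (ω₀.apply_ne a).symm (Ne.symm h.1.1),
        h.2.1, swap_apply_left]
    rintro x hx y hy hxy
    have hb : x.1 = y.1 := by
      rw [← hval x hx, ← hval y hy]
      exact DFunLike.congr_fun hxy a
    refine Prod.ext hb (congr_injective (swap (ω₀ a) x.1) (hxy.trans ?_))
    rw [hb]

theorem descFactorial_mul_card_agree_le (ω₀ : PerfectMatching α) (D : Finset α)
    (hD : ∀ x ∈ D, ω₀ x ∈ D) :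
    (Fintype.card α / 2).descFactorial (#D / 2) * #(agree ω₀ D) ≤
      Fintype.card (PerfectMatching α) := by
  refine ω₀.induction_on_closed (by simpa using card_le_univ _) (fun D a hD ha ih => ?_) D hD
  obtain ⟨e, he⟩ := ω₀.even_card_of_closed D hD
  obtain ⟨M, hM⟩ := ω₀.even_card
  have hroom : M - e ≤ Fintype.card α - (#D + 1) := by
    have := card_le_univ (insert a (insert (ω₀ a) D))
    rw [card_insert_pair ω₀ hD ha] at this
    omega
  calc (Fintype.card α / 2).descFactorial (#(insert a (insert (ω₀ a) D)) / 2) *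
        #(agree ω₀ (insert a (insert (ω₀ a) D)))
      = M.descFactorial e * ((M - e) * #(agree ω₀ (insert a (insert (ω₀ a) D)))) := by
        rw [card_insert_pair ω₀ hD ha, show Fintype.card α / 2 = M by omega,
          show (#D + 2) / 2 = e + 1 by omega, Nat.descFactorial_succ]
        ring
    _ ≤ M.descFactorial e * #(agree ω₀ D) := by
        gcongr
        exact (Nat.mul_le_mul_right _ hroom).trans (mul_card_agree_insert_pair_le ω₀ hD ha)
    _ ≤ Fintype.card (PerfectMatching α) := by
        rwa [show M = Fintype.card α / 2 by omega, show e = #D / 2 by omega]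

theorem dens_agree_le (ω₀ : PerfectMatching α) (D : Finset α) (hD : ∀ x ∈ D, ω₀ x ∈ D) :
    ((agree ω₀ D).dens : ℝ) ≤ √(6 / Fintype.card α) ^ #D := by
  obtain ⟨M, hM⟩ := ω₀.even_card
  obtain ⟨e, he⟩ := ω₀.even_card_of_closed D hD
  have heM : e ≤ M := by have := card_le_univ D; omega
  have hsq : √(6 / Fintype.card α) ^ #D = 3 ^ e / (M : ℝ) ^ e := by
    rw [he, ← two_mul, pow_mul, Real.sq_sqrt (by positivity), ← div_pow, hM]
    push_cast
    rw [← two_mul, show (6 : ℝ) = 2 * 3 by norm_num, mul_div_mul_left _ _ two_ne_zero]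
  have hM0 : (0 : ℝ) < (M : ℝ) ^ e := by
    obtain rfl | he0 := e.eq_zero_or_pos
    · simp
    · have : 0 < M := he0.trans_le heM
      positivity
  have hΩ : (0 : ℝ) < Fintype.card (PerfectMatching α) := by
    exact_mod_cast Fintype.card_pos_iff.2 ⟨ω₀⟩
  have hcount := descFactorial_mul_card_agree_le ω₀ D hD
  rw [show Fintype.card α / 2 = M by omega, show #D / 2 = e by omega] at hcount
  rw [nnratCast_dens, hsq, div_le_div_iff₀ hΩ hM0, mul_comm]
  calc (M : ℝ) ^ e * #(agree ω₀ D) ≤ 3 ^ e * M.descFactorial e * #(agree ω₀ D) := by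
        gcongr
        exact pow_le_three_pow_mul_descFactorial heM
    _ = 3 ^ e * (M.descFactorial e * #(agree ω₀ D) : ℕ) := by push_cast; ring
    _ ≤ 3 ^ e * Fintype.card (PerfectMatching α) := by gcongr

end Switching

section Automorphisms

variable {α V : Type*} [Fintype α]

theorem cycleType_eq_replicate [DecidableEq α] (ω : PerfectMatching α) :
    ω.1.cycleType = Multiset.replicate (Multiset.card ω.1.cycleType) 2 :=
  Perm.cycleType_of_pow_prime_eq_one (Perm.ext fun a => (ω.2 a).1)

theorem two_mul_card_cycleType [DecidableEq α] (ω : PerfectMatching α) :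
    2 * Multiset.card ω.1.cycleType = Fintype.card α := by
  have hsupp : ω.1.support = univ := by
    ext a
    exact iff_of_true (Perm.mem_support.2 (ω.2 a).2) (mem_univ a)
  rw [← card_univ, ← hsupp, ← Perm.sum_cycleType, ω.cycleType_eq_replicate]
  simp [mul_comm]

theorem exists_equiv_conj {γ : Type*} [Fintype γ] (ω : PerfectMatching α)
    (ω' : PerfectMatching γ) (h : Fintype.card α = Fintype.card γ) :
    ∃ e : α ≃ γ, ∀ a, e (ω a) = ω' (e a) := by
  classical
  let e₀ := Fintype.equivOfCardEq h
  have htype : (ω.congr e₀).1.cycleType = ω'.1.cycleType := by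
    have h₁ := (ω.congr e₀).two_mul_card_cycleType
    have h₂ := ω'.two_mul_card_cycleType
    rw [cycleType_eq_replicate, cycleType_eq_replicate ω']
    congr 1
    omega
  obtain ⟨τ, hτ⟩ := isConj_iff.1 (Perm.isConj_iff_cycleType_eq.2 htype)
  refine ⟨e₀.trans τ, fun a => ?_⟩
  have : τ (ω.congr e₀ (e₀ a)) = ω' (τ (e₀ a)) := by
    change τ ((ω.congr e₀).1 (e₀ a)) = ω'.1 (τ (e₀ a))
    rw [← hτ]
    simp
  simpa using this

variable [DecidableEq V]

/-- The half-edges at the vertex `u` matched to half-edges at the vertex `v`, where `β a` is the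
vertex carrying the half-edge `a`. -/
def darts (β : α → V) (ω : PerfectMatching α) (u v : V) : Finset α :=
  {a | β a = u ∧ β (ω a) = v}

@[simp]
theorem mem_darts {β : α → V} {ω : PerfectMatching α} {u v : V} {a : α} :
    a ∈ darts β ω u v ↔ β a = u ∧ β (ω a) = v := by simp [darts]

/-- Automorphisms of the multigraph with vertices `V` and edges `{β a, β (ω a)}`, in terms of the
numbers of half-edges joining two vertices; a loop contributes two half-edges. -/
def IsAutomorphism (β : α → V) (ω : PerfectMatching α) (σ : Perm V) : Prop :=
  ∀ u v, #(darts β ω (σ u) (σ v)) = #(darts β ω u v)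

/-- The event that some permutation in `S` is an automorphism of the random multigraph. -/
noncomputable def withAutomorphism (β : α → V) (S : Set (Perm V)) : Finset (PerfectMatching α) :=
  open scoped Classical in {ω | ∃ σ ∈ S, IsAutomorphism β ω σ}

theorem mem_withAutomorphism {β : α → V} {S : Set (Perm V)} {ω : PerfectMatching α} :
    ω ∈ withAutomorphism β S ↔ ∃ σ ∈ S, IsAutomorphism β ω σ := by
  simp [withAutomorphism]

theorem dens_withAutomorphism_le_card_mul {β : α → V} {S : Finset (Perm V)} {b : ℝ}
    (h : ∀ σ ∈ S, ((withAutomorphism β {σ}).dens : ℝ) ≤ b) :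
    ((withAutomorphism β (S : Set (Perm V))).dens : ℝ) ≤ #S * b := by
  have hcover : withAutomorphism β (S : Set (Perm V)) ⊆
      S.biUnion fun σ => withAutomorphism β {σ} := by
    intro ω hω
    obtain ⟨σ, hσ, hω⟩ := mem_withAutomorphism.1 hω
    exact mem_biUnion.2 ⟨σ, hσ, mem_withAutomorphism.2 ⟨σ, rfl, hω⟩⟩
  calc ((withAutomorphism β (S : Set (Perm V))).dens : ℝ)
      ≤ ∑ σ ∈ S, ((withAutomorphism β {σ}).dens : ℝ) := by
        exact_mod_cast (dens_le_dens hcover).trans dens_biUnion_le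
    _ ≤ #S * b := by simpa using sum_le_card_nsmul S _ b h

theorem IsAutomorphism.pow {β : α → V} {ω : PerfectMatching α} {σ : Perm V}
    (h : IsAutomorphism β ω σ) (k : ℕ) : IsAutomorphism β ω (σ ^ k) := by
  induction k with
  | zero => simp [IsAutomorphism]
  | succ k ih => exact fun u v => by rw [pow_succ', Perm.mul_apply, Perm.mul_apply, h, ih]

theorem exists_mapsTo_darts {β : α → V} {ω : PerfectMatching α} {σ : Perm V}
    (h : IsAutomorphism β ω σ) (u v : V) :
    ∃ f : α → α, (∀ a ∈ darts β ω u v, f a ∈ darts β ω (σ u) (σ v)) ∧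
      Set.InjOn f (darts β ω u v) ∧ (u = v → ∀ a ∈ darts β ω u v, f (ω a) = ω (f a)) := by
  classical
  suffices ∃ e : {a // a ∈ darts β ω u v} ≃ {a // a ∈ darts β ω (σ u) (σ v)},
      u = v → ∀ (a : α) (ha : a ∈ darts β ω u v) (hωa : ω a ∈ darts β ω u v),
        (e ⟨ω a, hωa⟩ : α) = ω (e ⟨a, ha⟩) by
    obtain ⟨e, he⟩ := this
    refine ⟨fun a => if ha : a ∈ darts β ω u v then e ⟨a, ha⟩ else a, fun a ha => ?_,
      fun a ha b hb hab => ?_, ?_⟩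
    · simp only [dif_pos ha]
      exact (e ⟨a, ha⟩).2
    · rw [mem_coe] at ha hb
      simp only [dif_pos ha, dif_pos hb, Subtype.coe_inj, e.apply_eq_iff_eq] at hab
      exact congrArg Subtype.val hab
    · rintro rfl a ha
      have hωa : ω a ∈ darts β ω u u := by simpa [and_comm] using ha
      simp only [dif_pos ha, dif_pos hωa, he rfl a ha hωa]
  obtain rfl | hne := eq_or_ne u v
  · have hclosed : ∀ w a, ω a ∈ darts β ω w w ↔ a ∈ darts β ω w w := by simp [and_comm]
    obtain ⟨e, he⟩ := (ω.restrict _ (hclosed u)).exists_equiv_conj (ω.restrict _ (hclosed (σ u)))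
      (by simpa only [Fintype.card_coe] using (h u u).symm)
    exact ⟨e, fun _ a ha _ => congrArg Subtype.val (he ⟨a, ha⟩)⟩
  · exact ⟨equivOfCardEq (h u v).symm, fun huv => absurd huv hne⟩

theorem IsAutomorphism.exists_lift {β : α → V} {ω : PerfectMatching α} {σ : Perm V}
    (h : IsAutomorphism β ω σ) :
    ∃ ρ : Perm α, (∀ a, β (ρ a) = σ (β a)) ∧ ∀ a, ω (ρ a) = ρ (ω a) := by
  classical
  choose f hmaps hinj hloop using exists_mapsTo_darts h
  let r : V → V → Prop := WellOrderingRel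
  -- `F` commutes with `ω`: it transports an edge through its half-edge at the smaller vertex.
  let F : α → α := fun a =>
    if r (β (ω a)) (β a) then ω (f (β (ω a)) (β a) (ω a)) else f (β a) (β (ω a)) a
  have hmem : ∀ a, β (F a) = σ (β a) ∧ β (ω (F a)) = σ (β (ω a)) := by
    intro a
    by_cases hr : r (β (ω a)) (β a)
    · simpa [F, hr, and_comm] using hmaps (β (ω a)) (β a) (ω a) (by simp)
    · simpa [F, hr] using hmaps (β a) (β (ω a)) a (by simp)
  have hF : Function.Injective F := by
    intro a b hab
    have hβ : β a = β b := σ.injective (by rw [← (hmem a).1, hab, (hmem b).1])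
    have hβω : β (ω a) = β (ω b) := σ.injective (by rw [← (hmem a).2, hab, (hmem b).2])
    by_cases hr : r (β (ω b)) (β b)
    · simp only [F, hβ, hβω, if_pos hr] at hab
      exact ω.injective (hinj _ _ (by simp [hβ, hβω]) (by simp) (ω.injective hab))
    · simp only [F, hβ, hβω, if_neg hr] at hab
      exact hinj _ _ (by simp [hβ, hβω]) (by simp) hab
  refine ⟨Equiv.ofBijective F (Finite.injective_iff_bijective.1 hF), fun a => (hmem a).1,
    fun a => ?_⟩
  change ω (F a) = F (ω a)
  obtain hr | heq | hr := trichotomous_of r (β a) (β (ω a))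
  · simp [F, hr, asymm_of r hr]
  · have hirr : ¬ r (β a) (β a) := irrefl_of r (β a)
    simpa [F, ← heq, hirr] using (hloop (β a) (β a) rfl a (by simp [← heq])).symm
  · simp [F, hr, asymm_of r hr]

end Automorphisms

theorem dens_le_of_card_mul_dens_fiber_le {Ω κ : Type*} [Fintype Ω] [DecidableEq κ]
    {X : Finset Ω} {f : Ω → κ} {K : Finset κ} (hf : ∀ x ∈ X, f x ∈ K) {b : ℝ}
    (hb : 0 ≤ b) (hX : ∀ x ∈ X, #K * (({y ∈ X | f y = f x} : Finset Ω).dens : ℝ) ≤ b) :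
    (X.dens : ℝ) ≤ b := by
  classical
  obtain rfl | ⟨x, hx⟩ := X.eq_empty_or_nonempty
  · simpa using hb
  have hK : (0 : ℝ) < #K := by exact_mod_cast card_pos.2 ⟨f x, hf x hx⟩
  have hcover : X ⊆ K.biUnion fun k => {y ∈ X | f y = k} := fun x hx =>
    mem_biUnion.2 ⟨f x, hf x hx, mem_filter.2 ⟨hx, rfl⟩⟩
  refine le_of_mul_le_mul_left ?_ hK
  calc #K * (X.dens : ℝ) ≤ #K * ∑ k ∈ K, (({y ∈ X | f y = k} : Finset Ω).dens : ℝ) := by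
        gcongr
        exact_mod_cast (dens_le_dens hcover).trans dens_biUnion_le
    _ = ∑ k ∈ K, #K * (({y ∈ X | f y = k} : Finset Ω).dens : ℝ) := mul_sum ..
    _ ≤ ∑ _k ∈ K, b := by
        refine sum_le_sum fun k _ => ?_
        obtain hempty | ⟨x, hx⟩ := ({y ∈ X | f y = k} : Finset Ω).eq_empty_or_nonempty
        · simpa [hempty] using hb
        · obtain ⟨hxX, rfl⟩ := mem_filter.1 hx
          exact hX x hxX
    _ = #K * b := by rw [sum_const, nsmul_eq_mul]

theorem pow_apply_mem_iff_of_stable {α : Type*} {ρ : Perm α} {D : Finset α}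
    (hD : ∀ x, ρ x ∈ D ↔ x ∈ D) (k : ℕ) (x : α) :
    (ρ ^ k) x ∈ D ↔ x ∈ D := by
  induction k with
  | zero => rfl
  | succ k ih => rw [pow_succ', Perm.mul_apply, hD, ih]

theorem mem_cycleType_iff {α : Type*} [Fintype α] [DecidableEq α] {ρ : Perm α} {L : ℕ} :
    L ∈ ρ.cycleType ↔ ∃ a ∈ ρ.support, #(ρ.cycleOf a).support = L := by
  rw [Perm.cycleType_def, Multiset.mem_map]
  constructor
  · rintro ⟨c, hc, rfl⟩
    obtain ⟨a, ha⟩ := (Perm.mem_cycleFactorsFinset_iff.1 hc).1.nonempty_support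
    obtain rfl := Perm.cycle_is_cycleOf ha hc
    exact ⟨a, (Perm.mem_support_cycleOf_iff.1 ha).2, rfl⟩
  · rintro ⟨a, ha, rfl⟩
    exact ⟨ρ.cycleOf a, Perm.cycleOf_mem_cycleFactorsFinset_iff.2 ha, rfl⟩

section Exploration

variable {α V : Type*} [Fintype α] [DecidableEq α] {β : α → V} {ρ : Perm α}
  {ω ω₀ : PerfectMatching α} {D : Finset α} {a : α}

theorem exists_pow_of_mem_support_cycleOf {c : α} (hc : c ∈ (ρ.cycleOf a).support) :
    ∃ k : ℕ, (ρ ^ k) a = c :=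
  (Perm.mem_support_cycleOf_iff.1 hc).1.exists_nat_pow_eq

theorem support_cycleOf_stable (ha : a ∈ ρ.support) (x : α) :
    ρ x ∈ (ρ.cycleOf a).support ↔ x ∈ (ρ.cycleOf a).support := by
  simp only [Perm.mem_support_cycleOf_iff' (Perm.mem_support.1 ha), Perm.sameCycle_apply_right]

theorem support_cycleOf_subset (ρ : Perm α) (a : α) : (ρ.cycleOf a).support ⊆ ρ.support :=
  Perm.support_cycleOf_le ρ a

/-- The event that the random matching could come from a multigraph automorphism lifted by `ρ`:
`ω` commutes with `ρ` as long as it stays in the support of `ρ`, and when it leaves the support from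
`a`, it does so from `ρ a` as well, reaching the same vertex. -/
noncomputable def compatible (β : α → V) (ρ : Perm α) : Finset (PerfectMatching α) :=
  open scoped Classical in
  {ω | ∀ a ∈ ρ.support, (ω a ∈ ρ.support → ω (ρ a) = ρ (ω a)) ∧
    (ω a ∉ ρ.support → ω (ρ a) ∉ ρ.support ∧ β (ω (ρ a)) = β (ω a))}

theorem mem_compatible : ω ∈ compatible β ρ ↔ ∀ a ∈ ρ.support,
    (ω a ∈ ρ.support → ω (ρ a) = ρ (ω a)) ∧
      (ω a ∉ ρ.support → ω (ρ a) ∉ ρ.support ∧ β (ω (ρ a)) = β (ω a)) := by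
  simp [compatible]

theorem apply_pow_of_mem_support (hω : ω ∈ compatible β ρ) (ha : a ∈ ρ.support)
    (hωa : ω a ∈ ρ.support) (k : ℕ) : ω ((ρ ^ k) a) = (ρ ^ k) (ω a) := by
  induction k with
  | zero => rfl
  | succ k ih =>
    have hk : (ρ ^ k) a ∈ ρ.support := Perm.pow_apply_mem_support.2 ha
    have hωk : ω ((ρ ^ k) a) ∈ ρ.support := ih ▸ Perm.pow_apply_mem_support.2 hωa
    rw [pow_succ', Perm.mul_apply, Perm.mul_apply, (mem_compatible.1 hω _ hk).1 hωk, ih]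

theorem apply_of_mem_support_cycleOf (hω : ω ∈ compatible β ρ) (ha : a ∈ ρ.support)
    (hωa : ω a ∉ ρ.support) {c : α} (hc : c ∈ (ρ.cycleOf a).support) :
    ω c ∉ ρ.support ∧ β (ω c) = β (ω a) := by
  obtain ⟨k, rfl⟩ := exists_pow_of_mem_support_cycleOf hc
  clear hc
  induction k with
  | zero => exact ⟨hωa, rfl⟩
  | succ k ih =>
    have hstep := (mem_compatible.1 hω _ (Perm.pow_apply_mem_support.2 ha)).2 ih.1
    rw [pow_succ', Perm.mul_apply]
    exact ⟨hstep.1, hstep.2.trans ih.2⟩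

theorem image_support_cycleOf (hω : ω ∈ compatible β ρ) (ha : a ∈ ρ.support)
    (hωa : ω a ∈ ρ.support) : (ρ.cycleOf a).support.image ω = (ρ.cycleOf (ω a)).support := by
  have hpow : ∀ {b : α}, b ∈ ρ.support → ∀ c, c ∈ (ρ.cycleOf b).support ↔ ∃ k : ℕ, (ρ ^ k) b = c :=
    fun hb c => ⟨exists_pow_of_mem_support_cycleOf, fun ⟨k, hk⟩ => hk ▸
      (pow_apply_mem_iff_of_stable (support_cycleOf_stable hb) k _).2
        ((Perm.mem_support_cycleOf_iff.2 ⟨.refl _ _, hb⟩))⟩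
  ext c
  simp only [mem_image, hpow ha, hpow hωa]
  constructor
  · rintro ⟨_, ⟨k, rfl⟩, rfl⟩
    exact ⟨k, (apply_pow_of_mem_support hω ha hωa k).symm⟩
  · rintro ⟨k, rfl⟩
    exact ⟨_, ⟨k, rfl⟩, apply_pow_of_mem_support hω ha hωa k⟩

/-- The half-edges whose partner under `ω` is known once `ω` has been exposed on the cycle of `ρ`
through `a`. -/
def revealed (ρ : Perm α) (a : α) (ω : PerfectMatching α) : Finset α :=
  (ρ.cycleOf a).support ∪ (ρ.cycleOf a).support.image ω

theorem revealed_closed : ∀ x ∈ revealed ρ a ω, ω x ∈ revealed ρ a ω := by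
  simp only [revealed, mem_union, mem_image]
  rintro x (hx | ⟨c, hc, rfl⟩)
  · exact .inr ⟨x, hx, rfl⟩
  · exact .inl (by rwa [apply_apply])

theorem revealed_stable (hω : ω ∈ compatible β ρ) (ha : a ∈ ρ.support) (x : α) :
    ρ x ∈ revealed ρ a ω ↔ x ∈ revealed ρ a ω := by
  simp only [revealed, mem_union, support_cycleOf_stable ha x]
  by_cases hωa : ω a ∈ ρ.support
  · rw [image_support_cycleOf hω ha hωa, support_cycleOf_stable hωa]
  · have hout : ∀ y ∈ (ρ.cycleOf a).support.image ω, y ∉ ρ.support := by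
      rintro _ hy
      obtain ⟨c, hc, rfl⟩ := mem_image.1 hy
      exact (apply_of_mem_support_cycleOf hω ha hωa hc).1
    by_cases hx : x ∈ ρ.support
    · simp only [iff_false_intro (mt (hout x) (not_not.2 hx)),
        iff_false_intro (mt (hout (ρ x)) (not_not.2 (Perm.apply_mem_support.2 hx)))]
    · rw [Perm.notMem_support.1 hx]

theorem eqOn_support_cycleOf {ω' : PerfectMatching α} (hω : ω ∈ compatible β ρ)
    (hω' : ω' ∈ compatible β ρ) (ha : a ∈ ρ.support) (hωa : ω a ∈ ρ.support) (h : ω a = ω' a) :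
    ∀ c ∈ (ρ.cycleOf a).support, ω c = ω' c := by
  intro c hc
  obtain ⟨k, rfl⟩ := exists_pow_of_mem_support_cycleOf hc
  rw [apply_pow_of_mem_support hω ha hωa, apply_pow_of_mem_support hω' ha (h ▸ hωa), h]

theorem revealed_of_apply_mem_cycle (hω : ω ∈ compatible β ρ) (ha : a ∈ ρ.support)
    (hωa : ω a ∈ (ρ.cycleOf a).support) : revealed ρ a ω = (ρ.cycleOf a).support := by
  rw [revealed, image_support_cycleOf hω ha (support_cycleOf_subset ρ a hωa),
    (Perm.mem_support_cycleOf_iff.1 hωa).1.cycleOf_eq, union_self]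

theorem card_revealed_of_apply_notMem_cycle (hω : ω ∈ compatible β ρ) (ha : a ∈ ρ.support)
    (hωa : ω a ∉ (ρ.cycleOf a).support) : #(revealed ρ a ω) = 2 * #(ρ.cycleOf a).support := by
  have hdisj : Disjoint (ρ.cycleOf a).support ((ρ.cycleOf a).support.image ω) := by
    rw [Finset.disjoint_left]
    intro x hx hxim
    by_cases hsupp : ω a ∈ ρ.support
    · rw [image_support_cycleOf hω ha hsupp] at hxim
      have hsame := (Perm.mem_support_cycleOf_iff.1 hxim).1.trans
        (Perm.mem_support_cycleOf_iff.1 hx).1.symm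
      exact hωa (Perm.mem_support_cycleOf_iff.2 ⟨hsame.symm, ha⟩)
    · obtain ⟨c, hc, rfl⟩ := mem_image.1 hxim
      exact (apply_of_mem_support_cycleOf hω ha hsupp hc).1 (support_cycleOf_subset ρ a hx)
  rw [revealed, card_union_of_disjoint hdisj, card_image_of_injective _ ω.injective, two_mul]

theorem support_inter_revealed_of_apply_mem_support (hω : ω ∈ compatible β ρ) (ha : a ∈ ρ.support)
    (hωa : ω a ∈ ρ.support) : ρ.support ∩ revealed ρ a ω = revealed ρ a ω := by
  rw [inter_eq_right, revealed, image_support_cycleOf hω ha hωa]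
  exact union_subset (support_cycleOf_subset ρ a) (support_cycleOf_subset ρ (ω a))

theorem support_inter_revealed_of_apply_notMem_support (hω : ω ∈ compatible β ρ)
    (ha : a ∈ ρ.support) (hωa : ω a ∉ ρ.support) :
    ρ.support ∩ revealed ρ a ω = (ρ.cycleOf a).support := by
  rw [revealed, inter_union_distrib_left, inter_eq_right.2 (support_cycleOf_subset ρ a),
    union_eq_left]
  intro x hx
  obtain ⟨hx, hxim⟩ := mem_inter.1 hx
  obtain ⟨c, hc, rfl⟩ := mem_image.1 hxim
  exact absurd hx (apply_of_mem_support_cycleOf hω ha hωa hc).1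

theorem disjoint_revealed (hclosed : ∀ x ∈ D, ω x ∈ D) (hstable : ∀ x, ρ x ∈ D ↔ x ∈ D)
    (haD : a ∉ D) : Disjoint D (revealed ρ a ω) := by
  have hcycle : ∀ c ∈ (ρ.cycleOf a).support, c ∉ D := by
    intro c hc
    obtain ⟨k, rfl⟩ := exists_pow_of_mem_support_cycleOf hc
    rwa [pow_apply_mem_iff_of_stable hstable]
  rw [disjoint_right]
  simp only [revealed, mem_union, mem_image]
  rintro x (hx | ⟨c, hc, rfl⟩) hD
  · exact hcycle x hx hD
  · exact hcycle c hc (by simpa using hclosed _ hD)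

/-- The bound on the probability of `agree ω₀ D ∩ compatible β ρ`: a factor `q` for every half-edge
already exposed and a factor `z` for every half-edge of the support of `ρ` yet to be exposed. -/
noncomputable def explorationBound (q z : ℝ) (ρ : Perm α) (D : Finset α) : ℝ :=
  q ^ #D * z ^ #(ρ.support \ D)

theorem mul_explorationBound_union_le {q z k : ℝ} (hq : 0 ≤ q) (hz : 0 ≤ z) {E : Finset α}
    (hDE : Disjoint D E) (hk : k * q ^ #E ≤ 1 / 3 * z ^ #(ρ.support ∩ E)) :
    k * explorationBound q z ρ (D ∪ E) ≤ 1 / 3 * explorationBound q z ρ D := by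
  have hcard : #(ρ.support \ D) = #(ρ.support ∩ E) + #(ρ.support \ (D ∪ E)) := by
    rw [← card_union_of_disjoint <| Finset.disjoint_left.2 fun x h₁ h₂ =>
      (mem_sdiff.1 h₂).2 (mem_union_right D (mem_inter.1 h₁).2)]
    congr 1
    ext x
    have hx : x ∈ D → x ∉ E := fun hx => Finset.disjoint_left.1 hDE hx
    simp only [Finset.mem_sdiff, mem_union, mem_inter]
    tauto
  calc k * explorationBound q z ρ (D ∪ E)
      = k * q ^ #E * (q ^ #D * z ^ #(ρ.support \ (D ∪ E))) := by
        rw [explorationBound, card_union_of_disjoint hDE, pow_add]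
        ring
    _ ≤ 1 / 3 * z ^ #(ρ.support ∩ E) * (q ^ #D * z ^ #(ρ.support \ (D ∪ E))) := by gcongr
    _ = 1 / 3 * explorationBound q z ρ D := by
        rw [explorationBound, hcard, pow_add]
        ring

/-- A stage of the exploration of a matching in `compatible β ρ`: it is known to agree with `ω₀` on
`D`, the cycle of `ρ` through `a` is to be exposed next, and the exploration bound holds after
that. -/
structure ExplorationStep (β : α → V) (ρ : Perm α) (q z : ℝ) (ω₀ : PerfectMatching α)
    (D : Finset α) (a : α) : Prop where
  q_nonneg : 0 ≤ q
  z_nonneg : 0 ≤ z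
  closed : ∀ x ∈ D, ω₀ x ∈ D
  stable : ∀ x, ρ x ∈ D ↔ x ∈ D
  mem_support : a ∈ ρ.support
  notMem : a ∉ D
  dens_le : ∀ ω ∈ agree ω₀ D ∩ compatible β ρ,
    ((agree ω (D ∪ revealed ρ a ω) ∩ compatible β ρ).dens : ℝ) ≤
      explorationBound q z ρ (D ∪ revealed ρ a ω)

theorem ExplorationStep.dens_le_of_key {q z : ℝ} (h : ExplorationStep β ρ q z ω₀ D a)
    {κ : Type*} (p : PerfectMatching α → Prop) [DecidablePred p]
    (f : PerfectMatching α → κ) (K : Finset κ)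
    (hfK : ∀ ω ∈ compatible β ρ, p ω → f ω ∈ K)
    (hf : ∀ ω ∈ compatible β ρ, ∀ ω' ∈ compatible β ρ, p ω → p ω' → f ω = f ω' →
      ∀ c ∈ (ρ.cycleOf a).support, ω c = ω' c)
    (hK : ∀ ω ∈ compatible β ρ, p ω →
      #K * q ^ #(revealed ρ a ω) ≤ 1 / 3 * z ^ #(ρ.support ∩ revealed ρ a ω)) :
    (({ω ∈ agree ω₀ D ∩ compatible β ρ | p ω} : Finset _).dens : ℝ) ≤
      1 / 3 * explorationBound q z ρ D := by
  classical
  set X : Finset (PerfectMatching α) := {ω ∈ agree ω₀ D ∩ compatible β ρ | p ω} with hX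
  have mem_X {ω} (hω : ω ∈ X) : (ω ∈ agree ω₀ D ∧ ω ∈ compatible β ρ) ∧ p ω := by
    simpa only [hX, mem_filter, mem_inter] using hω
  have hfiber : ∀ ω₁ ∈ X, (({ω ∈ X | f ω = f ω₁} : Finset _).dens : ℝ) ≤
      explorationBound q z ρ (D ∪ revealed ρ a ω₁) := by
    intro ω₁ hω₁
    refine le_trans ?_ (h.dens_le ω₁ (mem_inter.2 (mem_X hω₁).1))
    refine mod_cast dens_le_dens fun ω hω => ?_
    obtain ⟨hωX, hfω⟩ := mem_filter.1 hω
    obtain ⟨⟨hagree, hcompat⟩, hp⟩ := mem_X hωX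
    obtain ⟨⟨hagree₁, hcompat₁⟩, hp₁⟩ := mem_X hω₁
    have hcycle := hf ω hcompat ω₁ hcompat₁ hp hp₁ hfω
    refine mem_inter.2 ⟨mem_agree.2 fun x hx => ?_, hcompat⟩
    simp only [revealed, mem_union, mem_image] at hx
    obtain hx | hx | ⟨c, hc, rfl⟩ := hx
    · rw [mem_agree.1 hagree x hx, mem_agree.1 hagree₁ x hx]
    · exact hcycle x hx
    · rw [apply_apply, ← hcycle c hc, apply_apply]
  have hbound : 0 ≤ explorationBound q z ρ D :=
    mul_nonneg (pow_nonneg h.q_nonneg _) (pow_nonneg h.z_nonneg _)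
  refine dens_le_of_card_mul_dens_fiber_le (f := f) (K := K)
    (fun ω hω => hfK ω (mem_X hω).1.2 (mem_X hω).2) (by positivity)
    fun ω hω => (mul_le_mul_of_nonneg_left (hfiber ω hω) (Nat.cast_nonneg _)).trans ?_
  obtain ⟨⟨hagree, hcompat⟩, hp⟩ := mem_X hω
  have hclosed : ∀ x ∈ D, ω x ∈ D := fun x hx => mem_agree.1 hagree x hx ▸ h.closed x hx
  exact mul_explorationBound_union_le h.q_nonneg h.z_nonneg
    (disjoint_revealed hclosed h.stable h.notMem) (hK ω hcompat hp)

theorem card_biUnion_piFinset_fiber_le [Fintype V] [DecidableEq V] {ι : Type*} [Fintype ι]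
    [DecidableEq ι] {d : ℕ} (hβ : ∀ v, #{a | β a = v} ≤ d) :
    #(univ.biUnion fun v => Fintype.piFinset fun _ : ι => ({a | β a = v} : Finset α)) ≤
      Fintype.card V * d ^ Fintype.card ι := by
  refine card_biUnion_le_card_mul _ _ _ fun v _ => ?_
  rw [Fintype.card_piFinset, prod_const, card_univ]
  gcongr
  exact hβ v

/-- The conditions on the exploration weights `q` and `z` at a cycle of length `L`: each of the
three possible fates of the cycle costs at most a third of the weight of the half-edges it uses up.
The cycle is matched to itself, to another of the `m` half-edges in the support, or to half-edges at
one of the `n` vertices, of degree at most `d`. -/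
structure CycleCondition (m n d : ℕ) (q z : ℝ) (L : ℕ) : Prop where
  inside : L * q ^ L ≤ 1 / 3 * z ^ L
  across : m * q ^ (2 * L) ≤ 1 / 3 * z ^ (2 * L)
  outside : n * d ^ L * q ^ (2 * L) ≤ 1 / 3 * z ^ L

theorem ExplorationStep.dens_inside_le {q z : ℝ} (h : ExplorationStep β ρ q z ω₀ D a)
    (hL : #(ρ.cycleOf a).support * q ^ #(ρ.cycleOf a).support ≤
      1 / 3 * z ^ #(ρ.cycleOf a).support) :
    (({ω ∈ agree ω₀ D ∩ compatible β ρ | ω a ∈ (ρ.cycleOf a).support} : Finset _).dens : ℝ) ≤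
      1 / 3 * explorationBound q z ρ D := by
  have hC := support_cycleOf_subset ρ a
  refine h.dens_le_of_key _ (fun ω => ω a) _ (fun ω _ hωa => hωa)
    (fun ω hω ω' hω' hωa _ => eqOn_support_cycleOf hω hω' h.mem_support (hC hωa))
    (fun ω hω hωa => ?_)
  rwa [support_inter_revealed_of_apply_mem_support hω h.mem_support (hC hωa),
    revealed_of_apply_mem_cycle hω h.mem_support hωa]

theorem ExplorationStep.dens_across_le {q z : ℝ} (h : ExplorationStep β ρ q z ω₀ D a)
    (hL : #ρ.support * q ^ (2 * #(ρ.cycleOf a).support) ≤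
      1 / 3 * z ^ (2 * #(ρ.cycleOf a).support)) :
    (({ω ∈ agree ω₀ D ∩ compatible β ρ | ω a ∈ ρ.support ∧ ω a ∉ (ρ.cycleOf a).support} :
      Finset _).dens : ℝ) ≤ 1 / 3 * explorationBound q z ρ D := by
  refine h.dens_le_of_key _ (fun ω => ω a) ρ.support (fun ω _ hωa => hωa.1)
    (fun ω hω ω' hω' hωa _ => eqOn_support_cycleOf hω hω' h.mem_support hωa.1)
    (fun ω hω hωa => ?_)
  rwa [support_inter_revealed_of_apply_mem_support hω h.mem_support hωa.1,
    card_revealed_of_apply_notMem_cycle hω h.mem_support hωa.2]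

theorem ExplorationStep.dens_outside_le [Fintype V] [DecidableEq V] {q z : ℝ}
    (h : ExplorationStep β ρ q z ω₀ D a) {d : ℕ} (hβ : ∀ v, #{a | β a = v} ≤ d)
    (hL : Fintype.card V * d ^ #(ρ.cycleOf a).support * q ^ (2 * #(ρ.cycleOf a).support) ≤
      1 / 3 * z ^ #(ρ.cycleOf a).support) :
    (({ω ∈ agree ω₀ D ∩ compatible β ρ | ω a ∉ ρ.support} : Finset _).dens : ℝ) ≤
      1 / 3 * explorationBound q z ρ D := by
  refine h.dens_le_of_key _ (fun ω (c : (ρ.cycleOf a).support) => ω c)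
    (univ.biUnion fun v => Fintype.piFinset fun _ => {a | β a = v}) (fun ω hω hωa => ?_)
    (fun ω _ ω' _ _ _ hωω' c hc => congrFun hωω' ⟨c, hc⟩) (fun ω hω hωa => ?_)
  · simp only [mem_biUnion, Fintype.mem_piFinset, mem_filter_univ]
    exact ⟨β (ω a), mem_univ _, fun c =>
      (apply_of_mem_support_cycleOf hω h.mem_support hωa c.2).2⟩
  · rw [support_inter_revealed_of_apply_notMem_support hω h.mem_support hωa,
      card_revealed_of_apply_notMem_cycle hω h.mem_support
        fun hc => hωa (support_cycleOf_subset ρ a hc)]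
    refine le_trans ?_ hL
    gcongr
    · exact pow_nonneg h.q_nonneg _
    · exact_mod_cast (card_biUnion_piFinset_fiber_le hβ).trans_eq (by rw [Fintype.card_coe])

theorem ExplorationStep.dens_agree_inter_compatible_le [Fintype V] [DecidableEq V] {q z : ℝ}
    (h : ExplorationStep β ρ q z ω₀ D a) {d : ℕ} (hβ : ∀ v, #{a | β a = v} ≤ d)
    (hL : CycleCondition #ρ.support (Fintype.card V) d q z #(ρ.cycleOf a).support) :
    ((agree ω₀ D ∩ compatible β ρ).dens : ℝ) ≤ explorationBound q z ρ D := by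
  set X := agree ω₀ D ∩ compatible β ρ
  set C := (ρ.cycleOf a).support
  have hcover : X ⊆ {ω ∈ X | ω a ∈ C} ∪ {ω ∈ X | ω a ∈ ρ.support ∧ ω a ∉ C} ∪
      {ω ∈ X | ω a ∉ ρ.support} := by
    intro ω hω
    simp only [mem_union, mem_filter, hω, true_and]
    tauto
  calc (X.dens : ℝ) ≤ ({ω ∈ X | ω a ∈ C} : Finset _).dens +
        ({ω ∈ X | ω a ∈ ρ.support ∧ ω a ∉ C} : Finset _).dens +
        ({ω ∈ X | ω a ∉ ρ.support} : Finset _).dens := by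
        exact_mod_cast (dens_le_dens hcover).trans <|
          (dens_union_le _ _).trans (add_le_add_left (dens_union_le _ _) _)
    _ ≤ 1 / 3 * explorationBound q z ρ D + 1 / 3 * explorationBound q z ρ D +
        1 / 3 * explorationBound q z ρ D :=
        add_le_add (add_le_add (h.dens_inside_le hL.inside) (h.dens_across_le hL.across))
          (h.dens_outside_le hβ hL.outside)
    _ = explorationBound q z ρ D := by ring

theorem dens_agree_inter_compatible_le [Fintype V] [DecidableEq V] {d : ℕ}
    (hβ : ∀ v, #{a | β a = v} ≤ d) {z : ℝ} (hz : 0 ≤ z)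
    (hρ : ∀ L ∈ ρ.cycleType,
      CycleCondition #ρ.support (Fintype.card V) d √(6 / Fintype.card α) z L)
    (ω₀ : PerfectMatching α) (D : Finset α) (hclosed : ∀ x ∈ D, ω₀ x ∈ D)
    (hstable : ∀ x, ρ x ∈ D ↔ x ∈ D) :
    ((agree ω₀ D ∩ compatible β ρ).dens : ℝ) ≤
      explorationBound √(6 / Fintype.card α) z ρ D := by
  induction hm : #(ρ.support \ D) using Nat.strong_induction_on generalizing ω₀ D with
  | _ m ih =>
  obtain hempty | ⟨a, ha⟩ := (ρ.support \ D).eq_empty_or_nonempty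
  · rw [explorationBound, hempty, card_empty, pow_zero, mul_one]
    refine le_trans ?_ (dens_agree_le ω₀ D hclosed)
    exact_mod_cast dens_le_dens inter_subset_left
  obtain ⟨hasupp, haD⟩ := Finset.mem_sdiff.1 ha
  have hstep : ExplorationStep β ρ √(6 / Fintype.card α) z ω₀ D a := by
    refine ⟨Real.sqrt_nonneg _, hz, hclosed, hstable, hasupp, haD, fun ω hω => ?_⟩
    obtain ⟨hagree, hcompat⟩ := mem_inter.1 hω
    refine ih _ ?_ ω _ (fun x hx => ?_) (fun x => ?_) rfl
    · rw [← hm]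
      refine card_lt_card (ssubset_of_subset_of_ne
        (Finset.sdiff_subset_sdiff Subset.rfl subset_union_left) fun heq => ?_)
      refine (Finset.mem_sdiff.1 (heq ▸ ha)).2 (mem_union_right _ (mem_union_left _ ?_))
      exact Perm.mem_support_cycleOf_iff.2 ⟨.refl _ _, hasupp⟩
    · obtain hx | hx := mem_union.1 hx
      · exact mem_union_left _ (mem_agree.1 hagree x hx ▸ hclosed x hx)
      · exact mem_union_right _ (revealed_closed x hx)
    · rw [mem_union, mem_union, hstable, revealed_stable hcompat hasupp]
  exact hstep.dens_agree_inter_compatible_le hβ (hρ _ (mem_cycleType_iff.2 ⟨a, hasupp, rfl⟩))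

theorem dens_compatible_le [Fintype V] [DecidableEq V] {d : ℕ} (hβ : ∀ v, #{a | β a = v} ≤ d)
    {z : ℝ} (hz : 0 ≤ z) (hρ : ∀ L ∈ ρ.cycleType,
      CycleCondition #ρ.support (Fintype.card V) d √(6 / Fintype.card α) z L) :
    ((compatible β ρ).dens : ℝ) ≤ z ^ #ρ.support := by
  obtain hempty | ⟨ω₀, -⟩ := (compatible β ρ).eq_empty_or_nonempty
  · simpa [hempty] using pow_nonneg hz _
  · simpa [explorationBound, agree] using
      dens_agree_inter_compatible_le hβ hz hρ ω₀ ∅ (by simp) (by simp)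

end Exploration

section Lifts

variable {α V : Type*} [Fintype α] [DecidableEq V] {β : α → V} {d : ℕ}

theorem card_filter_mem_eq_mul (hβ : ∀ v, #{a | β a = v} = d) (S : Finset V) :
    #{a | β a ∈ S} = d * #S := by
  classical
  have hunion : ({a | β a ∈ S} : Finset α) = S.biUnion fun v => {a | β a = v} := by
    ext a
    simp
  have hdisj : (S : Set V).PairwiseDisjoint fun v => ({a | β a = v} : Finset α) :=
    fun v _ w _ hvw => Finset.disjoint_left.2 fun a hv hw =>
      hvw ((mem_filter.1 hv).2.symm.trans (mem_filter.1 hw).2)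
  rw [hunion, card_biUnion hdisj, sum_congr rfl fun v _ => hβ v, sum_const, smul_eq_mul, mul_comm]

theorem card_eq_mul_card (hβ : ∀ v, #{a | β a = v} = d) [Fintype V] :
    Fintype.card α = d * Fintype.card V := by
  simpa using card_filter_mem_eq_mul hβ univ

variable [DecidableEq α]

/-- The permutations of the half-edges that induce `σ` on the vertices and fix all half-edges at the
fixed points of `σ`. -/
def lifts (β : α → V) (σ : Perm V) : Finset (Perm α) :=
  {ρ | ∀ a, β (ρ a) = σ (β a) ∧ (σ (β a) = β a → ρ a = a)}

variable {σ : Perm V} {ρ : Perm α}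

theorem mem_lifts : ρ ∈ lifts β σ ↔ ∀ a, β (ρ a) = σ (β a) ∧ (σ (β a) = β a → ρ a = a) := by
  simp [lifts]

theorem mem_support_of_mem_lifts (hρ : ρ ∈ lifts β σ) {a : α} :
    a ∈ ρ.support ↔ σ (β a) ≠ β a := by
  rw [Perm.mem_support]
  refine not_congr ⟨fun h => ?_, (mem_lifts.1 hρ a).2⟩
  rw [← (mem_lifts.1 hρ a).1, h]

theorem apply_pow_of_mem_lifts (hρ : ρ ∈ lifts β σ) (k : ℕ) (a : α) :
    β ((ρ ^ k) a) = (σ ^ k) (β a) := by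
  induction k with
  | zero => rfl
  | succ k ih => rw [pow_succ', pow_succ', Perm.mul_apply, Perm.mul_apply, (mem_lifts.1 hρ _).1, ih]

theorem IsAutomorphism.exists_mem_lifts {ω : PerfectMatching α} (h : IsAutomorphism β ω σ) :
    ∃ ρ ∈ lifts β σ, ω ∈ compatible β ρ := by
  obtain ⟨ρ₀, hβρ₀, hωρ₀⟩ := h.exists_lift
  have hmoved : ∀ a, σ (β (ρ₀ a)) ≠ β (ρ₀ a) ↔ σ (β a) ≠ β a := fun a => by
    rw [hβρ₀, ne_eq, σ.apply_eq_iff_eq]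
  let ρ : Perm α := Perm.ofSubtype (ρ₀.subtypePerm (p := fun a => σ (β a) ≠ β a) hmoved)
  have hin : ∀ a, σ (β a) ≠ β a → ρ a = ρ₀ a := fun a ha =>
    Perm.ofSubtype_apply_of_mem (p := fun a => σ (β a) ≠ β a) _ ha
  have hout : ∀ a, σ (β a) = β a → ρ a = a := fun a ha =>
    Perm.ofSubtype_apply_of_not_mem (p := fun a => σ (β a) ≠ β a) _ (not_not_intro ha)
  have hρ : ρ ∈ lifts β σ := mem_lifts.2 fun a => by
    refine ⟨?_, hout a⟩
    by_cases ha : σ (β a) = β a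
    · rw [hout a ha, ha]
    · rw [hin a ha, hβρ₀]
  refine ⟨ρ, hρ, mem_compatible.2 fun a => ?_⟩
  simp only [mem_support_of_mem_lifts hρ, ne_eq, not_not]
  refine fun ha => ⟨fun hωa => ?_, fun hωa => ?_⟩
  · rw [hin a ha, hin _ hωa, hωρ₀]
  · rw [hin a ha, hωρ₀, hβρ₀, hωa]
    exact ⟨hωa, rfl⟩

variable [Fintype V]

theorem card_support_of_mem_lifts (hβ : ∀ v, #{a | β a = v} = d) (hρ : ρ ∈ lifts β σ) :
    #ρ.support = d * #σ.support := by
  rw [← card_filter_mem_eq_mul hβ]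
  congr 1
  ext a
  simp [mem_support_of_mem_lifts hρ]

theorem card_lifts_le (hβ : ∀ v, #{a | β a = v} = d) (σ : Perm V) :
    #(lifts β σ) ≤ d ^ (d * #σ.support) := by
  let choices : α → Finset α := fun a =>
    if β a ∈ σ.support then univ.filter (β · = σ (β a)) else {a}
  calc #(lifts β σ) ≤ #(Fintype.piFinset choices) := by
        refine card_le_card_of_injOn (fun ρ => ρ) (fun ρ hρ => ?_) DFunLike.coe_injective.injOn
        refine Fintype.mem_piFinset.2 fun a => ?_
        by_cases ha : σ (β a) = β a
        · simpa [choices, ha] using (mem_lifts.1 hρ a).2 ha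
        · simpa [choices, ha] using (mem_lifts.1 hρ a).1
    _ = d ^ (d * #σ.support) := by
        simp only [choices, Fintype.card_piFinset, apply_ite card, hβ, card_singleton, prod_ite,
          prod_const, one_pow, mul_one, card_filter_mem_eq_mul hβ]

theorem exists_dvd_of_mem_cycleType_of_mem_lifts (hρ : ρ ∈ lifts β σ) {L : ℕ}
    (hL : L ∈ ρ.cycleType) : ∃ ℓ ∈ σ.cycleType, ℓ ∣ L := by
  obtain ⟨a, ha, rfl⟩ := mem_cycleType_iff.1 hL
  have hβa : β a ∈ σ.support := Perm.mem_support.2 ((mem_support_of_mem_lifts hρ).1 ha)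
  have hperiod : (ρ ^ #(ρ.cycleOf a).support) a = a :=
    ((Perm.isCycleOn_support_cycleOf ρ a).pow_apply_eq
      (Perm.mem_support_cycleOf_iff.2 ⟨.refl _ _, ha⟩)).2 dvd_rfl
  refine ⟨_, mem_cycleType_iff.2 ⟨β a, hβa, rfl⟩,
    ((Perm.isCycleOn_support_cycleOf σ (β a)).pow_apply_eq
      (Perm.mem_support_cycleOf_iff.2 ⟨.refl _ _, hβa⟩)).1 ?_⟩
  rw [← apply_pow_of_mem_lifts hρ, hperiod]

end Lifts

theorem dens_withAutomorphism_singleton_le {α V : Type*} [Fintype α] [Fintype V] [DecidableEq V]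
    {β : α → V} {d : ℕ} (hβ : ∀ v, #{a | β a = v} = d) {σ : Perm V} {z : ℝ} (hz : 0 ≤ z)
    (hσ : ∀ ℓ ∈ σ.cycleType, ∀ L ≥ ℓ, CycleCondition (d * #σ.support) (Fintype.card V) d
      √(6 / (d * Fintype.card V : ℕ)) z L) :
    ((withAutomorphism β {σ}).dens : ℝ) ≤ (d * z) ^ (d * #σ.support) := by
  classical
  have hcover : withAutomorphism β {σ} ⊆ (lifts β σ).biUnion (compatible β) := by
    intro ω hω
    obtain ⟨_, rfl, haut⟩ := mem_withAutomorphism.1 hω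
    exact mem_biUnion.2 haut.exists_mem_lifts
  have hlift : ∀ ρ ∈ lifts β σ, ((compatible β ρ).dens : ℝ) ≤ z ^ (d * #σ.support) := by
    intro ρ hρ
    rw [← card_support_of_mem_lifts hβ hρ]
    refine dens_compatible_le (fun v => (hβ v).le) hz fun L hL => ?_
    obtain ⟨ℓ, hℓ, hdvd⟩ := exists_dvd_of_mem_cycleType_of_mem_lifts hρ hL
    rw [card_support_of_mem_lifts hβ hρ, card_eq_mul_card hβ]
    exact hσ ℓ hℓ L (Nat.le_of_dvd (Perm.one_lt_of_mem_cycleType hL).pos hdvd)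
  calc ((withAutomorphism β {σ}).dens : ℝ) ≤ ∑ ρ ∈ lifts β σ, ((compatible β ρ).dens : ℝ) := by
        exact_mod_cast (dens_le_dens hcover).trans dens_biUnion_le
    _ ≤ #(lifts β σ) * z ^ (d * #σ.support) := by simpa using sum_le_card_nsmul _ _ _ hlift
    _ ≤ (d ^ (d * #σ.support) : ℕ) * z ^ (d * #σ.support) := by
        gcongr
        exact card_lifts_le hβ σ
    _ = (d * z) ^ (d * #σ.support) := by rw [mul_pow, Nat.cast_pow]

theorem card_cycleType_eq_replicate_mul_pow_le {V : Type*} [Fintype V] [DecidableEq V] {p : ℕ}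
    (hp : 2 ≤ p) (c : ℕ) :
    (#{σ : Perm V | σ.cycleType = .replicate c p} : ℝ) * ((p * c : ℕ) : ℝ) ^ c ≤
      3 ^ c * Fintype.card V ^ (p * c) := by
  set C := #{σ : Perm V | σ.cycleType = .replicate c p}
  set n := Fintype.card V
  have hcount : C * (p ^ c * c.factorial) ≤ n ^ (p * c) := by
    have hprod : ∏ l ∈ (Multiset.replicate c p).toFinset,
        ((Multiset.replicate c p).count l).factorial = c.factorial := by
      obtain rfl | hc := eq_or_ne c 0
      · simp
      · simp [Multiset.toFinset_replicate, hc]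
    have h := Perm.card_of_cycleType_mul_eq V (.replicate c p)
    rw [hprod, Multiset.sum_replicate, Multiset.prod_replicate, smul_eq_mul, mul_comm c p] at h
    split_ifs at h with hle
    · refine le_trans (Nat.le_of_mul_le_mul_left ?_ (n - p * c).factorial_pos)
        (Nat.descFactorial_le_pow n (p * c))
      rw [Nat.factorial_mul_descFactorial hle.1, ← h]
      exact le_of_eq (by ring)
    · have hC : C = 0 := by
        by_contra hC
        have : 0 < C * ((n - p * c).factorial * p ^ c * c.factorial) := by positivity
        exact this.ne' h
      simp [hC]
  calc (C : ℝ) * ((p * c : ℕ) : ℝ) ^ c = C * p ^ c * (c : ℝ) ^ c := by push_cast; ring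
    _ ≤ C * p ^ c * (3 ^ c * c.factorial) := by gcongr; exact pow_self_le_three_pow_mul_factorial c
    _ = 3 ^ c * (C * (p ^ c * c.factorial) : ℕ) := by push_cast; ring
    _ ≤ 3 ^ c * (n : ℝ) ^ (p * c) := by gcongr; exact_mod_cast hcount

section Weights

theorem cycleCondition_of_le_pow {d n s L : ℕ} {q r : ℝ} (hd : 1 ≤ d) (hq : 0 ≤ q) (hq2 : q ≤ 2)
    (hnq : n * q ^ 2 ≤ 2) (hr : 1 ≤ r) (hL : 2 ≤ L) (hs : s ≤ (r ^ L) ^ 2) :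
    CycleCondition (d * s) n d q (4 * d * q * r) L where
  inside := by
    have hL4 : (3 * L : ℝ) ≤ 4 ^ L := by
      calc (3 * L : ℝ) ≤ 1 + L * 3 := by linarith
        _ ≤ (1 + 3) ^ L := one_add_mul_le_pow (by norm_num) L
        _ = 4 ^ L := by norm_num
    have hd' : (1 : ℝ) ≤ d := by exact_mod_cast hd
    calc L * q ^ L = 1 / 3 * (3 * L * 1 * q ^ L * 1) := by ring
      _ ≤ 1 / 3 * (4 ^ L * d ^ L * q ^ L * r ^ L) := by
        gcongr <;> apply one_le_pow₀ <;> assumption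
      _ = 1 / 3 * (4 * d * q * r) ^ L := by simp only [mul_pow]
  across := by
    have hd4 : (3 * d : ℝ) ≤ (4 * d) ^ (2 * L) := by
      have : 3 * d ≤ (4 * d) ^ (2 * L) :=
        (Nat.mul_le_mul_right d (by norm_num)).trans (Nat.le_self_pow (by omega) (4 * d))
      exact_mod_cast this
    calc ((d * s : ℕ) : ℝ) * q ^ (2 * L) = 1 / 3 * (3 * d * q ^ (2 * L) * s) := by push_cast; ring
      _ ≤ 1 / 3 * ((4 * d) ^ (2 * L) * q ^ (2 * L) * (r ^ L) ^ 2) := by gcongr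
      _ = 1 / 3 * (4 * d * q * r) ^ (2 * L) := by ring
  outside := by
    obtain ⟨l, rfl⟩ := Nat.exists_eq_add_of_le' hL
    have hnL : n * q ^ (l + 2) ≤ 1 / 3 * 4 ^ (l + 2) := by
      calc n * q ^ (l + 2) = n * q ^ 2 * q ^ l := by ring
        _ ≤ 2 * 2 ^ l := by gcongr
        _ ≤ 1 / 3 * 2 ^ (l + 4) := by rw [pow_add]; linarith [pow_pos (two_pos (α := ℝ)) l]
        _ ≤ 1 / 3 * 2 ^ (2 * (l + 2)) := by gcongr <;> norm_num; omega
        _ = 1 / 3 * 4 ^ (l + 2) := by rw [pow_mul]; norm_num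
    calc n * d ^ (l + 2) * q ^ (2 * (l + 2)) = n * q ^ (l + 2) * d ^ (l + 2) * q ^ (l + 2) * 1 := by
          ring
      _ ≤ 1 / 3 * 4 ^ (l + 2) * d ^ (l + 2) * q ^ (l + 2) * r ^ (l + 2) := by
        gcongr
        exact one_le_pow₀ hr
      _ = 1 / 3 * (4 * d * q * r) ^ (l + 2) := by simp only [mul_pow]; ring

end Weights

section Regular

variable {α V : Type*} [Fintype α] [Fintype V] [DecidableEq V] {β : α → V}
  {d p c : ℕ}

theorem card_support_of_cycleType_eq_replicate {σ : Perm V}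
    (hσ : σ.cycleType = .replicate c p) : #σ.support = p * c := by
  rw [← Perm.sum_cycleType, hσ, Multiset.sum_replicate, smul_eq_mul, mul_comm]

theorem IsAutomorphism.exists_cycleType_eq_replicate {ω : PerfectMatching α} {σ : Perm V}
    (hσ : σ ≠ 1) (h : IsAutomorphism β ω σ) :
    ∃ i ∈ Ico 1 (Fintype.card V + 1), ∃ c ∈ Ico 1 (Fintype.card V + 1), ∃ τ : Perm V,
      τ.cycleType = .replicate c (i + 1) ∧ IsAutomorphism β ω τ := by
  obtain ⟨p, hp, hdvd⟩ := Nat.exists_prime_and_dvd (mt orderOf_eq_one_iff.1 hσ)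
  let τ := σ ^ (orderOf σ / p)
  have hτ : orderOf τ = p := orderOf_pow_orderOf_div (orderOf_pos σ).ne' hdvd
  obtain ⟨k, hk⟩ := Perm.cycleType_prime_order (σ := τ) (hτ ▸ hp)
  rw [hτ] at hk
  have hle : p * (k + 1) ≤ Fintype.card V :=
    card_support_of_cycleType_eq_replicate hk ▸ card_le_univ τ.support
  obtain ⟨i, rfl⟩ := Nat.exists_eq_add_of_le' hp.one_le
  have hi : 1 ≤ i := Nat.le_of_lt_succ hp.one_lt
  refine ⟨i, mem_Ico.2 ⟨hi, ?_⟩, k + 1, mem_Ico.2 ⟨by omega, ?_⟩, τ, hk, h.pow _⟩ <;> nlinarith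

theorem natCast_mul_sqrt_six_div_sq_le_two (hd : 3 ≤ d) {n : ℕ} (hn : 0 < n) :
    n * √(6 / (d * n : ℕ)) ^ 2 ≤ 2 := by
  have hd' : (3 : ℝ) ≤ d := by exact_mod_cast hd
  rw [Real.sq_sqrt (by positivity), Nat.cast_mul, mul_div_assoc', mul_comm (d : ℝ),
    mul_div_mul_left _ _ (by positivity), div_le_iff₀ (by positivity)]
  linarith

theorem dens_withAutomorphism_singleton_le_of_cycleType_eq_replicate (hd : 3 ≤ d)
    (hβ : ∀ v, #{a | β a = v} = d) (hp : 2 ≤ p) (hc : c ≠ 0) {σ : Perm V}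
    (hσ : σ.cycleType = .replicate c p) :
    ((withAutomorphism β {σ}).dens : ℝ) ≤
      (8 * d ^ 2) ^ (d * (p * c)) * (√(p * c : ℕ) / √(Fintype.card V) ^ p) ^ (d * c) := by
  set n := Fintype.card V
  have hsupp := card_support_of_cycleType_eq_replicate hσ
  have hs : 1 ≤ p * c := Nat.mul_pos (by omega) (by omega)
  have hn : 0 < n := by have := card_le_univ σ.support; omega
  have hn1 : (1 : ℝ) ≤ n := by exact_mod_cast hn
  set q := √(6 / (d * n : ℕ))
  have hnq : n * q ^ 2 ≤ 2 := natCast_mul_sqrt_six_div_sq_le_two hd hn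
  have hq : q ≤ 2 / √n := by
    refine abs_le_of_sq_le_sq' ?_ (by positivity) |>.2
    rw [div_pow, Real.sq_sqrt n.cast_nonneg, le_div_iff₀ (by positivity)]
    linarith
  have hq2 : q ≤ 2 := hq.trans (div_le_self two_pos.le (Real.one_le_sqrt.2 hn1))
  set r := √(p * c : ℕ) ^ ((p : ℝ)⁻¹)
  have hrp : r ^ p = √(p * c : ℕ) := Real.rpow_inv_natCast_pow (by positivity) (by omega)
  have hr : 1 ≤ r :=
    Real.one_le_rpow (Real.one_le_sqrt.2 (by exact_mod_cast hs)) (by positivity)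
  have hcycle : ∀ ℓ ∈ σ.cycleType, ∀ L ≥ ℓ,
      CycleCondition (d * #σ.support) n d q (4 * d * q * r) L := by
    intro ℓ hℓ L hL
    rw [hσ] at hℓ
    obtain rfl := Multiset.eq_of_mem_replicate hℓ
    refine cycleCondition_of_le_pow (by omega) (by positivity) hq2 hnq hr (hp.trans hL) ?_
    calc (#σ.support : ℝ) = (r ^ ℓ) ^ 2 := by rw [hrp, Real.sq_sqrt (by positivity), hsupp]
      _ ≤ (r ^ L) ^ 2 := by gcongr
  calc ((withAutomorphism β {σ}).dens : ℝ) ≤ (d * (4 * d * q * r)) ^ (d * #σ.support) :=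
        dens_withAutomorphism_singleton_le hβ (by positivity) hcycle
    _ ≤ (d * (4 * d * (2 / √n) * r)) ^ (d * (p * c)) := by rw [hsupp]; gcongr
    _ = (8 * d ^ 2 * (r / √n)) ^ (d * (p * c)) := by ring
    _ = (8 * d ^ 2) ^ (d * (p * c)) * (r ^ p / √n ^ p) ^ (d * c) := by
        rw [mul_pow, ← div_pow, ← pow_mul, mul_left_comm d p c]
    _ = _ := by rw [hrp]

/-- The ratio of the geometric series bounding the probability that a random `d`-regular multigraph
on `n` vertices has an automorphism of prime order. -/
noncomputable def automorphismRatio (d n : ℕ) : ℝ := 3 * (8 * d ^ 2) ^ d / √√n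

theorem automorphismRatio_nonneg (d n : ℕ) : 0 ≤ automorphismRatio d n := by
  unfold automorphismRatio
  positivity

theorem tendsto_automorphismRatio (d : ℕ) :
    Tendsto (automorphismRatio d) atTop (𝓝 0) :=
  tendsto_const_nhds.div_atTop
    (Real.tendsto_sqrt_atTop.comp (Real.tendsto_sqrt_atTop.comp tendsto_natCast_atTop_atTop))

theorem sqrt_div_sqrt_pow_le {s n : ℕ} (hn : 0 < n) (hs : s ≤ n) (hp : 2 ≤ p) :
    √s / √n ^ p ≤ 1 / √√n ^ p := by
  have ht : 1 ≤ √√n := Real.one_le_sqrt.2 (Real.one_le_sqrt.2 (by exact_mod_cast hn))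
  rw [div_le_div_iff₀ (by positivity) (by positivity), one_mul]
  calc √s * √√n ^ p ≤ √n * √√n ^ p := by gcongr
    _ = √√n ^ (2 + p) := by rw [pow_add, Real.sq_sqrt (by positivity)]
    _ ≤ √√n ^ (2 * p) := pow_le_pow_right₀ ht (by omega)
    _ = √n ^ p := by rw [pow_mul, Real.sq_sqrt (by positivity)]

theorem mul_sqrt_div_sqrt_pow_le_automorphismRatio_pow {n : ℕ} {C : ℝ} (hd : 3 ≤ d) (hp : 2 ≤ p)
    (hn : 0 < n) (hs : p * c ≤ n) (hC₀ : 0 ≤ C)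
    (hC : C * ((p * c : ℕ) : ℝ) ^ c ≤ 3 ^ c * n ^ (p * c)) :
    C * ((8 * d ^ 2) ^ (d * (p * c)) * (√(p * c : ℕ) / √n ^ p) ^ (d * c)) ≤
      automorphismRatio d n ^ (p * c) := by
  set s := p * c with hs_def
  set x := √s / √n ^ p
  have hx : x ≤ 1 / √√n ^ p := sqrt_div_sqrt_pow_le hn hs hp
  have hx1 : x ≤ 1 := hx.trans <| div_le_one_of_le₀
    (one_le_pow₀ (Real.one_le_sqrt.2 (Real.one_le_sqrt.2 (by exact_mod_cast hn)))) (by positivity)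
  have hCx : C * (x ^ 2) ^ c ≤ 3 ^ c := by
    have hx2 : x ^ 2 = s / n ^ p := by
      rw [div_pow, ← pow_mul, mul_comm p, pow_mul, Real.sq_sqrt (by positivity),
        Real.sq_sqrt (by positivity)]
    rw [hx2, div_pow, ← pow_mul, mul_div_assoc', div_le_iff₀ (by positivity)]
    exact hC
  calc C * ((8 * d ^ 2) ^ (d * s) * x ^ (d * c))
      ≤ C * ((8 * d ^ 2) ^ (d * s) * x ^ (3 * c)) := by
        gcongr ?_ * (?_ * ?_)
        exact pow_le_pow_of_le_one (by positivity) hx1 (by gcongr)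
    _ = (8 * d ^ 2) ^ (d * s) * (C * (x ^ 2) ^ c) * x ^ c := by ring
    _ ≤ (8 * d ^ 2) ^ (d * s) * 3 ^ s * (1 / √√n ^ p) ^ c := by
        gcongr
        refine hCx.trans (pow_le_pow_right₀ (by norm_num) ?_)
        exact Nat.le_mul_of_pos_left c (by omega)
    _ = automorphismRatio d n ^ s := by
        rw [automorphismRatio, div_pow, div_pow, ← pow_mul, ← hs_def, mul_pow, ← pow_mul]
        ring

theorem dens_withAutomorphism_cycleType_eq_replicate_le (hd : 3 ≤ d)
    (hβ : ∀ v, #{a | β a = v} = d) (hp : 2 ≤ p) (hc : c ≠ 0) :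
    ((withAutomorphism β {σ | σ.cycleType = .replicate c p}).dens : ℝ) ≤
      automorphismRatio d (Fintype.card V) ^ (p * c) := by
  have hS : ({σ : Perm V | σ.cycleType = .replicate c p} : Set (Perm V)) =
      (({σ | σ.cycleType = .replicate c p} : Finset (Perm V)) : Set (Perm V)) := by
    simp
  rw [hS]
  refine (dens_withAutomorphism_le_card_mul fun σ hσ =>
    dens_withAutomorphism_singleton_le_of_cycleType_eq_replicate hd hβ hp hc
      (mem_filter.1 hσ).2).trans ?_
  obtain hempty | ⟨σ, hσ⟩ :=
    ({σ | σ.cycleType = .replicate c p} : Finset (Perm V)).eq_empty_or_nonempty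
  · simpa [hempty] using pow_nonneg (automorphismRatio_nonneg d _) _
  · have hle : p * c ≤ Fintype.card V :=
      card_support_of_cycleType_eq_replicate (mem_filter.1 hσ).2 ▸ card_le_univ σ.support
    exact mul_sqrt_div_sqrt_pow_le_automorphismRatio_pow hd hp
      ((Nat.mul_pos (by omega) (by omega)).trans_le hle) hle (by positivity)
      (card_cycleType_eq_replicate_mul_pow_le hp c)

theorem dens_withAutomorphism_compl_one_le (hd : 3 ≤ d) (hβ : ∀ v, #{a | β a = v} = d)
    (hθ : automorphismRatio d (Fintype.card V) ≤ 1 / 2) :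
    ((withAutomorphism β {1}ᶜ).dens : ℝ) ≤ (2 * automorphismRatio d (Fintype.card V)) ^ 2 := by
  set θ := automorphismRatio d (Fintype.card V)
  set I := Ico 1 (Fintype.card V + 1)
  have hθ₀ : 0 ≤ θ := automorphismRatio_nonneg d _
  have hcover : withAutomorphism β {1}ᶜ ⊆ I.biUnion fun i => I.biUnion fun c =>
      withAutomorphism β {τ | τ.cycleType = .replicate c (i + 1)} := by
    intro ω hω
    obtain ⟨σ, hσ, haut⟩ := mem_withAutomorphism.1 hω
    obtain ⟨i, hi, c, hc, τ, hτ⟩ := haut.exists_cycleType_eq_replicate hσ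
    exact mem_biUnion.2 ⟨i, hi, mem_biUnion.2 ⟨c, hc, mem_withAutomorphism.2 ⟨τ, hτ⟩⟩⟩
  have hpair : ∀ i ∈ I, ∀ c ∈ I,
      ((withAutomorphism β {τ | τ.cycleType = .replicate c (i + 1)}).dens : ℝ) ≤ θ ^ i * θ ^ c := by
    intro i hi c hc
    obtain ⟨hi, -⟩ := mem_Ico.1 hi
    obtain ⟨hc, -⟩ := mem_Ico.1 hc
    rw [← pow_add]
    exact (dens_withAutomorphism_cycleType_eq_replicate_le hd hβ (by omega) (by omega)).trans
      (pow_le_pow_of_le_one hθ₀ (by linarith) (by nlinarith))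
  have hgeom : ∑ i ∈ I, θ ^ i ≤ 2 * θ := by
    refine (geom_sum_Ico_le_of_lt_one hθ₀ (by linarith)).trans ?_
    rw [pow_one, div_le_iff₀ (by linarith)]
    nlinarith
  calc ((withAutomorphism β {1}ᶜ).dens : ℝ) ≤ ∑ i ∈ I, ∑ c ∈ I,
        ((withAutomorphism β {τ | τ.cycleType = .replicate c (i + 1)}).dens : ℝ) := by
        exact_mod_cast (dens_le_dens hcover).trans <|
          dens_biUnion_le.trans <| sum_le_sum fun i _ => dens_biUnion_le
    _ ≤ ∑ i ∈ I, ∑ c ∈ I, θ ^ i * θ ^ c :=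
        sum_le_sum fun i hi => sum_le_sum fun c hc => hpair i hi c hc
    _ = (∑ i ∈ I, θ ^ i) ^ 2 := by rw [sq, sum_mul_sum]
    _ ≤ (2 * θ) ^ 2 := by gcongr

end Regular

end PerfectMatching

namespace Omega

open PerfectMatching

variable {N : ℕ}

/-- `Omega N` as the instance of `PerfectMatching` it unfolds to. -/
def equivPerfectMatching (N : ℕ) : Omega N ≃ PerfectMatching (Fin (3 * N)) := .refl _

theorem card_filter_blk_eq (v : Fin N) : #{a : Fin (3 * N) | blk a = v} = 3 := by
  symm
  refine (card_fin 3).symm.trans <| card_nbij (fun i => ⟨3 * v + i, by omega⟩)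
    (fun i _ => ?_) (fun i _ j _ hij => ?_)
    fun a ha => ⟨⟨a % 3, Nat.mod_lt _ three_pos⟩, mem_univ _, ?_⟩
  · refine mem_filter.2 ⟨mem_univ _, ?_⟩
    simp only [blk, Fin.ext_iff]
    omega
  · simpa [Fin.ext_iff] using hij
  · have hblk := (mem_filter.1 ha).2
    simp only [blk, Fin.ext_iff] at hblk ⊢
    omega

theorem card_darts_equivPerfectMatching (ω : Omega N) (u v : Fin N) :
    #(darts blk (equivPerfectMatching N ω) u v) =
      if u = v then 2 * mult ω u v else mult ω u v := by
  have hcard : Nat.card {a : Fin (3 * N) // blk a = u ∧ blk (ω.val a) = v} =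
      #(darts blk (equivPerfectMatching N ω) u v) := by
    rw [Nat.card_eq_fintype_card, Fintype.card_subtype]
    rfl
  unfold mult
  split_ifs with huv
  · subst huv
    rw [hcard, Nat.mul_div_cancel']
    refine (even_card_of_closed (equivPerfectMatching N ω) _ fun x hx => ?_).two_dvd
    simpa [and_comm] using hx
  · exact hcard.symm

theorem isAutomorphism_of_mult_eq {ω : Omega N} {σ : Perm (Fin N)}
    (h : ∀ u v, mult ω (σ u) (σ v) = mult ω u v) :
    IsAutomorphism blk (equivPerfectMatching N ω) σ := fun u v => by
  simp only [card_darts_equivPerfectMatching, h, σ.apply_eq_iff_eq]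

theorem card_automorphic_div_card_le (N : ℕ) :
    (Nat.card {ω : Omega N // ∃ σ : Perm (Fin N), σ ≠ 1 ∧
        ∀ u v, mult ω (σ u) (σ v) = mult ω u v} : ℝ) / (Nat.card (Omega N) : ℝ) ≤
      (withAutomorphism (α := Fin (3 * N)) blk ({1}ᶜ : Set (Perm (Fin N)))).dens := by
  have hmem (ω : {ω : Omega N // ∃ σ : Perm (Fin N), σ ≠ 1 ∧
      ∀ u v, mult ω (σ u) (σ v) = mult ω u v}) :
      equivPerfectMatching N ω ∈ withAutomorphism blk ({1}ᶜ : Set (Perm (Fin N))) :=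
    mem_withAutomorphism.2 (ω.2.imp fun _ hσ => ⟨hσ.1, isAutomorphism_of_mult_eq hσ.2⟩)
  have hcard := Nat.card_le_card_of_injective (fun ω => (⟨_, hmem ω⟩ : withAutomorphism blk _))
    fun ω ω' h => Subtype.ext ((equivPerfectMatching N).injective (Subtype.mk.inj h))
  rw [Nat.card_eq_fintype_card (α := withAutomorphism _ _), Fintype.card_coe] at hcard
  rw [nnratCast_dens, Nat.card_congr (equivPerfectMatching N), Nat.card_eq_fintype_card
    (α := PerfectMatching _)]
  gcongr

end Omega

theorem probability_nontrivial_automorphism_tendsto_zero_general {d : ℕ} (hd : 3 ≤ d)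
    {α : ℕ → Type*} [∀ n, Fintype (α n)] (β : ∀ n, α n → Fin n)
    (hβ : ∀ n v, #{a | β n a = v} = d) :
    Tendsto (fun n => ((PerfectMatching.withAutomorphism (β n) {1}ᶜ).dens : ℝ))
      (atTop ⊓ 𝓟 {n : ℕ | Even (d * n)}) (𝓝 0) := by
  refine .mono_left ?_ inf_le_left
  have hratio := PerfectMatching.tendsto_automorphismRatio d
  have hbound : Tendsto (fun n => (2 * PerfectMatching.automorphismRatio d n) ^ 2) atTop (𝓝 0) := by
    simpa using (hratio.const_mul 2).pow 2
  refine squeeze_zero' (.of_forall fun n => by positivity) ?_ hbound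
  filter_upwards [hratio.eventually_le_const one_half_pos] with n hn
  simpa using PerfectMatching.dens_withAutomorphism_compl_one_le hd (hβ n) (by simpa using hn)

/-- Theorem (Bollobás, McKay–Wormald): the probability that the configuration-model
random cubic multigraph has a nontrivial automorphism tends to `0` as `N → ∞`
through even values of `N`. -/
theorem probability_nontrivial_automorphism_tendsto_zero :
    Tendsto
      (fun N : ℕ =>
        (Nat.card {ω : Omega N // ∃ σ : Equiv.Perm (Fin N), σ ≠ 1 ∧
            ∀ u v, mult ω (σ u) (σ v) = mult ω u v} : ℝ) / (Nat.card (Omega N) : ℝ))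
      (atTop ⊓ 𝓟 {N : ℕ | Even N}) (𝓝 0) :=  by
  refine squeeze_zero (fun N => by positivity) Omega.card_automorphic_div_card_le ?_
  simpa [Nat.even_mul, show ¬ Even 3 by decide] using
    probability_nontrivial_automorphism_tendsto_zero_general le_rfl (fun _ => blk)
      fun _ => Omega.card_filter_blk_eq
end
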